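/- Fix β ∈ (1+α, 2), and if α ≥ 1/2 assume additionally that W(x,y) ≥ c_*((x/y)^α + (y/x)^α) for some c_* > 0 and all x,y > 0. For each μ > 0 there exist constants C_μ > 0 and ε_* > 0 such that for every ε ∈ (0, ε_*) and every pair of normalised self-similar profiles φ¹_ε, φ²_ε for K_ε one has ‖e^{−x}(φ¹_ε − φ²_ε)‖_{X_{−α,β}} ≤ μ ‖φ¹_ε − φ²_ε‖_{X_{−α,β}} + C_μ ‖(1 − e^{−x})(φ¹_ε − φ²_ε)‖_{X_{−α,β}}. -/

import Mathlib

open MeasureTheory Real Set Filter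

noncomputable def weight (a b x : ℝ) : ℝ := if x ≤ 1 then x ^ a else x ^ b

noncomputable def Xnorm (a b : ℝ) (g : ℝ → ℝ) : ℝ :=
  ∫ x in Ioi (0:ℝ), |g x| * weight a b x

def MemX (a b : ℝ) (g : ℝ → ℝ) : Prop :=
  IntegrableOn (fun x => g x * weight a b x) (Ioi 0)

noncomputable def Kern (ε : ℝ) (W : ℝ → ℝ → ℝ) (x y : ℝ) : ℝ := 2 + ε * W x y

def GoodW (α : ℝ) (W : ℝ → ℝ → ℝ) : Prop :=
  ContinuousOn (fun p : ℝ × ℝ => W p.1 p.2) (Ioi 0 ×ˢ Ioi 0) ∧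
  (∀ x y : ℝ, 0 < x → 0 < y → W x y = W y x) ∧
  (∀ l x y : ℝ, 0 < l → 0 < x → 0 < y → W (l * x) (l * y) = W x y) ∧
  (∀ x y : ℝ, 0 < x → 0 < y → 0 ≤ W x y ∧ W x y ≤ (x / y) ^ α + (y / x) ^ α)

def IsProfile (K : ℝ → ℝ → ℝ) (φ : ℝ → ℝ) : Prop :=
  LocallyIntegrableOn φ (Ioi 0) ∧
  (∀ᵐ x ∂(volume.restrict (Ioi (0:ℝ))), 0 ≤ φ x) ∧
  IntegrableOn (fun x => x * φ x) (Ioi 0) ∧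
  (∀ᵐ x ∂(volume.restrict (Ioi (0:ℝ))),
    x ^ 2 * φ x = ∫ y in Ioo 0 x, ∫ z in Ioi (x - y), y * K y z * φ y * φ z)

def IsNormalised (φ : ℝ → ℝ) : Prop := ∫ x in Ioi (0:ℝ), x * φ x = 1

/-!
Subtracting the equations of two profiles, the difference `ψ = φ₁ - φ₂` satisfies
`x² ψ(x) = ∫_{y < x} y A(y) ψ(y) dy + R(x)`, where `A(y) = ∫ K(y, z) φ₁(z) dz` is at least twice the
number `∫ φ₁` of particles. If `|R(x)| ≤ C ‖ψ‖ x ^ p` near `0` for some `p > 1 + α`, and if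
`A ≥ a > p`, then a Gronwall argument, run from a point near `δ` down to `0`, gives
`x² |ψ(x)| ≤ C' x ^ p (‖ψ‖ + B_δ)` for `x < δ`, with `B_δ` controlled by `‖(1 - e^{-x}) ψ‖`. Since
`p > 1 + α`, the weight `x ^ (-α)` is integrable against `x ^ (p - 2)`, so the part of the norm
below `δ` is at most a small multiple `δ ^ (p - 1 - α)` of `‖ψ‖` plus a multiple of `B_δ`.

What remains are bounds near `0` for a single profile, uniform in small `ε`. For `ε = 0` the profile
is `e^{-x}`, whose Laplace exponent `q / (1 + q)` tends to `1`; comparing exponents for small `ε`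
shows that a profile has at least `θ` particles above a fixed size, for any `θ < 1`. Each small
particle meets these at a rate at least `2 θ`, which bounds the moments of order above `1 - 2 θ` and
with them the mass below `x` by a multiple of `x ^ p`. The singular part of the kernel enters `R`
through `ε ∫_{y < x} y ^ (1 - α) φ(y) dy`. For `α < 1 / 2` the moment bounds suffice; for
`α ≥ 1 / 2` the lower bound on `W` makes small particles coagulate faster and controls exactly this
quantity.
-/

open scoped ENNReal Topology

section Kernels

/-- Symmetric kernels exceeding the constant kernel `2` by at most `ε ((x / y) ^ α + (y / x) ^ α)`,
the size allowed for a perturbation of `2`. -/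
structure IsNearConstant (α ε : ℝ) (K : ℝ → ℝ → ℝ) : Prop where
  measurable : Measurable fun p : ℝ × ℝ => K p.1 p.2
  symm : ∀ x y, K x y = K y x
  two_le : ∀ x y, 2 ≤ K x y
  le : ∀ x y, 0 < x → 0 < y → K x y ≤ 2 + ε * ((x / y) ^ α + (y / x) ^ α)

variable {α ε : ℝ} {K : ℝ → ℝ → ℝ}

lemma IsNearConstant.nonneg (hK : IsNearConstant α ε K) : 0 ≤ ε := by
  have h := (hK.two_le 1 1).trans (hK.le 1 1 one_pos one_pos)
  norm_num at h
  linarith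

lemma IsNearConstant.measurable_fst_mul (hK : IsNearConstant α ε K) :
    Measurable fun p : ℝ × ℝ => ENNReal.ofReal (p.1 * K p.1 p.2) :=
  (measurable_fst.mul hK.measurable).ennreal_ofReal

lemma rpow_le_one_add {t r : ℝ} (ht : 0 ≤ t) (hr : r ∈ Icc (0 : ℝ) 1) : t ^ r ≤ 1 + t := by
  rcases le_total t 1 with h | h
  · linarith [rpow_le_one ht h hr.1]
  · linarith [rpow_le_self_of_one_le h hr.2]

lemma IsNearConstant.exists_le_mul (hK : IsNearConstant α ε K) (hα : α ∈ Icc (0 : ℝ) 1)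
    {a' a b : ℝ} (ha' : 0 < a') (hb : 0 < b) :
    ∃ C, ∀ y ∈ Icc a' a, ∀ z, b ≤ z → K y z ≤ C * z := by
  refine ⟨(2 + ε * (2 + a / b)) / b + ε / a', fun y hy z hz => ?_⟩
  have hy0 : 0 < y := ha'.trans_le hy.1
  have hz0 : 0 < z := hb.trans_le hz
  have hε := hK.nonneg
  have ha : 0 < a := hy0.trans_le hy.2
  calc K y z ≤ 2 + ε * ((y / z) ^ α + (z / y) ^ α) := hK.le y z hy0 hz0
    _ ≤ 2 + ε * ((1 + y / z) + (1 + z / y)) := by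
        gcongr <;> exact rpow_le_one_add (by positivity) hα
    _ ≤ 2 + ε * ((1 + a / b) + (1 + z / a')) := by
        gcongr
        exacts [hy.2, hy.1]
    _ = (2 + ε * (2 + a / b)) * 1 + ε / a' * z := by ring
    _ ≤ (2 + ε * (2 + a / b)) * (z / b) + ε / a' * z := by
        gcongr
        exact (one_le_div hb).2 hz
    _ = ((2 + ε * (2 + a / b)) / b + ε / a') * z := by ring

end Kernels

section Flux

/-- Lebesgue measure on the sizes `x > 0`. -/
noncomputable abbrev posVolume : Measure ℝ := volume.restrict (Ioi 0)

/-- The number measure of a profile `φ`: the measure on sizes with density `φ`. -/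
noncomputable def sizeMeasure (φ : ℝ → ℝ) : Measure ℝ :=
  posVolume.withDensity fun x => ENNReal.ofReal (φ x)

/-- The pairs of sizes whose coalescence transports mass across size `x`: `p.1` starts below `x`
and `p.1 + p.2` ends above it. -/
def strip (x : ℝ) : Set (ℝ × ℝ) := {p | p.1 < x ∧ x < p.1 + p.2}

/-- The mass transported by coalescence, as a measure on pairs of sizes: particles of size `p.1`
meet particles of size `p.2` at rate `K p.1 p.2` and carry mass `p.1`. -/
noncomputable def fluxMeasure (K : ℝ → ℝ → ℝ) (m : Measure ℝ) : Measure (ℝ × ℝ) :=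
  (m.prod m).withDensity fun p => ENNReal.ofReal (p.1 * K p.1 p.2)

instance (φ : ℝ → ℝ) : SFinite (sizeMeasure φ) := by
  unfold sizeMeasure
  infer_instance

instance (K : ℝ → ℝ → ℝ) (m : Measure ℝ) [SFinite m] : SFinite (fluxMeasure K m) := by
  unfold fluxMeasure
  infer_instance

lemma measurableSet_mem_strip : MeasurableSet {q : ℝ × ℝ × ℝ | q.2 ∈ strip q.1} :=
  (measurableSet_lt measurable_snd.fst measurable_fst).inter
    (measurableSet_lt measurable_fst (measurable_snd.fst.add measurable_snd.snd))

lemma measurableSet_strip (x : ℝ) : MeasurableSet (strip x) :=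
  measurable_prodMk_left measurableSet_mem_strip

lemma measurable_measure_strip (Λ : Measure (ℝ × ℝ)) [SFinite Λ] :
    Measurable fun x => Λ (strip x) :=
  measurable_measure_prodMk_left measurableSet_mem_strip

lemma ae_posVolume_pos : ∀ᵐ x ∂posVolume, 0 < x :=
  ae_restrict_mem measurableSet_Ioi

lemma ae_sizeMeasure_pos (φ : ℝ → ℝ) : ∀ᵐ x ∂sizeMeasure φ, 0 < x :=
  (withDensity_absolutelyContinuous _ _).ae_le ae_posVolume_pos

lemma lintegral_sizeMeasure {φ : ℝ → ℝ} (hφ : Measurable φ) (f : ℝ → ℝ≥0∞) :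
    ∫⁻ x, f x ∂sizeMeasure φ = ∫⁻ x, ENNReal.ofReal (φ x) * f x ∂posVolume :=
  lintegral_withDensity_eq_lintegral_mul_non_measurable _ hφ.ennreal_ofReal
    (ae_of_all _ fun _ => ENNReal.ofReal_lt_top) f

lemma ae_prod_pos {m : Measure ℝ} (hm : ∀ᵐ x ∂m, 0 < x) :
    ∀ᵐ p ∂m.prod m, 0 < p.1 ∧ 0 < p.2 :=
  (Measure.quasiMeasurePreserving_fst.ae hm).and (Measure.quasiMeasurePreserving_snd.ae hm)

lemma ae_fluxMeasure_pos (K : ℝ → ℝ → ℝ) {m : Measure ℝ} (hm : ∀ᵐ x ∂m, 0 < x) :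
    ∀ᵐ p ∂fluxMeasure K m, 0 < p.1 ∧ 0 < p.2 :=
  (withDensity_absolutelyContinuous _ _).ae_le (ae_prod_pos hm)

lemma lintegral_fluxMeasure {α ε : ℝ} {K : ℝ → ℝ → ℝ} (hK : IsNearConstant α ε K) (m : Measure ℝ)
    (f : ℝ × ℝ → ℝ≥0∞) :
    ∫⁻ p, f p ∂fluxMeasure K m = ∫⁻ p, ENNReal.ofReal (p.1 * K p.1 p.2) * f p ∂m.prod m :=
  lintegral_withDensity_eq_lintegral_mul_non_measurable _ hK.measurable_fst_mul
    (ae_of_all _ fun _ => ENNReal.ofReal_lt_top) f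

lemma lintegral_measure_strip_mul (ν : Measure ℝ) [SFinite ν] (Λ : Measure (ℝ × ℝ)) [SFinite Λ]
    {f : ℝ → ℝ≥0∞} (hf : Measurable f) :
    ∫⁻ x, Λ (strip x) * f x ∂ν = ∫⁻ p, ∫⁻ x in Ioo p.1 (p.1 + p.2), f x ∂ν ∂Λ := by
  let S : Set (ℝ × ℝ × ℝ) := {q | q.2 ∈ strip q.1}
  have hleft (x : ℝ) : Λ (strip x) * f x = ∫⁻ p, S.indicator (fun q => f q.1) (x, p) ∂Λ := by
    rw [mul_comm, ← setLIntegral_const, ← lintegral_indicator (measurableSet_strip x)]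
    rfl
  have hright (p : ℝ × ℝ) : ∫⁻ x, S.indicator (fun q => f q.1) (x, p) ∂ν =
      ∫⁻ x in Ioo p.1 (p.1 + p.2), f x ∂ν := by
    rw [← lintegral_indicator measurableSet_Ioo]
    rfl
  simp_rw [hleft, ← hright]
  exact lintegral_lintegral_swap
    ((hf.comp measurable_fst).indicator measurableSet_mem_strip).aemeasurable

end Flux

section FluxFinite

variable {α ε : ℝ} {K : ℝ → ℝ → ℝ} {m : Measure ℝ} [SFinite m]

lemma fluxMeasure_Ico_prod_Ioi_lt_top (hK : IsNearConstant α ε K) (hα : α ∈ Icc (0 : ℝ) 1)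
    (hmass : ∫⁻ x, ENNReal.ofReal x ∂m < ∞) {a' a b : ℝ} (ha' : 0 < a') (hb : 0 < b) :
    fluxMeasure K m (Ico a' a ×ˢ Ioi b) < ∞ := by
  obtain ⟨C, hC⟩ := hK.exists_le_mul hα (a := a) ha' hb
  have hS : MeasurableSet (Ico a' a ×ˢ Ioi b) := measurableSet_Ico.prod measurableSet_Ioi
  calc fluxMeasure K m (Ico a' a ×ˢ Ioi b)
      = ∫⁻ p in Ico a' a ×ˢ Ioi b, ENNReal.ofReal (p.1 * K p.1 p.2) ∂m.prod m :=
        withDensity_apply _ hS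
    _ ≤ ∫⁻ p in Ico a' a ×ˢ Ioi b,
          ENNReal.ofReal C * (ENNReal.ofReal p.1 * ENNReal.ofReal p.2) ∂m.prod m := by
        refine setLIntegral_mono' hS fun p hp => ?_
        have h1 : 0 < p.1 := ha'.trans_le hp.1.1
        have h2 : 0 < p.2 := hb.trans hp.2
        have hCp := hC p.1 ⟨hp.1.1, hp.1.2.le⟩ p.2 hp.2.le
        have hC0 : 0 ≤ C := by
          by_contra! hneg
          nlinarith [hK.two_le p.1 p.2]
        rw [← ENNReal.ofReal_mul h1.le, ← ENNReal.ofReal_mul hC0]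
        exact ENNReal.ofReal_le_ofReal (by nlinarith)
    _ ≤ ∫⁻ p, ENNReal.ofReal C * (ENNReal.ofReal p.1 * ENNReal.ofReal p.2) ∂m.prod m :=
        setLIntegral_le_lintegral _ _
    _ = ENNReal.ofReal C * ((∫⁻ x, ENNReal.ofReal x ∂m) * ∫⁻ x, ENNReal.ofReal x ∂m) := by
        rw [lintegral_const_mul _ (by fun_prop), lintegral_prod_mul (by fun_prop) (by fun_prop)]
    _ < ∞ := by finiteness

lemma lintegral_snd_fluxMeasure_prod_le (hK : IsNearConstant α ε K) {s t : Set ℝ} {b : ℝ}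
    (hs : MeasurableSet s) (ht : MeasurableSet t) (hsb : ∀ x ∈ s, x ≤ b) (ht0 : ∀ x ∈ t, 0 ≤ x) :
    ∫⁻ p in s ×ˢ t, ENNReal.ofReal p.2 ∂fluxMeasure K m ≤
      ENNReal.ofReal b * fluxMeasure K m (t ×ˢ s) := by
  have hmeas := hK.measurable_fst_mul
  calc ∫⁻ p in s ×ˢ t, ENNReal.ofReal p.2 ∂fluxMeasure K m
      = ∫⁻ p in s ×ˢ t, ENNReal.ofReal (p.1 * K p.1 p.2) * ENNReal.ofReal p.2 ∂m.prod m :=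
        setLIntegral_withDensity_eq_setLIntegral_mul _ hmeas (by fun_prop) (hs.prod ht)
    _ ≤ ∫⁻ p in s ×ˢ t, ENNReal.ofReal b * ENNReal.ofReal (p.2 * K p.2 p.1) ∂m.prod m := by
        refine setLIntegral_mono' (hs.prod ht) fun p hp => ?_
        have h2 : 0 ≤ p.2 * K p.1 p.2 :=
          mul_nonneg (ht0 _ hp.2) (by linarith [hK.two_le p.1 p.2])
        rw [hK.symm p.2, ← ENNReal.ofReal_mul' (ht0 _ hp.2), ← ENNReal.ofReal_mul' h2]
        exact ENNReal.ofReal_le_ofReal (by nlinarith [hsb _ hp.1])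
    _ = ∫⁻ p in t ×ˢ s, ENNReal.ofReal b * ENNReal.ofReal (p.1 * K p.1 p.2) ∂m.prod m := by
        rw [← Measure.measurePreserving_swap.setLIntegral_comp_preimage (ht.prod hs)
          (hmeas.const_mul _), preimage_swap_prod]
        rfl
    _ = ENNReal.ofReal b * fluxMeasure K m (t ×ˢ s) := by
        rw [lintegral_const_mul _ hmeas, fluxMeasure, withDensity_apply _ (ht.prod hs)]

lemma volume_Ioo_inter_Ioo_le {a b y z : ℝ} (ha : 0 < a) (hz : 0 < z) :
    volume (Ioo y (y + z) ∩ Ioo a b) ≤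
      (Iio b ×ˢ Ioi (a / 2)).indicator (fun _ => ENNReal.ofReal b) (y, z) +
        (Ioo (a / 2) b ×ˢ Icc 0 (a / 2)).indicator (fun p => ENNReal.ofReal p.2) (y, z) := by
  rcases (Ioo y (y + z) ∩ Ioo a b).eq_empty_or_nonempty with h | ⟨x, hx, hx'⟩
  · simp [h]
  rcases lt_or_ge (a / 2) z with h | h
  · have hmem : (y, z) ∈ Iio b ×ˢ Ioi (a / 2) := ⟨hx.1.trans hx'.2, h⟩
    rw [indicator_of_mem hmem]
    calc volume (Ioo y (y + z) ∩ Ioo a b) ≤ volume (Ioo a b) := measure_mono inter_subset_right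
      _ ≤ ENNReal.ofReal b := by
        rw [volume_Ioo]
        exact ENNReal.ofReal_le_ofReal (by linarith)
      _ ≤ _ := le_self_add
  · have hmem : (y, z) ∈ Ioo (a / 2) b ×ˢ Icc 0 (a / 2) :=
      ⟨⟨by linarith [hx.2, hx'.1], hx.1.trans hx'.2⟩, hz.le, h⟩
    rw [indicator_of_mem hmem]
    calc volume (Ioo y (y + z) ∩ Ioo a b) ≤ volume (Ioo y (y + z)) :=
          measure_mono inter_subset_left
      _ = ENNReal.ofReal z := by rw [volume_Ioo, add_sub_cancel_left]
      _ ≤ _ := le_add_self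

lemma setLIntegral_fluxMeasure_strip_lt_top (hK : IsNearConstant α ε K)
    (hpos : ∀ᵐ x ∂m, 0 < x) {a b : ℝ} (ha : 0 < a) (hab : a < b)
    (hfin : fluxMeasure K m (Iio b ×ˢ Ioi (a / 2)) < ∞) :
    ∫⁻ x in Ioo a b, fluxMeasure K m (strip x) < ∞ := by
  have hA : MeasurableSet (Iio b ×ˢ Ioi (a / 2)) := measurableSet_Iio.prod measurableSet_Ioi
  have hB : MeasurableSet (Ioo (a / 2) b ×ˢ Icc 0 (a / 2)) :=
    measurableSet_Ioo.prod measurableSet_Icc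
  calc ∫⁻ x in Ioo a b, fluxMeasure K m (strip x)
      = ∫⁻ p, volume (Ioo p.1 (p.1 + p.2) ∩ Ioo a b) ∂fluxMeasure K m := by
        simpa [Measure.restrict_apply measurableSet_Ioo] using
          lintegral_measure_strip_mul (volume.restrict (Ioo a b)) (fluxMeasure K m)
            (measurable_const (a := (1 : ℝ≥0∞)))
    _ ≤ ∫⁻ p, (Iio b ×ˢ Ioi (a / 2)).indicator (fun _ => ENNReal.ofReal b) p +
          (Ioo (a / 2) b ×ˢ Icc 0 (a / 2)).indicator (fun p => ENNReal.ofReal p.2) p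
          ∂fluxMeasure K m := by
        refine lintegral_mono_ae ?_
        filter_upwards [ae_fluxMeasure_pos K hpos] with p hp
        exact volume_Ioo_inter_Ioo_le ha hp.2
    _ = ENNReal.ofReal b * fluxMeasure K m (Iio b ×ˢ Ioi (a / 2)) +
          ∫⁻ p in Ioo (a / 2) b ×ˢ Icc 0 (a / 2), ENNReal.ofReal p.2 ∂fluxMeasure K m := by
        rw [lintegral_add_left (measurable_const.indicator hA), lintegral_indicator hA,
          setLIntegral_const, lintegral_indicator hB]
    _ ≤ ENNReal.ofReal b * fluxMeasure K m (Iio b ×ˢ Ioi (a / 2)) +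
          ENNReal.ofReal b * fluxMeasure K m (Iio b ×ˢ Ioi (a / 2)) := by
        gcongr
        refine (lintegral_snd_fluxMeasure_prod_le hK measurableSet_Ioo measurableSet_Icc
          (fun x hx => hx.2.le) fun x hx => hx.1).trans ?_
        gcongr
        · exact fun x hx => lt_of_le_of_lt hx.2 (by linarith)
        · exact Ioo_subset_Ioi_self
    _ < ∞ := by finiteness

lemma fluxMeasure_Iio_prod_Ioi_lt_top (hK : IsNearConstant α ε K) (hα : α ∈ Icc (0 : ℝ) 1)
    {φ : ℝ → ℝ} (hmass : ∫⁻ x, ENNReal.ofReal x ∂sizeMeasure φ < ∞)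
    (heq : ∀ᵐ x ∂posVolume,
      x ^ 2 * φ x = (fluxMeasure K (sizeMeasure φ) (strip x)).toReal) {b : ℝ} (hb : 0 < b) :
    fluxMeasure K (sizeMeasure φ) (Iio b ×ˢ Ioi b) < ∞ := by
  by_contra hinf
  have hflux {x : ℝ} (hx : x ∈ Ioo 0 b) : fluxMeasure K (sizeMeasure φ) (strip x) = ∞ := by
    have hx_inf : fluxMeasure K (sizeMeasure φ) (Iio x ×ˢ Ioi b) = ∞ := by
      by_contra hx_fin
      refine hinf ((measure_mono ?_).trans_lt (measure_union_lt_top (lt_top_iff_ne_top.2 hx_fin)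
        (fluxMeasure_Ico_prod_Ioi_lt_top hK hα hmass (a := b) hx.1 hb)))
      rw [← union_prod, Iio_union_Ico_eq_Iio hx.2.le]
    rw [← top_le_iff, ← hx_inf]
    refine measure_mono_ae ?_
    filter_upwards [ae_fluxMeasure_pos K (ae_sizeMeasure_pos φ)] with p hp hmem
    exact ⟨hmem.1, by linarith [hp.1, hx.2, mem_Ioi.1 hmem.2]⟩
  have hzero : sizeMeasure φ (Iio b) = 0 := by
    rw [sizeMeasure, withDensity_apply _ measurableSet_Iio, posVolume,
      Measure.restrict_restrict measurableSet_Iio, inter_comm, Ioi_inter_Iio]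
    refine lintegral_eq_zero_of_ae_eq_zero ?_
    filter_upwards [ae_restrict_of_ae_restrict_of_subset Ioo_subset_Ioi_self heq,
      ae_restrict_mem measurableSet_Ioo] with x hx hx0
    have h0 : x ^ 2 * φ x = 0 := by rw [hx, hflux hx0, ENNReal.toReal_top]
    have hx2 : x ^ 2 ≠ 0 := pow_ne_zero 2 hx0.1.ne'
    simp [(mul_eq_zero.1 h0).resolve_left hx2]
  refine hinf (lt_top_iff_ne_top.2 ?_)
  have hprod : ((sizeMeasure φ).prod (sizeMeasure φ)) (Iio b ×ˢ Ioi b) = 0 := by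
    rw [Measure.prod_prod, hzero, zero_mul]
  rw [fluxMeasure, withDensity_absolutelyContinuous _ _ hprod]
  exact ENNReal.zero_ne_top

lemma ae_fluxMeasure_strip_lt_top (hK : IsNearConstant α ε K) (hα : α ∈ Icc (0 : ℝ) 1)
    {φ : ℝ → ℝ} (hmass : ∫⁻ x, ENNReal.ofReal x ∂sizeMeasure φ < ∞)
    (heq : ∀ᵐ x ∂posVolume,
      x ^ 2 * φ x = (fluxMeasure K (sizeMeasure φ) (strip x)).toReal) :
    ∀ᵐ x ∂posVolume, fluxMeasure K (sizeMeasure φ) (strip x) < ∞ := by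
  have hfin (a b : ℝ) (ha : 0 < a) (hb : a < b) :
      ∀ᵐ x ∂volume.restrict (Ioo a b), fluxMeasure K (sizeMeasure φ) (strip x) < ∞ := by
    refine ae_lt_top (measurable_measure_strip _)
      (setLIntegral_fluxMeasure_strip_lt_top hK (ae_sizeMeasure_pos φ) ha hb ?_).ne
    refine (measure_mono ?_).trans_lt (measure_union_lt_top
      (fluxMeasure_Iio_prod_Ioi_lt_top hK hα hmass heq (half_pos ha))
      (fluxMeasure_Ico_prod_Ioi_lt_top hK hα hmass (half_pos ha) (half_pos ha) (a := b)))
    rw [← union_prod, Iio_union_Ico_eq_Iio (by linarith)]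
  have hcover : Ioi (0 : ℝ) ⊆ ⋃ n : ℕ, Ioo (1 / (n + 2 : ℝ)) (n + 2) := by
    intro x hx
    obtain ⟨n, hn⟩ := exists_nat_gt (max x x⁻¹)
    rw [max_lt_iff] at hn
    have : 0 < x := hx
    refine mem_iUnion.2 ⟨n, ?_, by linarith⟩
    rw [one_div]
    exact inv_lt_of_inv_lt₀ hx (by linarith)
  refine ae_restrict_of_ae_restrict_of_subset hcover (ae_restrict_iUnion_iff _ _ |>.2 fun n => ?_)
  refine hfin _ _ (by positivity) ?_
  rw [div_lt_iff₀ (by positivity)]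
  nlinarith [(n.cast_nonneg : (0 : ℝ) ≤ n)]

end FluxFinite

section Profiles

/-- A pointwise representative of a normalised profile, without the null-set ambiguity and the
junk values of Bochner integrals: `φ` is measurable and nonnegative everywhere, and the fluxes are
honest `ℝ≥0∞`-valued integrals. -/
structure IsRegularProfile (K : ℝ → ℝ → ℝ) (φ : ℝ → ℝ) : Prop where
  measurable : Measurable φ
  nonneg : ∀ x, 0 ≤ φ x
  mass : ∫⁻ x, ENNReal.ofReal x ∂sizeMeasure φ = 1
  flux : ∀ᵐ x ∂posVolume,
    ENNReal.ofReal (x ^ 2 * φ x) = fluxMeasure K (sizeMeasure φ) (strip x)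

variable {α ε : ℝ} {K K' : ℝ → ℝ → ℝ} {φ φ' : ℝ → ℝ}

lemma fluxMeasure_sizeMeasure (hK : IsNearConstant α ε K) (hφ : Measurable φ)
    (hφ0 : ∀ x, 0 ≤ φ x) :
    fluxMeasure K (sizeMeasure φ) = (posVolume.prod posVolume).withDensity
      fun p => ENNReal.ofReal (p.1 * K p.1 p.2 * φ p.1 * φ p.2) := by
  rw [fluxMeasure, sizeMeasure, prod_withDensity hφ.ennreal_ofReal hφ.ennreal_ofReal,
    ← withDensity_mul _ (by fun_prop) hK.measurable_fst_mul]
  congr 1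
  ext p
  simp only [Pi.mul_apply]
  rw [mul_assoc _ (φ p.1), ENNReal.ofReal_mul' (mul_nonneg (hφ0 _) (hφ0 _)),
    ENNReal.ofReal_mul (hφ0 _), mul_comm]

lemma fluxMeasure_strip_eq_lintegral (hK : IsNearConstant α ε K) (hφ : Measurable φ)
    (hφ0 : ∀ x, 0 ≤ φ x) (x : ℝ) :
    fluxMeasure K (sizeMeasure φ) (strip x) =
      ∫⁻ y in Ioo 0 x, ∫⁻ z in Ioi (x - y), ENNReal.ofReal (y * K y z * φ y * φ z) := by
  have hKm := hK.measurable
  have hF : Measurable fun p : ℝ × ℝ => ENNReal.ofReal (p.1 * K p.1 p.2 * φ p.1 * φ p.2) := by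
    fun_prop
  rw [fluxMeasure_sizeMeasure hK hφ hφ0, withDensity_apply _ (measurableSet_strip x),
    ← lintegral_indicator (measurableSet_strip x),
    lintegral_prod _ (hF.indicator (measurableSet_strip x)).aemeasurable, ← Ioi_inter_Iio,
    inter_comm, ← Measure.restrict_restrict measurableSet_Iio,
    ← lintegral_indicator measurableSet_Iio]
  refine lintegral_congr fun y => ?_
  by_cases hy : y < x
  · rw [indicator_of_mem (mem_Iio.2 hy), ← lintegral_indicator measurableSet_Ioi,
      ← lintegral_indicator measurableSet_Ioi]
    refine lintegral_congr fun z => ?_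
    have hmem : (y, z) ∈ strip x ↔ x - y < z := by
      simp [strip, hy, sub_lt_iff_lt_add']
    by_cases hz : x - y < z
    · have hz0 : 0 < z := (sub_pos.2 hy).trans hz
      simp [hmem.2 hz, hz, hz0]
    · simp [hmem, hz]
  · have hout (z : ℝ) : (y, z) ∉ strip x := fun h => hy h.1
    simp [hout, hy]

lemma IsProfile.congr_kernel (h : IsProfile K φ)
    (hKK' : ∀ x y, 0 < x → 0 < y → K x y = K' x y) : IsProfile K' φ := by
  obtain ⟨hloc, hnonneg, hint, heq⟩ := h
  refine ⟨hloc, hnonneg, hint, heq.mono fun x hx => hx.trans ?_⟩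
  refine setIntegral_congr_fun measurableSet_Ioo fun y hy => ?_
  refine setIntegral_congr_fun measurableSet_Ioi fun z hz => ?_
  rw [hKK' y z hy.1 ((sub_pos.2 hy.2).trans hz)]

lemma integral_integral_congr_ae (hφφ' : φ' =ᵐ[posVolume] φ) (x : ℝ) :
    ∫ y in Ioo 0 x, ∫ z in Ioi (x - y), y * K y z * φ' y * φ' z =
      ∫ y in Ioo 0 x, ∫ z in Ioi (x - y), y * K y z * φ y * φ z := by
  refine integral_congr_ae ?_
  filter_upwards [ae_restrict_of_ae_restrict_of_subset Ioo_subset_Ioi_self hφφ',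
    ae_restrict_mem measurableSet_Ioo] with y hy hyx
  refine integral_congr_ae ?_
  have hsub : Ioi (x - y) ⊆ Ioi 0 := Ioi_subset_Ioi (sub_pos.2 hyx.2).le
  filter_upwards [ae_restrict_of_ae_restrict_of_subset hsub hφφ'] with z hz
  rw [hy, hz]

lemma lintegral_Ioi_kernel_lt_top (hK : IsNearConstant α ε K) (hα : α ∈ Icc (0 : ℝ) 1)
    (hφ : Measurable φ) (hφ0 : ∀ x, 0 ≤ φ x) (hmass : ∫⁻ x, ENNReal.ofReal x ∂sizeMeasure φ < ∞)
    {y b : ℝ} (hy : 0 < y) (hb : 0 < b) :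
    ∫⁻ z in Ioi b, ENNReal.ofReal (y * K y z * φ y * φ z) < ∞ := by
  obtain ⟨C, hC⟩ := hK.exists_le_mul hα (a := y) hy hb
  calc ∫⁻ z in Ioi b, ENNReal.ofReal (y * K y z * φ y * φ z)
      ≤ ∫⁻ z in Ioi b,
          ENNReal.ofReal (y * C * φ y) * (ENNReal.ofReal (φ z) * ENNReal.ofReal z) := by
        refine setLIntegral_mono' measurableSet_Ioi fun z hz => ?_
        have hz0 : 0 < z := hb.trans hz
        have hCz := hC y ⟨le_rfl, le_rfl⟩ z (le_of_lt hz)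
        rw [← ENNReal.ofReal_mul (hφ0 z), ← ENNReal.ofReal_mul' (mul_nonneg (hφ0 z) hz0.le)]
        refine ENNReal.ofReal_le_ofReal ?_
        calc y * K y z * φ y * φ z = y * φ y * φ z * K y z := by ring
          _ ≤ y * φ y * φ z * (C * z) := by
            gcongr
            exact mul_nonneg (mul_nonneg hy.le (hφ0 y)) (hφ0 z)
          _ = y * C * φ y * (φ z * z) := by ring
    _ ≤ ∫⁻ z, ENNReal.ofReal (y * C * φ y) * (ENNReal.ofReal (φ z) * ENNReal.ofReal z)
          ∂posVolume := lintegral_mono_set (Ioi_subset_Ioi hb.le)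
    _ = ENNReal.ofReal (y * C * φ y) * ∫⁻ z, ENNReal.ofReal z ∂sizeMeasure φ := by
        rw [lintegral_const_mul _ (by fun_prop), lintegral_sizeMeasure hφ]
    _ < ∞ := by finiteness

lemma integral_integral_eq_toReal_fluxMeasure_strip (hK : IsNearConstant α ε K)
    (hα : α ∈ Icc (0 : ℝ) 1) (hφ : Measurable φ) (hφ0 : ∀ x, 0 ≤ φ x)
    (hmass : ∫⁻ x, ENNReal.ofReal x ∂sizeMeasure φ < ∞) (x : ℝ) :
    ∫ y in Ioo 0 x, ∫ z in Ioi (x - y), y * K y z * φ y * φ z =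
      (fluxMeasure K (sizeMeasure φ) (strip x)).toReal := by
  have hKm := hK.measurable
  have hF (y : ℝ) : Measurable fun z => y * K y z * φ y * φ z :=
    (((hKm.comp measurable_prodMk_left).const_mul y).mul_const (φ y)).mul hφ
  have hinner : ∀ y ∈ Ioo 0 x, ∫ z in Ioi (x - y), y * K y z * φ y * φ z =
      (∫⁻ z in Ioi (x - y), ENNReal.ofReal (y * K y z * φ y * φ z)).toReal := fun y hy => by
    refine integral_eq_lintegral_of_nonneg_ae (ae_of_all _ fun z => ?_)
      (hF y).aestronglyMeasurable
    have hK0 : 0 ≤ K y z := zero_le_two.trans (hK.two_le y z)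
    exact mul_nonneg (mul_nonneg (mul_nonneg hy.1.le hK0) (hφ0 y)) (hφ0 z)
  rw [setIntegral_congr_fun measurableSet_Ioo hinner, fluxMeasure_strip_eq_lintegral hK hφ hφ0]
  refine integral_toReal ?_ ?_
  · have hind (y : ℝ) : ∫⁻ z in Ioi (x - y), ENNReal.ofReal (y * K y z * φ y * φ z) =
        ∫⁻ z, {p : ℝ × ℝ | x - p.1 < p.2}.indicator
          (fun p => ENNReal.ofReal (p.1 * K p.1 p.2 * φ p.1 * φ p.2)) (y, z) := by
      rw [← lintegral_indicator measurableSet_Ioi]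
      rfl
    simp_rw [hind]
    refine (Measurable.lintegral_prod_right' (Measurable.indicator ?_ ?_)).aemeasurable
    · fun_prop
    · exact measurableSet_lt (by fun_prop) (by fun_prop)
  · filter_upwards [ae_restrict_mem measurableSet_Ioo] with y hy
    exact lintegral_Ioi_kernel_lt_top hK hα hφ hφ0 hmass hy.1 (sub_pos.2 hy.2)

lemma exists_isRegularProfile (hK : IsNearConstant α ε K) (hα : α ∈ Icc (0 : ℝ) 1)
    (h : IsProfile K φ) (hnorm : IsNormalised φ) :
    ∃ φ', IsRegularProfile K φ' ∧ φ' =ᵐ[posVolume] φ := by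
  have hφm : AEMeasurable φ posVolume := h.1.aestronglyMeasurable.aemeasurable
  let φ' : ℝ → ℝ := fun x => max (hφm.mk φ x) 0
  have hφ'm : Measurable φ' := hφm.measurable_mk.max measurable_const
  have hφ'0 (x : ℝ) : 0 ≤ φ' x := le_max_right _ _
  have hφ' : φ' =ᵐ[posVolume] φ := by
    filter_upwards [hφm.ae_eq_mk, h.2.1] with x hx hx0
    simp only [φ', ← hx, max_eq_left hx0]
  have hmass : ∫⁻ x, ENNReal.ofReal x ∂sizeMeasure φ' = 1 := by
    calc ∫⁻ x, ENNReal.ofReal x ∂sizeMeasure φ'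
        = ∫⁻ x, ENNReal.ofReal (x * φ x) ∂posVolume := by
          rw [lintegral_sizeMeasure hφ'm]
          refine lintegral_congr_ae ?_
          filter_upwards [hφ', ae_posVolume_pos] with x hx hx0
          rw [hx, mul_comm, ENNReal.ofReal_mul hx0.le]
      _ = ENNReal.ofReal (∫ x, x * φ x ∂posVolume) := by
          refine (ofReal_integral_eq_lintegral_ofReal h.2.2.1 ?_).symm
          filter_upwards [h.2.1, ae_posVolume_pos] with x hx hx0
          exact mul_nonneg hx0.le hx
      _ = 1 := by rw [show ∫ x, x * φ x ∂posVolume = 1 from hnorm, ENNReal.ofReal_one]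
  have heq : ∀ᵐ x ∂posVolume,
      x ^ 2 * φ' x = (fluxMeasure K (sizeMeasure φ') (strip x)).toReal := by
    filter_upwards [h.2.2.2, hφ'] with x hx hx'
    rw [hx', hx, ← integral_integral_congr_ae hφ' x,
      integral_integral_eq_toReal_fluxMeasure_strip hK hα hφ'm hφ'0 (by simp [hmass])]
  refine ⟨φ', ⟨hφ'm, hφ'0, hmass, ?_⟩, hφ'⟩
  filter_upwards [heq, ae_fluxMeasure_strip_lt_top hK hα (by simp [hmass]) heq] with x hx hfin
  rw [hx, ENNReal.ofReal_toReal hfin.ne]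

/-- The form in which the profile equation is used: a normalised measure of sizes, tested against
functions `f ≥ 0`. A coalescence of `p.1` with `p.2` contributes the integral of `f` over the
sizes crossed by `p.1`. -/
structure IsWeakProfile (K : ℝ → ℝ → ℝ) (m : Measure ℝ) : Prop where
  ae_pos : ∀ᵐ x ∂m, 0 < x
  mass : ∫⁻ x, ENNReal.ofReal x ∂m = 1
  lintegral_sq_mul : ∀ f : ℝ → ℝ≥0∞, Measurable f →
    ∫⁻ x, ENNReal.ofReal (x ^ 2) * f x ∂m =
      ∫⁻ p, (∫⁻ x in Ioo p.1 (p.1 + p.2), f x) ∂fluxMeasure K m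

lemma IsRegularProfile.isWeakProfile (h : IsRegularProfile K φ) :
    IsWeakProfile K (sizeMeasure φ) := by
  refine ⟨ae_sizeMeasure_pos φ, h.mass, fun f hf => ?_⟩
  calc ∫⁻ x, ENNReal.ofReal (x ^ 2) * f x ∂sizeMeasure φ
      = ∫⁻ x, fluxMeasure K (sizeMeasure φ) (strip x) * f x ∂posVolume := by
        rw [lintegral_sizeMeasure h.measurable]
        refine lintegral_congr_ae ?_
        filter_upwards [h.flux] with x hx
        rw [← hx, ENNReal.ofReal_mul (sq_nonneg x)]
        ring
    _ = ∫⁻ p, ∫⁻ x in Ioo p.1 (p.1 + p.2), f x ∂posVolume ∂fluxMeasure K (sizeMeasure φ) :=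
        lintegral_measure_strip_mul _ _ hf
    _ = ∫⁻ p, (∫⁻ x in Ioo p.1 (p.1 + p.2), f x) ∂fluxMeasure K (sizeMeasure φ) := by
        refine lintegral_congr_ae ?_
        filter_upwards [ae_fluxMeasure_pos K (ae_sizeMeasure_pos φ)] with p hp
        rw [posVolume, Measure.restrict_restrict measurableSet_Ioo,
          inter_eq_left.2 fun x hx => mem_Ioi.2 (hp.1.trans hx.1)]

end Profiles

section Calculus

lemma lintegral_Ioo_eq_ofReal_sub {F f : ℝ → ℝ} {a b : ℝ} (hab : a ≤ b)
    (hF : ∀ x ∈ Icc a b, HasDerivAt F (f x) x) (hf : ∀ x ∈ Ioo a b, 0 ≤ f x) :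
    ∫⁻ x in Ioo a b, ENNReal.ofReal (f x) = ENNReal.ofReal (F b - F a) := by
  have hcont : ContinuousOn F (Icc a b) := fun x hx => (hF x hx).continuousAt.continuousWithinAt
  have hderiv (x) (hx : x ∈ Ioo a b) : HasDerivAt F (f x) x := hF x (Ioo_subset_Icc_self hx)
  have hint : IntegrableOn f (Ioc a b) :=
    intervalIntegral.integrableOn_deriv_of_nonneg hcont hderiv hf
  rw [← intervalIntegral.integral_eq_sub_of_hasDerivAt_of_le hab hcont hderiv
      ((intervalIntegrable_iff_integrableOn_Ioc_of_le hab).2 hint),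
    intervalIntegral.integral_of_le hab, integral_Ioc_eq_integral_Ioo]
  exact (ofReal_integral_eq_lintegral_ofReal (hint.mono_set Ioo_subset_Ioc_self)
    ((ae_restrict_mem measurableSet_Ioo).mono hf)).symm

lemma lintegral_prod_self_swap (m : Measure ℝ) [SFinite m] {F : ℝ × ℝ → ℝ≥0∞} (hF : Measurable F) :
    2 * ∫⁻ p, F p ∂m.prod m = ∫⁻ p, F p + F p.swap ∂m.prod m := by
  rw [lintegral_add_left hF, lintegral_prod_swap, two_mul]

lemma nonneg_of_deriv_pos_of_neg {H H' : ℝ → ℝ} (hH : ∀ q, 0 < q → HasDerivAt H (H' q) q)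
    (hlim : Tendsto H (𝓝[>] 0) (𝓝 0)) (hpos : ∀ q, 0 < q → H q < 0 → 0 < H' q) {q : ℝ}
    (hq : 0 < q) : 0 ≤ H q := by
  by_contra! hneg
  obtain ⟨q₀, hq₀, hq₀q⟩ : ∃ q₀, H q / 2 < H q₀ ∧ q₀ ∈ Ioo 0 q :=
    ((hlim.eventually_const_lt (by linarith)).and (Ioo_mem_nhdsGT hq)).exists
  have hsub : ∀ x ∈ Icc q₀ q, 0 < x := fun x hx => hq₀q.1.trans_le hx.1
  have hle := image_le_of_deriv_right_lt_deriv_boundary (f := fun x => -H x) (f' := fun x => -H' x)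
    (a := q₀) (b := q) (B := fun _ => -(H q / 2)) (B' := 0)
    (fun x hx => (hH x (hsub x hx)).continuousAt.neg.continuousWithinAt)
    (fun x hx => (hH x (hsub x (Ico_subset_Icc_self hx))).neg.hasDerivWithinAt)
    (by linarith) (fun x => hasDerivAt_const x _)
    (fun x hx hxH => by
      have := hpos x (hsub x (Ico_subset_Icc_self hx)) (by linarith)
      simpa using this) ⟨hq₀q.2.le, le_rfl⟩
  linarith

lemma min_le_rpow_mul_rpow {a b r : ℝ} (ha : 0 < a) (hb : 0 < b) (hr : r ∈ Icc (0 : ℝ) 1) :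
    min a b ≤ a ^ (1 - r) * b ^ r := by
  have hmin : 0 < min a b := lt_min ha hb
  calc min a b = min a b ^ (1 - r) * min a b ^ r := by
        rw [← rpow_add hmin, sub_add_cancel, rpow_one]
    _ ≤ a ^ (1 - r) * b ^ r :=
        mul_le_mul (rpow_le_rpow hmin.le (min_le_left _ _) (sub_nonneg.2 hr.2))
          (rpow_le_rpow hmin.le (min_le_right _ _) hr.1) (by positivity) (by positivity)

end Calculus

section Laplace

/-- The Laplace exponent `q ↦ ∫ (1 - e^{-qx}) dm` of a measure on sizes. -/
noncomputable def laplaceExponent (m : Measure ℝ) (q : ℝ) : ℝ := ∫ x, (1 - exp (-(q * x))) ∂m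

/-- The Laplace transform of the mass `x dm`, the derivative of the Laplace exponent. -/
noncomputable def laplaceMass (m : Measure ℝ) (q : ℝ) : ℝ := ∫ x, x * exp (-(q * x)) ∂m

/-- The test function which turns the weak form into an equation for the Laplace exponent. -/
noncomputable def laplaceTest (q x : ℝ) : ℝ := (1 - (1 + q * x) * exp (-(q * x))) / x ^ 2

/-- The integral of `laplaceTest q` over the sizes crossed when `y` absorbs `z`. -/
noncomputable def laplaceGain (q y z : ℝ) : ℝ :=
  (1 - exp (-(q * y))) / y - (1 - exp (-(q * (y + z)))) / (y + z)

lemma one_sub_exp_neg_mul_nonneg {q x : ℝ} (hq : 0 ≤ q) (hx : 0 ≤ x) :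
    0 ≤ 1 - exp (-(q * x)) := by
  simpa using mul_nonneg hq hx

lemma one_sub_exp_neg_mul_le (q x : ℝ) : 1 - exp (-(q * x)) ≤ q * x := by
  linarith [add_one_le_exp (-(q * x))]

variable {q x y z : ℝ}

lemma hasDerivAt_neg_laplace (hx : 0 < x) :
    HasDerivAt (fun x => -((1 - exp (-(q * x))) / x)) (laplaceTest q x) x := by
  have hexp : HasDerivAt (fun x => 1 - exp (-(q * x))) (q * exp (-(q * x))) x := by
    have := (((hasDerivAt_id x).const_mul q).neg.exp).const_sub 1
    simpa [mul_comm] using this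
  refine (hexp.div (hasDerivAt_id x) hx.ne').neg.congr_deriv ?_
  simp only [laplaceTest, id_eq]
  ring

lemma laplaceTest_nonneg (q x : ℝ) : 0 ≤ laplaceTest q x := by
  have h : (1 + q * x) * exp (-(q * x)) ≤ 1 := by
    rw [exp_neg, ← div_eq_mul_inv, div_le_one (exp_pos _), add_comm]
    exact add_one_le_exp _
  exact div_nonneg (sub_nonneg.2 h) (sq_nonneg x)

lemma lintegral_laplaceTest (q : ℝ) (hy : 0 < y) (hz : 0 < z) :
    ∫⁻ x in Ioo y (y + z), ENNReal.ofReal (laplaceTest q x) =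
      ENNReal.ofReal (laplaceGain q y z) := by
  rw [lintegral_Ioo_eq_ofReal_sub (by linarith)
    (fun x hx => hasDerivAt_neg_laplace (hy.trans_le hx.1)), laplaceGain]
  · ring_nf
  · exact fun x _ => laplaceTest_nonneg q x

lemma laplaceGain_nonneg (q : ℝ) (hy : 0 < y) (hz : 0 < z) : 0 ≤ laplaceGain q y z := by
  have hderiv (x : ℝ) (hx : y ≤ x) := hasDerivAt_neg_laplace (q := q) (hy.trans_le hx)
  obtain ⟨c, _, hslope⟩ := exists_hasDerivAt_eq_slope _ (laplaceTest q) (lt_add_of_pos_right y hz)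
    (fun x hx => (hderiv x hx.1).continuousAt.continuousWithinAt) fun x hx => hderiv x hx.1.le
  have hgain : laplaceGain q y z = z * laplaceTest q c := by
    rw [hslope, add_sub_cancel_left, mul_div_cancel₀ _ hz.ne', laplaceGain]
    ring
  rw [hgain]
  exact mul_nonneg hz.le (laplaceTest_nonneg q c)

lemma mul_laplaceGain_add_mul_laplaceGain (q : ℝ) (hy : 0 < y) (hz : 0 < z) :
    y * laplaceGain q y z + z * laplaceGain q z y =
      (1 - exp (-(q * y))) * (1 - exp (-(q * z))) := by
  have hyz : y + z ≠ 0 := by positivity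
  have hexp : exp (-(q * (y + z))) = exp (-(q * y)) * exp (-(q * z)) := by
    rw [← exp_add]
    ring_nf
  rw [laplaceGain, laplaceGain, add_comm z y, hexp]
  field_simp
  ring

lemma div_rpow_mul_one_sub_exp_mul_le {α : ℝ} (hα : α ∈ Icc (0 : ℝ) 1) (hq : 0 < q) (hy : 0 < y)
    (hz : 0 < z) :
    (y / z) ^ α * ((1 - exp (-(q * y))) * (1 - exp (-(q * z)))) ≤
      q ^ (2 - α) * (y * z ^ (1 - α)) := by
  have hle : 1 - exp (-(q * y)) ≤ (q * y) ^ (1 - α) := by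
    refine (le_min (sub_le_self _ (exp_pos _).le) (one_sub_exp_neg_mul_le q y)).trans ?_
    simpa using min_le_rpow_mul_rpow one_pos (mul_pos hq hy)
      (r := 1 - α) ⟨by linarith [hα.2], by linarith [hα.1]⟩
  calc (y / z) ^ α * ((1 - exp (-(q * y))) * (1 - exp (-(q * z))))
      ≤ (y / z) ^ α * ((q * y) ^ (1 - α) * (q * z)) := by
        gcongr
        exacts [one_sub_exp_neg_mul_nonneg hq.le hz.le, one_sub_exp_neg_mul_le q z]
    _ = (q * q ^ (1 - α)) * ((y ^ α * y ^ (1 - α)) * (z / z ^ α)) := by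
        rw [div_rpow hy.le hz.le, mul_rpow hq.le hy.le]
        ring
    _ = q ^ (2 - α) * (y * z ^ (1 - α)) := by
        rw [← rpow_one_add' hq.le (by linarith [hα.2]), ← rpow_add hy, rpow_sub hz, rpow_one,
          add_sub_cancel, rpow_one]
        ring_nf

end Laplace

namespace IsWeakProfile

variable {α ε : ℝ} {K : ℝ → ℝ → ℝ} {m : Measure ℝ}

lemma lintegral_sq_mul_eq_prod (h : IsWeakProfile K m) (hK : IsNearConstant α ε K)
    {f : ℝ → ℝ≥0∞} (hf : Measurable f) {D : ℝ → ℝ → ℝ}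
    (hD : ∀ y z, 0 < y → 0 < z → ∫⁻ x in Ioo y (y + z), f x = ENNReal.ofReal (D y z)) :
    ∫⁻ x, ENNReal.ofReal (x ^ 2) * f x ∂m =
      ∫⁻ p, ENNReal.ofReal (p.1 * K p.1 p.2 * D p.1 p.2) ∂m.prod m := by
  rw [h.lintegral_sq_mul f hf, lintegral_fluxMeasure hK]
  refine lintegral_congr_ae ?_
  filter_upwards [ae_prod_pos h.ae_pos] with p ⟨hy, hz⟩
  have hK0 : 0 ≤ K p.1 p.2 := zero_le_two.trans (hK.two_le _ _)
  rw [hD _ _ hy hz, ← ENNReal.ofReal_mul (mul_nonneg hy.le hK0)]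

lemma integrable_id (h : IsWeakProfile K m) : Integrable (fun x => x) m := by
  refine (lintegral_ofReal_ne_top_iff_integrable aestronglyMeasurable_id
    (h.ae_pos.mono fun x hx => hx.le)).1 ?_
  simp [h.mass]

lemma two_mul_lintegral_one_sub_exp [SFinite m] (h : IsWeakProfile K m) (hK : IsNearConstant α ε K)
    {q : ℝ} (hq : 0 ≤ q) :
    2 * ∫⁻ x, ENNReal.ofReal (1 - exp (-(q * x))) ∂m =
      2 * ∫⁻ x, ENNReal.ofReal (q * (x * exp (-(q * x)))) ∂m +
      ∫⁻ p, ENNReal.ofReal (K p.1 p.2 * ((1 - exp (-(q * p.1))) * (1 - exp (-(q * p.2)))))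
        ∂m.prod m := by
  have hKm := hK.measurable
  have htest : Measurable fun x => ENNReal.ofReal (laplaceTest q x) := by
    unfold laplaceTest
    fun_prop
  have hgain : Measurable fun p : ℝ × ℝ =>
      ENNReal.ofReal (p.1 * K p.1 p.2 * laplaceGain q p.1 p.2) := by
    unfold laplaceGain
    fun_prop
  have hsplit : ∫⁻ x, ENNReal.ofReal (1 - exp (-(q * x))) ∂m =
      ∫⁻ x, ENNReal.ofReal (q * (x * exp (-(q * x)))) ∂m +
        ∫⁻ x, ENNReal.ofReal (x ^ 2) * ENNReal.ofReal (laplaceTest q x) ∂m := by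
    rw [← lintegral_add_left (by fun_prop)]
    refine lintegral_congr_ae (h.ae_pos.mono fun x hx => ?_)
    dsimp only
    rw [← ENNReal.ofReal_mul (by positivity), ← ENNReal.ofReal_add (by positivity)
      (mul_nonneg (sq_nonneg x) (laplaceTest_nonneg q x)), laplaceTest]
    congr 1
    field_simp
    ring
  rw [hsplit, h.lintegral_sq_mul_eq_prod hK htest fun y z => lintegral_laplaceTest q, mul_add,
    lintegral_prod_self_swap m hgain]
  congr 1
  refine lintegral_congr_ae ?_
  filter_upwards [ae_prod_pos h.ae_pos] with p ⟨hy, hz⟩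
  have hK0 : 0 ≤ K p.1 p.2 := zero_le_two.trans (hK.two_le _ _)
  rw [← mul_laplaceGain_add_mul_laplaceGain q hy hz, Prod.fst_swap, Prod.snd_swap, hK.symm p.2,
    ← ENNReal.ofReal_add (mul_nonneg (mul_nonneg hy.le hK0) (laplaceGain_nonneg q hy hz))
      (mul_nonneg (mul_nonneg hz.le hK0) (laplaceGain_nonneg q hz hy))]
  ring_nf

lemma integrable_one_sub_exp (h : IsWeakProfile K m) {q : ℝ} (hq : 0 ≤ q) :
    Integrable (fun x => 1 - exp (-(q * x))) m := by
  refine (h.integrable_id.const_mul q).mono' (by fun_prop) (h.ae_pos.mono fun x hx => ?_)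
  rw [norm_of_nonneg (one_sub_exp_neg_mul_nonneg hq hx.le)]
  exact one_sub_exp_neg_mul_le q x

lemma integrable_mul_exp (h : IsWeakProfile K m) {q : ℝ} (hq : 0 ≤ q) :
    Integrable (fun x => x * exp (-(q * x))) m := by
  refine h.integrable_id.mono' (by fun_prop) (h.ae_pos.mono fun x hx => ?_)
  rw [norm_of_nonneg (by positivity)]
  exact mul_le_of_le_one_right hx.le (exp_le_one_iff.2 (by nlinarith))

lemma laplaceExponent_nonneg (h : IsWeakProfile K m) {q : ℝ} (hq : 0 ≤ q) :
    0 ≤ laplaceExponent m q :=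
  integral_nonneg_of_ae (h.ae_pos.mono fun _ hx => one_sub_exp_neg_mul_nonneg hq hx.le)

lemma laplaceMass_nonneg (h : IsWeakProfile K m) (q : ℝ) : 0 ≤ laplaceMass m q :=
  integral_nonneg_of_ae (h.ae_pos.mono fun _ hx => mul_nonneg hx.le (exp_pos _).le)

lemma ofReal_laplaceExponent (h : IsWeakProfile K m) {q : ℝ} (hq : 0 ≤ q) :
    ENNReal.ofReal (laplaceExponent m q) = ∫⁻ x, ENNReal.ofReal (1 - exp (-(q * x))) ∂m :=
  ofReal_integral_eq_lintegral_ofReal (h.integrable_one_sub_exp hq)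
    (h.ae_pos.mono fun _ hx => one_sub_exp_neg_mul_nonneg hq hx.le)

lemma ofReal_laplaceMass (h : IsWeakProfile K m) {q : ℝ} (hq : 0 ≤ q) :
    ENNReal.ofReal (laplaceMass m q) = ∫⁻ x, ENNReal.ofReal (x * exp (-(q * x))) ∂m :=
  ofReal_integral_eq_lintegral_ofReal (h.integrable_mul_exp hq)
    (h.ae_pos.mono fun _ hx => mul_nonneg hx.le (exp_pos _).le)

lemma two_mul_ofReal_laplaceExponent [SFinite m] (h : IsWeakProfile K m)
    (hK : IsNearConstant α ε K) {q : ℝ} (hq : 0 ≤ q) :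
    ENNReal.ofReal (2 * laplaceExponent m q) = ENNReal.ofReal (2 * (q * laplaceMass m q)) +
      ∫⁻ p, ENNReal.ofReal (K p.1 p.2 * ((1 - exp (-(q * p.1))) * (1 - exp (-(q * p.2)))))
        ∂m.prod m := by
  rw [ENNReal.ofReal_mul zero_le_two, ENNReal.ofReal_mul (q := q * _) zero_le_two,
    ENNReal.ofReal_ofNat, ENNReal.ofReal_mul hq, h.ofReal_laplaceExponent hq,
    h.ofReal_laplaceMass hq, ← lintegral_const_mul (ENNReal.ofReal q) (by fun_prop),
    h.two_mul_lintegral_one_sub_exp hK hq]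
  simp_rw [← ENNReal.ofReal_mul hq]

lemma lintegral_prod_one_sub_exp [SFinite m] (h : IsWeakProfile K m) {q : ℝ} (hq : 0 ≤ q) :
    ∫⁻ p, ENNReal.ofReal ((1 - exp (-(q * p.1))) * (1 - exp (-(q * p.2)))) ∂m.prod m =
      ENNReal.ofReal (laplaceExponent m q ^ 2) := by
  rw [sq, ENNReal.ofReal_mul (h.laplaceExponent_nonneg hq), h.ofReal_laplaceExponent hq,
    ← lintegral_prod_mul (by fun_prop) (by fun_prop)]
  refine lintegral_congr_ae ?_
  filter_upwards [ae_prod_pos h.ae_pos] with p ⟨hy, _⟩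
  rw [ENNReal.ofReal_mul (one_sub_exp_neg_mul_nonneg hq hy.le)]

lemma mul_laplaceMass_add_sq_le [SFinite m] (h : IsWeakProfile K m) (hK : IsNearConstant α ε K)
    {q : ℝ} (hq : 0 ≤ q) :
    q * laplaceMass m q + laplaceExponent m q ^ 2 ≤ laplaceExponent m q := by
  have hqv : 0 ≤ q * laplaceMass m q := mul_nonneg hq (h.laplaceMass_nonneg q)
  have hle : ENNReal.ofReal (2 * (q * laplaceMass m q) + 2 * laplaceExponent m q ^ 2) ≤
      ENNReal.ofReal (2 * laplaceExponent m q) := by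
    rw [h.two_mul_ofReal_laplaceExponent hK hq, ENNReal.ofReal_add (by positivity) (by positivity),
      ENNReal.ofReal_mul (q := _ ^ 2) zero_le_two, ← h.lintegral_prod_one_sub_exp hq,
      ← lintegral_const_mul _ (by fun_prop)]
    refine add_le_add_right ?_ _
    refine lintegral_mono_ae ?_
    filter_upwards [ae_prod_pos h.ae_pos] with p ⟨hy, hz⟩
    rw [← ENNReal.ofReal_mul zero_le_two]
    gcongr
    · exact mul_nonneg (one_sub_exp_neg_mul_nonneg hq hy.le) (one_sub_exp_neg_mul_nonneg hq hz.le)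
    · exact hK.two_le _ _
  have := (ENNReal.ofReal_le_ofReal_iff
    (mul_nonneg zero_le_two (h.laplaceExponent_nonneg hq))).1 hle
  linarith

lemma laplaceExponent_le_one [SFinite m] (h : IsWeakProfile K m) (hK : IsNearConstant α ε K)
    {q : ℝ} (hq : 0 ≤ q) : laplaceExponent m q ≤ 1 := by
  nlinarith [h.mul_laplaceMass_add_sq_le hK hq, mul_nonneg hq (h.laplaceMass_nonneg q)]

lemma measure_univ_le_one [SFinite m] (h : IsWeakProfile K m) (hK : IsNearConstant α ε K) :
    m univ ≤ 1 := by
  have hlim : Tendsto (fun n : ℕ => ∫⁻ x, ENNReal.ofReal (1 - exp (-(n * x))) ∂m) atTop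
      (𝓝 (∫⁻ _, 1 ∂m)) := by
    refine lintegral_tendsto_of_tendsto_of_monotone (fun n => by fun_prop)
      (h.ae_pos.mono fun x hx n k hnk => by dsimp only; gcongr) (h.ae_pos.mono fun x hx => ?_)
    have hexp : Tendsto (fun n : ℕ => exp (-(n * x))) atTop (𝓝 0) :=
      tendsto_exp_neg_atTop_nhds_zero.comp (tendsto_natCast_atTop_atTop.atTop_mul_const hx)
    simpa using ENNReal.tendsto_ofReal (hexp.const_sub 1)
  rw [lintegral_one] at hlim
  refine le_of_tendsto' hlim fun n => ?_
  rw [← h.ofReal_laplaceExponent n.cast_nonneg, ENNReal.ofReal_le_one]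
  exact h.laplaceExponent_le_one hK n.cast_nonneg

lemma setLIntegral_Iio_le [SFinite m] (h : IsWeakProfile K m) (hK : IsNearConstant α ε K) {x : ℝ}
    (hx : 0 < x) : ∫⁻ y in Iio x, ENNReal.ofReal y ∂m ≤ ENNReal.ofReal x := by
  have hmass : laplaceMass m x⁻¹ ≤ x / 4 := by
    have hqv := h.mul_laplaceMass_add_sq_le hK (inv_pos.2 hx).le
    have : x⁻¹ * laplaceMass m x⁻¹ ≤ 1 / 4 := by
      nlinarith [sq_nonneg (laplaceExponent m x⁻¹ - 1 / 2)]
    rw [inv_mul_le_iff₀ hx] at this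
    linarith
  calc ∫⁻ y in Iio x, ENNReal.ofReal y ∂m
      ≤ ∫⁻ y, ENNReal.ofReal 4 * ENNReal.ofReal (y * exp (-(x⁻¹ * y))) ∂m := by
        refine (setLIntegral_mono_ae (by fun_prop) (h.ae_pos.mono fun y hy hyx => ?_)).trans
          (setLIntegral_le_lintegral _ _)
        rw [← ENNReal.ofReal_mul (by norm_num)]
        refine ENNReal.ofReal_le_ofReal ?_
        have hexp : exp (-1) ≤ exp (-(x⁻¹ * y)) := by
          gcongr
          rw [inv_mul_le_iff₀ hx, mul_one]
          exact hyx.le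
        nlinarith [exp_neg_one_gt_d9]
    _ = ENNReal.ofReal (4 * laplaceMass m x⁻¹) := by
        rw [lintegral_const_mul _ (by fun_prop), ENNReal.ofReal_mul (by norm_num),
          h.ofReal_laplaceMass (inv_pos.2 hx).le]
    _ ≤ ENNReal.ofReal x := ENNReal.ofReal_le_ofReal (by linarith)

lemma lintegral_rpow_le_two [SFinite m] (h : IsWeakProfile K m) (hK : IsNearConstant α ε K)
    {r : ℝ} (hr : r ∈ Icc (0 : ℝ) 1) : ∫⁻ x, ENNReal.ofReal (x ^ r) ∂m ≤ 2 :=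
  calc ∫⁻ x, ENNReal.ofReal (x ^ r) ∂m
      ≤ ∫⁻ x, (1 + ENNReal.ofReal x) ∂m := by
        refine lintegral_mono_ae (h.ae_pos.mono fun x hx => ?_)
        rw [← ENNReal.ofReal_one, ← ENNReal.ofReal_add zero_le_one hx.le]
        exact ENNReal.ofReal_le_ofReal (rpow_le_one_add hx.le hr)
    _ = m univ + 1 := by rw [lintegral_add_left measurable_const, lintegral_one, h.mass]
    _ ≤ 2 := by
        rw [← one_add_one_eq_two]
        gcongr
        exact h.measure_univ_le_one hK

end IsWeakProfile

namespace IsWeakProfile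

variable {α ε : ℝ} {K : ℝ → ℝ → ℝ} {m : Measure ℝ}

lemma lintegral_prod_mul_rpow_le [SFinite m] (h : IsWeakProfile K m) (hK : IsNearConstant α ε K)
    (hα : α ∈ Icc (0 : ℝ) 1) :
    ∫⁻ p, ENNReal.ofReal (p.1 * p.2 ^ (1 - α) + p.2 * p.1 ^ (1 - α)) ∂m.prod m ≤ 4 := by
  have hα' : 1 - α ∈ Icc (0 : ℝ) 1 := ⟨by linarith [hα.2], by linarith [hα.1]⟩
  calc ∫⁻ p, ENNReal.ofReal (p.1 * p.2 ^ (1 - α) + p.2 * p.1 ^ (1 - α)) ∂m.prod m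
      = ∫⁻ p, (ENNReal.ofReal p.1 * ENNReal.ofReal (p.2 ^ (1 - α)) +
          ENNReal.ofReal (p.1 ^ (1 - α)) * ENNReal.ofReal p.2) ∂m.prod m := by
        refine lintegral_congr_ae ?_
        filter_upwards [ae_prod_pos h.ae_pos] with p ⟨hy, hz⟩
        rw [ENNReal.ofReal_add (by positivity) (by positivity), ENNReal.ofReal_mul hy.le,
          ENNReal.ofReal_mul hz.le, mul_comm (ENNReal.ofReal p.2)]
    _ = 2 * ∫⁻ x, ENNReal.ofReal (x ^ (1 - α)) ∂m := by
        rw [lintegral_add_left (by fun_prop),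
          lintegral_prod_mul (g := fun x => ENNReal.ofReal (x ^ (1 - α)))
            (by fun_prop) (by fun_prop),
          lintegral_prod_mul (f := fun x => ENNReal.ofReal (x ^ (1 - α)))
            (by fun_prop) (by fun_prop),
          h.mass, one_mul, mul_one, two_mul]
    _ ≤ 2 * 2 := by
        gcongr
        exact h.lintegral_rpow_le_two hK hα'
    _ = 4 := by norm_num

lemma lintegral_kernel_mul_one_sub_exp_le [SFinite m] (h : IsWeakProfile K m)
    (hK : IsNearConstant α ε K) (hα : α ∈ Icc (0 : ℝ) 1) {q : ℝ} (hq : 0 < q) :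
    ∫⁻ p, ENNReal.ofReal (K p.1 p.2 * ((1 - exp (-(q * p.1))) * (1 - exp (-(q * p.2)))))
        ∂m.prod m ≤
      ENNReal.ofReal (2 * laplaceExponent m q ^ 2 + 4 * ε * q ^ (2 - α)) := by
  have hε := hK.nonneg
  have hc : 0 ≤ ε * q ^ (2 - α) := by positivity
  calc ∫⁻ p, ENNReal.ofReal (K p.1 p.2 * ((1 - exp (-(q * p.1))) * (1 - exp (-(q * p.2)))))
        ∂m.prod m
      ≤ ∫⁻ p, (ENNReal.ofReal 2 * ENNReal.ofReal ((1 - exp (-(q * p.1))) * (1 - exp (-(q * p.2)))) +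
          ENNReal.ofReal (ε * q ^ (2 - α)) *
            ENNReal.ofReal (p.1 * p.2 ^ (1 - α) + p.2 * p.1 ^ (1 - α))) ∂m.prod m := by
        refine lintegral_mono_ae ?_
        filter_upwards [ae_prod_pos h.ae_pos] with p ⟨hy, hz⟩
        have hE := mul_nonneg (one_sub_exp_neg_mul_nonneg hq.le hy.le)
          (one_sub_exp_neg_mul_nonneg hq.le hz.le)
        have hyz := div_rpow_mul_one_sub_exp_mul_le hα hq hy hz
        have hzy := div_rpow_mul_one_sub_exp_mul_le hα hq hz hy
        rw [← ENNReal.ofReal_mul zero_le_two, ← ENNReal.ofReal_mul hc,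
          ← ENNReal.ofReal_add (by positivity) (by positivity)]
        refine ENNReal.ofReal_le_ofReal
          ((mul_le_mul_of_nonneg_right (hK.le _ _ hy hz) hE).trans ?_)
        nlinarith [mul_le_mul_of_nonneg_left (add_le_add hyz hzy) hε]
    _ = ENNReal.ofReal 2 * ENNReal.ofReal (laplaceExponent m q ^ 2) +
          ENNReal.ofReal (ε * q ^ (2 - α)) *
            ∫⁻ p, ENNReal.ofReal (p.1 * p.2 ^ (1 - α) + p.2 * p.1 ^ (1 - α)) ∂m.prod m := by
        rw [lintegral_add_left (by fun_prop), lintegral_const_mul _ (by fun_prop),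
          lintegral_const_mul _ (by fun_prop), h.lintegral_prod_one_sub_exp hq.le]
    _ ≤ ENNReal.ofReal 2 * ENNReal.ofReal (laplaceExponent m q ^ 2) +
          ENNReal.ofReal (ε * q ^ (2 - α)) * ENNReal.ofReal 4 := by
        gcongr
        rw [ENNReal.ofReal_ofNat]
        exact h.lintegral_prod_mul_rpow_le hK hα
    _ = ENNReal.ofReal (2 * laplaceExponent m q ^ 2 + 4 * ε * q ^ (2 - α)) := by
        rw [← ENNReal.ofReal_mul zero_le_two, ← ENNReal.ofReal_mul hc,
          ← ENNReal.ofReal_add (by positivity) (by positivity)]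
        ring_nf

lemma laplaceExponent_le [SFinite m] (h : IsWeakProfile K m) (hK : IsNearConstant α ε K)
    (hα : α ∈ Icc (0 : ℝ) 1) {q : ℝ} (hq : 0 < q) :
    laplaceExponent m q ≤
      q * laplaceMass m q + laplaceExponent m q ^ 2 + 2 * ε * q ^ (2 - α) := by
  have hε := hK.nonneg
  have hqv : 0 ≤ q * laplaceMass m q := mul_nonneg hq.le (h.laplaceMass_nonneg q)
  have hle := (h.two_mul_ofReal_laplaceExponent hK hq.le).le.trans
    (add_le_add_right (h.lintegral_kernel_mul_one_sub_exp_le hK hα hq) _)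
  rw [← ENNReal.ofReal_add (by positivity) (by positivity),
    ENNReal.ofReal_le_ofReal_iff (by positivity)] at hle
  linarith

lemma hasDerivAt_laplaceExponent (h : IsWeakProfile K m) {q : ℝ} (hq : 0 < q) :
    HasDerivAt (laplaceExponent m) (laplaceMass m q) q := by
  refine (hasDerivAt_integral_of_dominated_loc_of_deriv_le (bound := fun x => x)
    (F' := fun q x => x * exp (-(q * x))) (Ioi_mem_nhds hq)
    (Eventually.of_forall fun _ => by fun_prop) (h.integrable_one_sub_exp hq.le) (by fun_prop)
    (h.ae_pos.mono fun x hx r hr => ?_) h.integrable_id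
    (ae_of_all _ fun x r _ => ?_)).2
  · rw [norm_of_nonneg (by positivity)]
    exact mul_le_of_le_one_right hx.le (exp_le_one_iff.2 (by nlinarith [mem_Ioi.1 hr]))
  · have := (((hasDerivAt_id r).mul_const x).neg.exp).const_sub 1
    simpa [mul_comm] using this

lemma tendsto_laplaceExponent_div (h : IsWeakProfile K m) :
    Tendsto (fun q => laplaceExponent m q / q) (𝓝[>] 0) (𝓝 1) := by
  have hmass : ∫ x, x ∂m = 1 := by
    rw [integral_eq_lintegral_of_nonneg_ae (h.ae_pos.mono fun x hx => hx.le) (by fun_prop), h.mass,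
      ENNReal.toReal_one]
  rw [← hmass]
  simp_rw [laplaceExponent, ← integral_div]
  refine tendsto_integral_filter_of_dominated_convergence (fun x => x)
    (Eventually.of_forall fun _ => by fun_prop) ?_ h.integrable_id (ae_of_all _ fun x => ?_)
  · filter_upwards [self_mem_nhdsWithin] with q hq
    filter_upwards [h.ae_pos] with x hx
    have hq : 0 < q := hq
    rw [norm_of_nonneg (div_nonneg (one_sub_exp_neg_mul_nonneg hq.le hx.le) hq.le), div_le_iff₀' hq]
    exact one_sub_exp_neg_mul_le q x
  · have hderiv : HasDerivAt (fun q => 1 - exp (-(q * x))) x 0 := by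
      have := (((hasDerivAt_id (0 : ℝ)).mul_const x).neg.exp).const_sub 1
      simpa using this
    refine (hderiv.tendsto_slope.mono_left (nhdsGT_le_nhdsNE 0)).congr fun q => ?_
    simp [slope_def_field]

end IsWeakProfile

lemma hasDerivAt_laplace_comparison {u : ℝ → ℝ} {u' q : ℝ} (hq : 0 < q) (hu : HasDerivAt u u' q)
    (C r : ℝ) :
    HasDerivAt (fun q => u q / q - 1 / (1 + q) + C * q ^ r)
      ((u' * q - u q) / q ^ 2 + 1 / (1 + q) ^ 2 + C * (r * q ^ (r - 1))) q := by
  have hinv : HasDerivAt (fun q : ℝ => 1 / (1 + q)) (-(1 / (1 + q) ^ 2)) q := by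
    have := ((hasDerivAt_id q).const_add 1).fun_inv (by simp only [id_eq]; positivity)
    simpa [neg_div] using this
  refine (((hu.div (hasDerivAt_id q) hq.ne').sub hinv).add
    ((hasDerivAt_rpow_const (Or.inl hq.ne')).const_mul C)).congr_deriv ?_
  simp

lemma tendsto_laplace_comparison {u : ℝ → ℝ} (hu : Tendsto (fun q => u q / q) (𝓝[>] 0) (𝓝 1))
    (C : ℝ) {r : ℝ} (hr : 0 < r) :
    Tendsto (fun q => u q / q - 1 / (1 + q) + C * q ^ r) (𝓝[>] 0) (𝓝 0) := by
  have hinv : Tendsto (fun q : ℝ => 1 / (1 + q)) (𝓝[>] 0) (𝓝 1) := by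
    have : ContinuousAt (fun q : ℝ => 1 / (1 + q)) 0 :=
      continuousAt_const.div (by fun_prop) (by norm_num)
    simpa [ContinuousAt] using this.tendsto.mono_left (nhdsWithin_le_nhds (s := Ioi 0))
  have hpow : Tendsto (fun q : ℝ => C * q ^ r) (𝓝[>] 0) (𝓝 0) := by
    have := ((continuousAt_rpow_const 0 r (Or.inr hr.le)).const_mul C).tendsto
    simpa [zero_rpow hr.ne'] using this.mono_left nhdsWithin_le_nhds
  simpa using (hu.sub hinv).add hpow

namespace IsWeakProfile

variable {α ε : ℝ} {K : ℝ → ℝ → ℝ} {m : Measure ℝ}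

-- For `ε = 0` the exponent is `q / (1 + q)`; comparison with it uses that `u = laplaceExponent m`
-- satisfies `u ≤ q u' + u² + 2 ε q ^ (2 - α)` and `u q / q → 1` as `q → 0`.
lemma div_one_add_sub_le_laplaceExponent [SFinite m] (h : IsWeakProfile K m)
    (hK : IsNearConstant α ε K) (hα : α ∈ Ico (0 : ℝ) 1) {q : ℝ} (hq : 0 < q) :
    q / (1 + q) - 2 * ε / (1 - α) * q ^ (2 - α) ≤ laplaceExponent m q := by
  have hα1 : 0 < 1 - α := sub_pos.2 hα.2
  have hε := hK.nonneg
  set u := laplaceExponent m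
  set C := 2 * ε / (1 - α)
  have hC : C * (1 - α) = 2 * ε := div_mul_cancel₀ _ hα1.ne'
  have hnonneg := nonneg_of_deriv_pos_of_neg (fun r hr =>
    hasDerivAt_laplace_comparison hr (h.hasDerivAt_laplaceExponent hr) C (1 - α))
    (tendsto_laplace_comparison h.tendsto_laplaceExponent_div C hα1) (fun r hr hneg => ?_) hq
  · have hpow : q ^ (2 - α) = q ^ (1 - α) * q := by
      rw [← rpow_add_one hq.ne']
      ring_nf
    have : u q - (q / (1 + q) - C * q ^ (2 - α)) =
        (u q / q - 1 / (1 + q) + C * q ^ (1 - α)) * q := by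
      rw [hpow]
      field_simp
      ring
    linarith [mul_nonneg hnonneg hq.le]
  · have hle := h.laplaceExponent_le hK ⟨hα.1, hα.2.le⟩ hr
    have hur : 0 ≤ u r / r := div_nonneg (h.laplaceExponent_nonneg hr.le) hr.le
    have hsq : (u r / r) ^ 2 < (1 / (1 + r)) ^ 2 := by
      have : 0 ≤ C * r ^ (1 - α) := by positivity
      exact pow_lt_pow_left₀ (by linarith) hur two_ne_zero
    have hpow : r ^ (2 - α) = r ^ (1 - α - 1) * r ^ 2 := by
      rw [← rpow_add_natCast hr.ne']
      norm_num
      ring_nf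
    have hbern : -(u r / r) ^ 2 ≤
        (laplaceMass m r * r - u r) / r ^ 2 + C * ((1 - α) * r ^ (1 - α - 1)) := by
      rw [← mul_assoc, hC, div_pow, ← neg_div, ← sub_le_iff_le_add, le_div_iff₀ (by positivity),
        sub_mul, div_mul_cancel₀ _ (by positivity), mul_assoc, ← hpow]
      linarith
    rw [one_div_pow] at hsq
    linarith

lemma laplaceExponent_le_measure_Ioi_add [SFinite m] (h : IsWeakProfile K m)
    (hK : IsNearConstant α ε K) {q : ℝ} (hq : 0 ≤ q) (x₀ : ℝ) :
    ENNReal.ofReal (laplaceExponent m q) ≤ m (Ioi x₀) + ENNReal.ofReal (q * x₀) := by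
  rw [h.ofReal_laplaceExponent hq]
  calc ∫⁻ x, ENNReal.ofReal (1 - exp (-(q * x))) ∂m
      ≤ ∫⁻ x, ((Ioi x₀).indicator 1 x + ENNReal.ofReal (q * x₀)) ∂m := by
        refine lintegral_mono fun x => ?_
        rcases le_or_gt x x₀ with hx | hx
        · refine le_add_left (ENNReal.ofReal_le_ofReal
            ((one_sub_exp_neg_mul_le q x).trans ?_))
          gcongr
        · refine le_add_right ?_
          rw [indicator_of_mem (mem_Ioi.2 hx), Pi.one_apply, ENNReal.ofReal_le_one]
          linarith [exp_pos (-(q * x))]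
    _ = m (Ioi x₀) + ENNReal.ofReal (q * x₀) * m univ := by
        rw [lintegral_add_right _ measurable_const, lintegral_indicator_one measurableSet_Ioi,
          lintegral_const]
    _ ≤ m (Ioi x₀) + ENNReal.ofReal (q * x₀) := by
        gcongr
        exact mul_le_of_le_one_right' (h.measure_univ_le_one hK)

lemma exists_ofReal_le_measure_Ioi (hα : α ∈ Ico (0 : ℝ) 1) {θ : ℝ} (hθ0 : 0 ≤ θ) (hθ : θ < 1) :
    ∃ ε₀ > (0 : ℝ), ∃ x₀ ∈ Ioc (0 : ℝ) 1, ∀ (ε : ℝ) (K : ℝ → ℝ → ℝ) (m : Measure ℝ), SFinite m →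
      ε < ε₀ → IsNearConstant α ε K → IsWeakProfile K m → ENNReal.ofReal θ ≤ m (Ioi x₀) := by
  have hα1 : 0 < 1 - α := sub_pos.2 hα.2
  set η := (1 - θ) / 3 with hη
  have hη0 : 0 < η := by linarith
  set q := η⁻¹
  have hq : 0 < q := inv_pos.2 hη0
  have hqη : 1 - η ≤ q / (1 + q) := by
    rw [le_div_iff₀ (by positivity)]
    nlinarith [mul_inv_cancel₀ hη0.ne']
  refine ⟨η * (1 - α) / (2 * q ^ (2 - α)), by positivity, η / q, ⟨by positivity, ?_⟩, ?_⟩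
  · rw [div_le_one hq]
    nlinarith [mul_inv_cancel₀ hη0.ne']
  · intro ε K m _ hε hK h
    have herr : 2 * ε / (1 - α) * q ^ (2 - α) ≤ η := by
      rw [lt_div_iff₀ (by positivity)] at hε
      rw [div_mul_eq_mul_div, div_le_iff₀ hα1]
      linarith
    have hu : θ + η ≤ laplaceExponent m q := by
      linarith [h.div_one_add_sub_le_laplaceExponent hK hα hq]
    have hle := (ENNReal.ofReal_le_ofReal hu).trans
      (h.laplaceExponent_le_measure_Ioi_add hK hq.le (η / q))
    rw [mul_div_cancel₀ _ hq.ne', ENNReal.ofReal_add hθ0 hη0.le] at hle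
    exact (ENNReal.add_le_add_iff_right ENNReal.ofReal_ne_top).1 hle

end IsWeakProfile

section PowerTest

variable {α ε r y z : ℝ} {K : ℝ → ℝ → ℝ}

lemma lintegral_Ioo_rpow_sub_one (hr : 0 < r) (hy : 0 < y) (hz : 0 < z) :
    ∫⁻ x in Ioo y (y + z), ENNReal.ofReal (x ^ (r - 1)) =
      ENNReal.ofReal (((y + z) ^ r - y ^ r) / r) := by
  rw [sub_div]
  refine lintegral_Ioo_eq_ofReal_sub (F := fun x => x ^ r / r) (by linarith) (fun x hx => ?_)
    fun x hx => rpow_nonneg (hy.trans hx.1).le _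
  refine ((hasDerivAt_rpow_const (Or.inl (hy.trans_le hx.1).ne')).div_const r).congr_deriv ?_
  exact mul_div_cancel_left₀ _ hr.ne'

lemma add_rpow_sub_rpow_div_le (hr : r ∈ Ioc (0 : ℝ) 1) (hy : 0 < y) (hz : 0 < z) :
    ((y + z) ^ r - y ^ r) / r ≤ y ^ (r - 1) * z := by
  have hbern := rpow_one_add_le_one_add_mul_self (s := z / y) (by linarith [div_pos hz hy])
    hr.1.le hr.2
  have hadd : (y + z) ^ r = y ^ r * (1 + z / y) ^ r := by
    rw [← mul_rpow hy.le (by positivity)]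
    congr 1
    field_simp
  rw [div_le_iff₀ hr.1, hadd, rpow_sub_one hy.ne']
  calc y ^ r * (1 + z / y) ^ r - y ^ r ≤ y ^ r * (1 + r * (z / y)) - y ^ r := by gcongr
    _ = y ^ r / y * z * r := by ring

lemma IsNearConstant.mul_kernel_mul_add_rpow_sub_rpow_le (hK : IsNearConstant α ε K)
    (hr : r ∈ Ioc (0 : ℝ) 1) (hy : 0 < y) (hz : 0 < z) :
    y * K y z * (((y + z) ^ r - y ^ r) / r) ≤
      2 / r * (y * z ^ r) +
        (ε * (y ^ (r + α) * z ^ (1 - α)) + ε / r * (y ^ (1 - α) * z ^ (r + α))) := by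
  have hr0 := hr.1
  have hε := hK.nonneg
  set G := ((y + z) ^ r - y ^ r) / r
  have hG0 : 0 ≤ G :=
    div_nonneg (sub_nonneg.2 (rpow_le_rpow hy.le (by linarith) hr0.le)) hr0.le
  have hGz : G ≤ z ^ r / r := by
    have := rpow_add_le_add_rpow hy.le hz.le hr0.le hr.2
    exact div_le_div_of_nonneg_right (by linarith) hr0.le
  have hGy : G ≤ y ^ (r - 1) * z := add_rpow_sub_rpow_div_le hr hy hz
  calc y * K y z * G ≤ y * (2 + ε * ((y / z) ^ α + (z / y) ^ α)) * G := by
        gcongr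
        exact hK.le y z hy hz
    _ = 2 * y * G + (ε * (y * (y / z) ^ α) * G + ε * (y * (z / y) ^ α) * G) := by ring
    _ ≤ 2 * y * (z ^ r / r) +
          (ε * (y * (y / z) ^ α) * (y ^ (r - 1) * z) + ε * (y * (z / y) ^ α) * (z ^ r / r)) := by
        gcongr
    _ = _ := by
        rw [div_rpow hy.le hz.le, div_rpow hz.le hy.le, rpow_add hy, rpow_add hz, rpow_sub hz,
          rpow_sub hy, rpow_sub hy, rpow_one, rpow_one]
        field_simp

end PowerTest

namespace IsWeakProfile

variable {α ε r : ℝ} {K : ℝ → ℝ → ℝ} {m : Measure ℝ}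

lemma lintegral_rpow_add_one (h : IsWeakProfile K m) (hK : IsNearConstant α ε K) (hr : 0 < r) :
    ∫⁻ x, ENNReal.ofReal (x ^ (r + 1)) ∂m =
      ∫⁻ p, ENNReal.ofReal (p.1 * K p.1 p.2 * (((p.1 + p.2) ^ r - p.1 ^ r) / r)) ∂m.prod m := by
  rw [← h.lintegral_sq_mul_eq_prod hK (f := fun x => ENNReal.ofReal (x ^ (r - 1)))
    (D := fun y z => ((y + z) ^ r - y ^ r) / r) (by fun_prop)
    fun y z hy hz => lintegral_Ioo_rpow_sub_one hr hy hz]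
  refine lintegral_congr_ae (h.ae_pos.mono fun x hx => ?_)
  dsimp only
  rw [← ENNReal.ofReal_mul (sq_nonneg x), ← rpow_natCast x 2, ← rpow_add hx]
  norm_num
  ring_nf

lemma lintegral_rpow_lt_top_of_lt_top [SFinite m] (h : IsWeakProfile K m)
    (hK : IsNearConstant α ε K) (hα : α ∈ Icc (0 : ℝ) 1) (hr : r ∈ Ioc (0 : ℝ) 1)
    (hfin : ∫⁻ x, ENNReal.ofReal (x ^ (r + α)) ∂m < ∞) :
    ∫⁻ x, ENNReal.ofReal (x ^ (r + 1)) ∂m < ∞ := by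
  have hr0 := hr.1
  have hε := hK.nonneg
  have hfin_le_one {s : ℝ} (hs : s ∈ Icc (0 : ℝ) 1) : ∫⁻ x, ENNReal.ofReal (x ^ s) ∂m < ∞ :=
    (h.lintegral_rpow_le_two hK hs).trans_lt ENNReal.ofNat_lt_top
  have hα' := hfin_le_one (s := 1 - α) ⟨by linarith [hα.2], by linarith [hα.1]⟩
  let g (s x : ℝ) : ℝ≥0∞ := ENNReal.ofReal (x ^ s)
  have hg (s : ℝ) : Measurable (g s) := by fun_prop
  have hprod {s t : ℝ} (hs : ∫⁻ x, g s x ∂m < ∞) (ht : ∫⁻ x, g t x ∂m < ∞) (c : ℝ) :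
      ∫⁻ p, ENNReal.ofReal c * (g s p.1 * g t p.2) ∂m.prod m < ∞ := by
    rw [lintegral_const_mul _ (by fun_prop), lintegral_prod_mul (by fun_prop) (by fun_prop)]
    exact ENNReal.mul_lt_top ENNReal.ofReal_lt_top (ENNReal.mul_lt_top hs ht)
  calc ∫⁻ x, ENNReal.ofReal (x ^ (r + 1)) ∂m
      = ∫⁻ p, ENNReal.ofReal (p.1 * K p.1 p.2 * (((p.1 + p.2) ^ r - p.1 ^ r) / r)) ∂m.prod m :=
        h.lintegral_rpow_add_one hK hr0
    _ ≤ ∫⁻ p, (ENNReal.ofReal (2 / r) * (g 1 p.1 * g r p.2) +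
          (ENNReal.ofReal ε * (g (r + α) p.1 * g (1 - α) p.2) +
            ENNReal.ofReal (ε / r) * (g (1 - α) p.1 * g (r + α) p.2))) ∂m.prod m := by
        refine lintegral_mono_ae ?_
        filter_upwards [ae_prod_pos h.ae_pos] with p ⟨hy, hz⟩
        have hle := hK.mul_kernel_mul_add_rpow_sub_rpow_le hr hy hz
        refine (ENNReal.ofReal_le_ofReal hle).trans_eq ?_
        simp only [g, rpow_one]
        rw [ENNReal.ofReal_add (by positivity) (by positivity),
          ENNReal.ofReal_add (by positivity) (by positivity)]
        congr 1
        · rw [ENNReal.ofReal_mul (by positivity), ENNReal.ofReal_mul hy.le]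
        congr 1 <;> rw [ENNReal.ofReal_mul (by positivity), ENNReal.ofReal_mul (by positivity)]
    _ < ∞ := by
        rw [lintegral_add_left (by fun_prop), lintegral_add_left (by fun_prop)]
        exact ENNReal.add_lt_top.2 ⟨hprod (hfin_le_one ⟨zero_le_one, le_rfl⟩)
          (hfin_le_one (Ioc_subset_Icc_self hr)) _,
          ENNReal.add_lt_top.2 ⟨hprod hfin hα' _, hprod hα' hfin _⟩⟩

lemma lintegral_rpow_lt_top [SFinite m] (h : IsWeakProfile K m) (hK : IsNearConstant α ε K)
    (hα : α ∈ Ico (0 : ℝ) 1) (hr : r ∈ Icc (0 : ℝ) 2) :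
    ∫⁻ x, ENNReal.ofReal (x ^ r) ∂m < ∞ := by
  have hα1 : 0 < 1 - α := sub_pos.2 hα.2
  obtain ⟨n, hn⟩ := exists_nat_ge (1 / (1 - α))
  rw [div_le_iff₀ hα1] at hn
  suffices ∀ n : ℕ, ∀ r ∈ Icc (0 : ℝ) 2, r ≤ 1 + n * (1 - α) →
      ∫⁻ x, ENNReal.ofReal (x ^ r) ∂m < ∞ from this n r hr (by linarith [hr.2])
  intro n
  induction n with
  | zero =>
    intro r hr hle
    exact (h.lintegral_rpow_le_two hK ⟨hr.1, by simpa using hle⟩).trans_lt ENNReal.ofNat_lt_top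
  | succ n ih =>
    intro r hr hle
    rcases le_or_gt r 1 with hr1 | hr1
    · exact (h.lintegral_rpow_le_two hK ⟨hr.1, hr1⟩).trans_lt ENNReal.ofNat_lt_top
    · push_cast at hle
      have := h.lintegral_rpow_lt_top_of_lt_top hK (Ico_subset_Icc_self hα) (r := r - 1)
        ⟨by linarith, by linarith [hr.2]⟩
        (ih _ ⟨by linarith [hα.1], by linarith [hr.2, hα.2]⟩ (by linarith))
      simpa using this

end IsWeakProfile

lemma le_ofReal_div_of_mul_le {I : ℝ≥0∞} (hI : I ≠ ∞) {a b c : ℝ} (hb : 0 ≤ b) (hba : b < a)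
    (hc : 0 ≤ c) (h : ENNReal.ofReal a * I ≤ ENNReal.ofReal b * I + ENNReal.ofReal c) :
    I ≤ ENNReal.ofReal (c / (a - b)) := by
  lift I to NNReal using hI
  rw [← ENNReal.ofReal_coe_nnreal, ← ENNReal.ofReal_mul (hb.trans hba.le),
    ← ENNReal.ofReal_mul hb, ← ENNReal.ofReal_add (by positivity) hc,
    ENNReal.ofReal_le_ofReal_iff (by positivity)] at h
  rw [← ENNReal.ofReal_coe_nnreal]
  refine ENNReal.ofReal_le_ofReal ?_
  rw [le_div_iff₀ (sub_pos.2 hba)]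
  linarith

/-- The integral of `x ^ (-s - 2)` over `(y, x₀)`. -/
noncomputable def negPowGain (s x₀ y : ℝ) : ℝ := (y ^ (-s - 1) - x₀ ^ (-s - 1)) / (1 + s)

@[fun_prop]
lemma measurable_negPowGain (s x₀ : ℝ) : Measurable (negPowGain s x₀) := by
  unfold negPowGain
  fun_prop

namespace IsWeakProfile

variable {α ε θ s x₀ : ℝ} {K : ℝ → ℝ → ℝ} {m : Measure ℝ}

lemma measure_Ioi_mul_lintegral_le [SFinite m] (h : IsWeakProfile K m) (hK : IsNearConstant α ε K)
    {f g : ℝ → ℝ≥0∞} (hf : Measurable f) (hg : Measurable g)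
    (hgf : ∀ y z, 0 < y → x₀ < z →
      g y ≤ ENNReal.ofReal (y * K y z) * ∫⁻ x in Ioo y (y + z), f x) :
    m (Ioi x₀) * ∫⁻ y, g y ∂m ≤ ∫⁻ x, ENNReal.ofReal (x ^ 2) * f x ∂m := by
  rw [h.lintegral_sq_mul f hf, lintegral_fluxMeasure hK, mul_comm,
    ← lintegral_indicator_one measurableSet_Ioi,
    ← lintegral_prod_mul hg.aemeasurable (measurable_one.indicator measurableSet_Ioi).aemeasurable]
  refine lintegral_mono_ae ?_
  filter_upwards [ae_prod_pos h.ae_pos] with p ⟨hy, _⟩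
  by_cases hz : p.2 ∈ Ioi x₀
  · simpa [hz] using hgf p.1 p.2 hy hz
  · simp [hz]

lemma setLIntegral_Iio_rpow_le (h : IsWeakProfile K m) {r x : ℝ} (hrs : 0 ≤ r + s) (hx : 0 ≤ x) :
    ∫⁻ y in Iio x, ENNReal.ofReal (y ^ r) ∂m ≤
      ENNReal.ofReal (x ^ (r + s)) * ∫⁻ y in Iio x, ENNReal.ofReal (y ^ (-s)) ∂m := by
  rw [← lintegral_const_mul _ (by fun_prop)]
  refine setLIntegral_mono_ae (by fun_prop) (h.ae_pos.mono fun y hy hyx => ?_)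
  rw [← ENNReal.ofReal_mul (by positivity)]
  refine ENNReal.ofReal_le_ofReal ?_
  calc y ^ r = y ^ (r + s) * y ^ (-s) := by rw [← rpow_add hy, add_neg_cancel_right]
    _ ≤ x ^ (r + s) * y ^ (-s) := by
        have hyx : y < x := hyx
        gcongr

lemma ofReal_le_setLIntegral_rpow {δ y z : ℝ} (hs : 0 ≤ s) (hy : y ∈ Ioo δ x₀) (hy0 : 0 < y)
    (hz : x₀ < z) :
    ENNReal.ofReal (negPowGain s x₀ y) ≤
      ∫⁻ x in Ioo y (y + z), (Ioo δ x₀).indicator (fun x => ENNReal.ofReal (x ^ (-s - 2))) x := by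
  have hprim (x : ℝ) (hx : y ≤ x) :
      HasDerivAt (fun x => -(x ^ (-s - 1) / (1 + s))) (x ^ (-s - 2)) x := by
    have := hasDerivAt_rpow_const (p := -s - 1) (Or.inl (hy0.trans_le hx).ne')
    refine (this.div_const (1 + s)).neg.congr_deriv ?_
    rw [show -s - 1 - 1 = -s - 2 by ring]
    field_simp
    ring
  have hint := lintegral_Ioo_eq_ofReal_sub hy.2.le (fun x hx => hprim x hx.1)
    fun x hx => rpow_nonneg (hy0.trans hx.1).le _
  calc ENNReal.ofReal (negPowGain s x₀ y)
      = ∫⁻ x in Ioo y x₀, ENNReal.ofReal (x ^ (-s - 2)) := by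
        rw [hint, negPowGain]
        ring_nf
    _ = ∫⁻ x in Ioo y x₀, (Ioo δ x₀).indicator (fun x => ENNReal.ofReal (x ^ (-s - 2))) x :=
        setLIntegral_congr_fun measurableSet_Ioo fun x hx => by
          rw [indicator_of_mem (Ioo_subset_Ioo_left hy.1.le hx)]
    _ ≤ _ := lintegral_mono_set (Ioo_subset_Ioo_right (by linarith))

lemma measure_Ioi_mul_setLIntegral_Ioo_le [SFinite m] (h : IsWeakProfile K m)
    (hK : IsNearConstant α ε K) (hs : 0 ≤ s) (δ : ℝ) :
    m (Ioi x₀) * ∫⁻ y in Ioo δ x₀, ENNReal.ofReal (y * 2 * negPowGain s x₀ y) ∂m ≤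
      ∫⁻ y in Ioo δ x₀, ENNReal.ofReal (y ^ (-s)) ∂m := by
  have hf : Measurable ((Ioo δ x₀).indicator fun x => ENNReal.ofReal (x ^ (-s - 2))) :=
    Measurable.indicator (by fun_prop) measurableSet_Ioo
  have hg : Measurable ((Ioo δ x₀).indicator fun y =>
      ENNReal.ofReal (y * 2 * negPowGain s x₀ y)) :=
    Measurable.indicator (by fun_prop) measurableSet_Ioo
  have hle := h.measure_Ioi_mul_lintegral_le hK (x₀ := x₀) hf hg fun y z hy hz => ?_
  · rw [lintegral_indicator measurableSet_Ioo] at hle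
    refine hle.trans_eq ?_
    rw [← lintegral_indicator measurableSet_Ioo]
    refine lintegral_congr_ae (h.ae_pos.mono fun x hx => ?_)
    by_cases hx' : x ∈ Ioo δ x₀
    · simp only [indicator_of_mem hx']
      rw [← ENNReal.ofReal_mul (sq_nonneg x), ← rpow_natCast x 2, ← rpow_add hx]
      norm_num
    · simp [hx']
  · by_cases hyδ : y ∈ Ioo δ x₀
    · rw [indicator_of_mem hyδ, ENNReal.ofReal_mul (by positivity)]
      gcongr
      · exact hK.two_le y z
      · exact ofReal_le_setLIntegral_rpow hs hyδ hy hz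
    · simp [hyδ]

lemma two_mul_rpow_neg_eq {y : ℝ} (hs : 0 ≤ s) (hy : 0 < y) (hyx : y < x₀) :
    ENNReal.ofReal (2 * y ^ (-s)) =
      ENNReal.ofReal (1 + s) * ENNReal.ofReal (y * 2 * negPowGain s x₀ y) +
        ENNReal.ofReal (2 * x₀ ^ (-s - 1)) * ENNReal.ofReal y := by
  have hx₀ := hy.trans hyx
  have hs1 : 1 + s ≠ 0 := by positivity
  have hgain : 0 ≤ negPowGain s x₀ y :=
    div_nonneg (sub_nonneg.2 (rpow_le_rpow_of_nonpos hy hyx.le (by linarith))) (by positivity)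
  rw [← ENNReal.ofReal_mul (by positivity), ← ENNReal.ofReal_mul (by positivity),
    ← ENNReal.ofReal_add (by positivity) (by positivity), negPowGain, rpow_sub_one hy.ne',
    rpow_sub_one hx₀.ne']
  congr 1
  field_simp
  ring

lemma setLIntegral_Ioo_two_mul_rpow_neg_le [SFinite m] (h : IsWeakProfile K m)
    (hK : IsNearConstant α ε K) (hs : 0 ≤ s) (hx₀ : 0 < x₀) {δ : ℝ} (hδ : 0 ≤ δ) :
    ∫⁻ y in Ioo δ x₀, ENNReal.ofReal (2 * y ^ (-s)) ∂m ≤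
      ENNReal.ofReal (1 + s) * ∫⁻ y in Ioo δ x₀, ENNReal.ofReal (y * 2 * negPowGain s x₀ y) ∂m +
        ENNReal.ofReal (2 * x₀ ^ (-s)) := by
  rw [setLIntegral_congr_fun measurableSet_Ioo fun y hy =>
      two_mul_rpow_neg_eq hs (hδ.trans_lt hy.1) hy.2,
    lintegral_add_left (by fun_prop), lintegral_const_mul _ (by fun_prop),
    lintegral_const_mul _ (by fun_prop), rpow_sub_one hx₀.ne']
  gcongr
  calc ENNReal.ofReal (2 * (x₀ ^ (-s) / x₀)) * ∫⁻ y in Ioo δ x₀, ENNReal.ofReal y ∂m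
      ≤ ENNReal.ofReal (2 * (x₀ ^ (-s) / x₀)) * ENNReal.ofReal x₀ := by
        gcongr
        exact (lintegral_mono_set Ioo_subset_Iio_self).trans (h.setLIntegral_Iio_le hK hx₀)
    _ = ENNReal.ofReal (2 * x₀ ^ (-s)) := by
        rw [← ENNReal.ofReal_mul (by positivity)]
        congr 1
        field_simp

lemma mul_setLIntegral_Ioo_rpow_neg_le [SFinite m] (h : IsWeakProfile K m)
    (hK : IsNearConstant α ε K) (hs : 0 ≤ s) (hx₀ : 0 < x₀) (hθ : ENNReal.ofReal θ ≤ m (Ioi x₀))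
    {δ : ℝ} (hδ : 0 ≤ δ) :
    ENNReal.ofReal (2 * θ) * ∫⁻ y in Ioo δ x₀, ENNReal.ofReal (y ^ (-s)) ∂m ≤
      ENNReal.ofReal (1 + s) * ∫⁻ y in Ioo δ x₀, ENNReal.ofReal (y ^ (-s)) ∂m +
        ENNReal.ofReal (2 * θ * x₀ ^ (-s)) := by
  let G := ∫⁻ y in Ioo δ x₀, ENNReal.ofReal (y * 2 * negPowGain s x₀ y) ∂m
  calc ENNReal.ofReal (2 * θ) * ∫⁻ y in Ioo δ x₀, ENNReal.ofReal (y ^ (-s)) ∂m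
      = ENNReal.ofReal θ * ∫⁻ y in Ioo δ x₀, ENNReal.ofReal (2 * y ^ (-s)) ∂m := by
        simp_rw [ENNReal.ofReal_mul zero_le_two]
        rw [lintegral_const_mul _ (by fun_prop)]
        ring
    _ ≤ ENNReal.ofReal θ * (ENNReal.ofReal (1 + s) * G + ENNReal.ofReal (2 * x₀ ^ (-s))) := by
        gcongr
        exact h.setLIntegral_Ioo_two_mul_rpow_neg_le hK hs hx₀ hδ
    _ = ENNReal.ofReal (1 + s) * (ENNReal.ofReal θ * G) + ENNReal.ofReal (2 * θ * x₀ ^ (-s)) := by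
        rw [mul_add, ← ENNReal.ofReal_mul' (by positivity)]
        ring_nf
    _ ≤ _ := by
        gcongr
        exact (mul_le_mul_left hθ _).trans (h.measure_Ioi_mul_setLIntegral_Ioo_le hK hs δ)

lemma setLIntegral_Ioo_rpow_neg_ne_top [SFinite m] (h : IsWeakProfile K m)
    (hK : IsNearConstant α ε K) (hs : 0 ≤ s) {δ : ℝ} (hδ : 0 < δ) :
    ∫⁻ y in Ioo δ x₀, ENNReal.ofReal (y ^ (-s)) ∂m ≠ ∞ := by
  refine (lt_of_le_of_lt (b := ENNReal.ofReal (δ ^ (-s)) * m univ) ?_ ?_).ne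
  · calc ∫⁻ y in Ioo δ x₀, ENNReal.ofReal (y ^ (-s)) ∂m
        ≤ ∫⁻ _ in Ioo δ x₀, ENNReal.ofReal (δ ^ (-s)) ∂m :=
          setLIntegral_mono measurable_const fun y hy => ENNReal.ofReal_le_ofReal
            (rpow_le_rpow_of_nonpos hδ hy.1.le (neg_nonpos.2 hs))
      _ ≤ ENNReal.ofReal (δ ^ (-s)) * m univ := by
          rw [setLIntegral_const]
          gcongr
          exact subset_univ _
  · exact ENNReal.mul_lt_top ENNReal.ofReal_lt_top
      ((h.measure_univ_le_one hK).trans_lt ENNReal.one_lt_top)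

lemma setLIntegral_Iio_rpow_neg_le [SFinite m] (h : IsWeakProfile K m)
    (hK : IsNearConstant α ε K) (hs : 0 ≤ s) (hsθ : 1 + s < 2 * θ) (hx₀ : 0 < x₀)
    (hθ : ENNReal.ofReal θ ≤ m (Ioi x₀)) :
    ∫⁻ y in Iio x₀, ENNReal.ofReal (y ^ (-s)) ∂m ≤
      ENNReal.ofReal (2 * θ * x₀ ^ (-s) / (2 * θ - (1 + s))) := by
  have hpos : Iio x₀ =ᵐ[m] Ioo 0 x₀ := by
    filter_upwards [h.ae_pos] with y hy
    exact propext ⟨fun hyx => ⟨hy, hyx⟩, fun hyx => hyx.2⟩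
  have hUnion : Ioo 0 x₀ = ⋃ n : ℕ, Ioo (1 / (n + 1 : ℝ)) x₀ := by
    ext y
    simp only [mem_Ioo, mem_iUnion, exists_and_right, and_congr_left_iff]
    exact fun _ => ⟨exists_nat_one_div_lt, fun ⟨n, hn⟩ => Nat.one_div_pos_of_nat.trans hn⟩
  have hdir : Directed (· ⊆ ·) fun n : ℕ => Ioo (1 / (n + 1 : ℝ)) x₀ :=
    directed_of_isDirected_le fun n k hnk => Ioo_subset_Ioo_left (Nat.one_div_le_one_div hnk)
  rw [setLIntegral_congr hpos, hUnion, setLIntegral_iUnion_of_directed _ hdir]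
  refine iSup_le fun n => ?_
  have hn : (0 : ℝ) < 1 / (n + 1) := Nat.one_div_pos_of_nat
  exact le_ofReal_div_of_mul_le (h.setLIntegral_Ioo_rpow_neg_ne_top hK hs hn) (by positivity) hsθ
    (mul_nonneg (by linarith) (by positivity))
    (h.mul_setLIntegral_Ioo_rpow_neg_le hK hs hx₀ hθ hn.le)

end IsWeakProfile

lemma setLIntegral_indicator_inv_eq_one {x y z : ℝ} (hx : 0 < x) (hy : y ≤ x)
    (hz : 2 * x ≤ y + z) :
    ∫⁻ t in Ioo y (y + z), (Ioo x (2 * x)).indicator (fun _ => ENNReal.ofReal x⁻¹) t = 1 := by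
  rw [setLIntegral_indicator measurableSet_Ioo,
    inter_eq_self_of_subset_left (Ioo_subset_Ioo hy hz), setLIntegral_const, Real.volume_Ioo,
    ← ENNReal.ofReal_mul (by positivity), two_mul, add_sub_cancel_right, inv_mul_cancel₀ hx.ne',
    ENNReal.ofReal_one]

namespace IsWeakProfile

variable {α ε s x₀ : ℝ} {K : ℝ → ℝ → ℝ} {m : Measure ℝ}

lemma setLIntegral_Iio_rpow_le_of_le (h : IsWeakProfile K m) {B : ℝ}
    (hB : ∫⁻ y in Iio x₀, ENNReal.ofReal (y ^ (-s)) ∂m ≤ ENNReal.ofReal B) {r x : ℝ}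
    (hrs : 0 ≤ r + s) (hx : 0 ≤ x) (hxx₀ : x ≤ x₀) :
    ∫⁻ y in Iio x, ENNReal.ofReal (y ^ r) ∂m ≤ ENNReal.ofReal (B * x ^ (r + s)) := by
  refine (h.setLIntegral_Iio_rpow_le hrs hx).trans ?_
  rw [mul_comm B, ENNReal.ofReal_mul (by positivity)]
  gcongr
  exact (lintegral_mono_set (Iio_subset_Iio hxx₀)).trans hB

lemma lintegral_rpow_neg_le [SFinite m] (h : IsWeakProfile K m) (hK : IsNearConstant α ε K) {r : ℝ}
    (hr : 0 ≤ r) (hx₀ : 0 < x₀) :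
    ∫⁻ y, ENNReal.ofReal (y ^ (-r)) ∂m ≤
      ∫⁻ y in Iio x₀, ENNReal.ofReal (y ^ (-r)) ∂m + ENNReal.ofReal (x₀ ^ (-r)) := by
  rw [← lintegral_add_compl _ measurableSet_Iio, compl_Iio]
  gcongr
  calc ∫⁻ y in Ici x₀, ENNReal.ofReal (y ^ (-r)) ∂m
      ≤ ∫⁻ _ in Ici x₀, ENNReal.ofReal (x₀ ^ (-r)) ∂m :=
        setLIntegral_mono measurable_const fun y hy => ENNReal.ofReal_le_ofReal
          (rpow_le_rpow_of_nonpos hx₀ hy (neg_nonpos.2 hr))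
    _ = ENNReal.ofReal (x₀ ^ (-r)) * m (Ici x₀) := setLIntegral_const _ _
    _ ≤ ENNReal.ofReal (x₀ ^ (-r)) :=
        mul_le_of_le_one_right' ((measure_mono (subset_univ _)).trans (h.measure_univ_le_one hK))

lemma lintegral_sq_mul_indicator_inv_le (h : IsWeakProfile K m) {x : ℝ} (hx : 0 < x) :
    ∫⁻ y, ENNReal.ofReal (y ^ 2) * (Ioo x (2 * x)).indicator (fun _ => ENNReal.ofReal x⁻¹) y ∂m ≤
      2 * ∫⁻ y in Iio (2 * x), ENNReal.ofReal y ∂m := by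
  rw [← lintegral_const_mul _ (by fun_prop), ← lintegral_indicator measurableSet_Iio]
  refine lintegral_mono_ae (h.ae_pos.mono fun y hy => ?_)
  by_cases hyx : y ∈ Ioo x (2 * x)
  · rw [indicator_of_mem hyx, indicator_of_mem (mem_Iio.2 hyx.2),
      ← ENNReal.ofReal_mul (sq_nonneg y), ← ENNReal.ofReal_ofNat, ← ENNReal.ofReal_mul zero_le_two]
    refine ENNReal.ofReal_le_ofReal ?_
    rw [← div_eq_mul_inv, div_le_iff₀ hx]
    nlinarith [hyx.2]
  · simp [hyx]

lemma measure_Ioi_mul_setLIntegral_rpow_one_sub_le [SFinite m] (h : IsWeakProfile K m)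
    (hK : IsNearConstant α ε K) (hα : 0 ≤ α) {c : ℝ} (hc : 0 ≤ c)
    (hlow : ∀ y z, 0 < y → 0 < z → c * (z / y) ^ α ≤ K y z) {x : ℝ} (hx : 0 < x)
    (hxx₀ : 2 * x ≤ x₀) :
    m (Ioi x₀) * (ENNReal.ofReal (c * x₀ ^ α) *
        ∫⁻ y in Iio x, ENNReal.ofReal (y ^ (1 - α)) ∂m) ≤
      2 * ∫⁻ y in Iio (2 * x), ENNReal.ofReal y ∂m := by
  have hx₀ : 0 < x₀ := by linarith
  have hf : Measurable ((Ioo x (2 * x)).indicator fun _ => ENNReal.ofReal x⁻¹) :=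
    measurable_const.indicator measurableSet_Ioo
  have hg : Measurable ((Ioo 0 x).indicator fun y =>
      ENNReal.ofReal (c * x₀ ^ α) * ENNReal.ofReal (y ^ (1 - α))) :=
    Measurable.indicator (by fun_prop) measurableSet_Ioo
  have hpos : Iio x =ᵐ[m] Ioo 0 x := by
    filter_upwards [h.ae_pos] with y hy
    exact propext ⟨fun hyx => ⟨hy, hyx⟩, fun hyx => hyx.2⟩
  calc m (Ioi x₀) * (ENNReal.ofReal (c * x₀ ^ α) *
        ∫⁻ y in Iio x, ENNReal.ofReal (y ^ (1 - α)) ∂m)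
      = m (Ioi x₀) * ∫⁻ y, (Ioo 0 x).indicator (fun y =>
          ENNReal.ofReal (c * x₀ ^ α) * ENNReal.ofReal (y ^ (1 - α))) y ∂m := by
        rw [lintegral_indicator measurableSet_Ioo, lintegral_const_mul _ (by fun_prop),
          setLIntegral_congr hpos]
    _ ≤ ∫⁻ y, ENNReal.ofReal (y ^ 2) * (Ioo x (2 * x)).indicator
          (fun _ => ENNReal.ofReal x⁻¹) y ∂m := by
        refine h.measure_Ioi_mul_lintegral_le hK hf hg fun y z hy hz => ?_
        by_cases hyx : y ∈ Ioo 0 x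
        · rw [setLIntegral_indicator_inv_eq_one hx hyx.2.le (by linarith [hyx.1]), mul_one,
            indicator_of_mem hyx, ← ENNReal.ofReal_mul (by positivity)]
          refine ENNReal.ofReal_le_ofReal ?_
          calc c * x₀ ^ α * y ^ (1 - α) = y * (c * (x₀ / y) ^ α) := by
                rw [div_rpow hx₀.le hy.le, rpow_sub hy, rpow_one]
                ring
            _ ≤ y * (c * (z / y) ^ α) := by gcongr
            _ ≤ y * K y z := by
                gcongr
                exact hlow y z hy (hx₀.trans hz)
        · simp [hyx]
    _ ≤ 2 * ∫⁻ y in Iio (2 * x), ENNReal.ofReal y ∂m := h.lintegral_sq_mul_indicator_inv_le hx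

end IsWeakProfile

/-- Uniform control of a measure on sizes near `0`: the mass below `x` and the part of the flux due
to the perturbation of the kernel decay like `x ^ p`, and the moment of order `-α` is bounded. -/
structure IsTameAtZero (α ε p C x₀ : ℝ) (m : Measure ℝ) : Prop where
  mass_le : ∀ x, 0 < x → x ≤ x₀ → ∫⁻ y in Iio x, ENNReal.ofReal y ∂m ≤ ENNReal.ofReal (C * x ^ p)
  rpow_le : ∀ x, 0 < x → x ≤ x₀ →
    ENNReal.ofReal ε * ∫⁻ y in Iio x, ENNReal.ofReal (y ^ (1 - α)) ∂m ≤ ENNReal.ofReal (C * x ^ p)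
  neg_moment_le : ∫⁻ y, ENNReal.ofReal (y ^ (-α)) ∂m ≤ ENNReal.ofReal C

section Tame

variable {α : ℝ}

lemma exists_decay_exponents (hα : α ∈ Ioo (0 : ℝ) 1) :
    ∃ s p : ℝ, α ≤ s ∧ s < 1 ∧ 1 + α < p ∧ p ≤ 1 + s ∧ p ≤ 1 + 2 * α ∧
      (α < 1 / 2 → p ≤ 1 + s - α) := by
  obtain ⟨hα0, hα1⟩ := hα
  rcases lt_or_ge α (1 / 2) with hα2 | hα2
  · obtain ⟨d, hd0, hd⟩ := exists_between (lt_min hα0 (by linarith : 0 < 1 - 2 * α))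
    obtain ⟨hdα, hd1⟩ := lt_min_iff.1 hd
    exact ⟨2 * α + d, 1 + α + d, by linarith, by linarith, by linarith, by linarith, by linarith,
      fun _ => by linarith⟩
  · obtain ⟨s, hαs, hs1⟩ := exists_between hα1
    exact ⟨s, 1 + s, hαs.le, hs1, by linarith, le_rfl, by linarith, fun h => by linarith⟩

lemma IsWeakProfile.mul_setLIntegral_rpow_one_sub_le {ε s c θ B x₀ : ℝ} {K : ℝ → ℝ → ℝ}
    {m : Measure ℝ} [SFinite m] (h : IsWeakProfile K m) (hK : IsNearConstant α ε K) (hα : 0 ≤ α)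
    (hs : s ∈ Icc (0 : ℝ) 1) (hc : 0 < c)
    (hlow : ∀ y z, 0 < y → 0 < z → ε * c * (z / y) ^ α ≤ K y z) (hx₀ : 0 < x₀)
    (hθ : 0 < θ) (hθm : ENNReal.ofReal θ ≤ m (Ioi x₀)) (hB0 : 0 ≤ B)
    (hB : ∫⁻ y in Iio x₀, ENNReal.ofReal (y ^ (-s)) ∂m ≤ ENNReal.ofReal B) {x : ℝ} (hx : 0 < x)
    (hxx₀ : 2 * x ≤ x₀) :
    ENNReal.ofReal ε * ∫⁻ y in Iio x, ENNReal.ofReal (y ^ (1 - α)) ∂m ≤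
      ENNReal.ofReal (8 * B * x ^ (1 + s) / (θ * (c * x₀ ^ α))) := by
  obtain ⟨hs0, hs1⟩ := hs
  have hε := hK.nonneg
  have hden : 0 < θ * (c * x₀ ^ α) := by positivity
  rw [ENNReal.ofReal_div_of_pos hden, ENNReal.le_div_iff_mul_le (by simp [hden]) (by simp),
    mul_comm]
  have hmass := h.setLIntegral_Iio_rpow_le_of_le hB (r := 1) (by linarith) (by positivity) hxx₀
  simp only [rpow_one] at hmass
  calc ENNReal.ofReal (θ * (c * x₀ ^ α)) *
        (ENNReal.ofReal ε * ∫⁻ y in Iio x, ENNReal.ofReal (y ^ (1 - α)) ∂m)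
      = ENNReal.ofReal θ * (ENNReal.ofReal (ε * c * x₀ ^ α) *
          ∫⁻ y in Iio x, ENNReal.ofReal (y ^ (1 - α)) ∂m) := by
        rw [ENNReal.ofReal_mul hθ.le, mul_assoc ε, ENNReal.ofReal_mul hε]
        ring
    _ ≤ m (Ioi x₀) * (ENNReal.ofReal (ε * c * x₀ ^ α) *
          ∫⁻ y in Iio x, ENNReal.ofReal (y ^ (1 - α)) ∂m) := mul_le_mul_left hθm _
    _ ≤ 2 * ∫⁻ y in Iio (2 * x), ENNReal.ofReal y ∂m :=
        h.measure_Ioi_mul_setLIntegral_rpow_one_sub_le hK hα (by positivity) hlow hx hxx₀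
    _ ≤ ENNReal.ofReal 2 * ENNReal.ofReal (B * (2 * x) ^ (1 + s)) := by
        rw [ENNReal.ofReal_ofNat]
        gcongr
    _ ≤ ENNReal.ofReal (8 * B * x ^ (1 + s)) := by
        rw [← ENNReal.ofReal_mul zero_le_two, mul_rpow zero_le_two hx.le]
        refine ENNReal.ofReal_le_ofReal ?_
        have htwo : (2 : ℝ) ^ (1 + s) ≤ 4 := by
          calc (2 : ℝ) ^ (1 + s) ≤ 2 ^ (2 : ℝ) := by
                gcongr
                exacts [one_le_two, by linarith]
            _ = 4 := by norm_num
        calc 2 * (B * (2 ^ (1 + s) * x ^ (1 + s))) ≤ 2 * (B * (4 * x ^ (1 + s))) := by gcongr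
          _ = 8 * B * x ^ (1 + s) := by ring

lemma IsWeakProfile.isTameAtZero {ε s p c θ B x₀ : ℝ} {K : ℝ → ℝ → ℝ} {m : Measure ℝ} [SFinite m]
    (h : IsWeakProfile K m) (hK : IsNearConstant α ε K) (hα : 0 ≤ α) (hαs : α ≤ s) (hs : s < 1)
    (hp : p ≤ 1 + s) (hpα : α < 1 / 2 → p ≤ 1 + s - α) (hε : ε ≤ 1) (hc : 0 < c)
    (hlow : 1 / 2 ≤ α → ∀ y z, 0 < y → 0 < z → ε * c * (z / y) ^ α ≤ K y z)
    (hx₀ : x₀ ∈ Ioc (0 : ℝ) 1) (hθ : 0 < θ) (hθm : ENNReal.ofReal θ ≤ m (Ioi x₀)) (hB0 : 0 ≤ B)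
    (hB : ∫⁻ y in Iio x₀, ENNReal.ofReal (y ^ (-s)) ∂m ≤ ENNReal.ofReal B) :
    IsTameAtZero α ε p (B + x₀ ^ (-α) + 8 * B / (θ * (c * x₀ ^ α))) (x₀ / 2) m := by
  obtain ⟨hx₀0, hx₀1⟩ := hx₀
  set C := B + x₀ ^ (-α) + 8 * B / (θ * (c * x₀ ^ α))
  have hneg : 0 ≤ x₀ ^ (-α) := by positivity
  have hdiv : 0 ≤ 8 * B / (θ * (c * x₀ ^ α)) := by positivity
  have hBC : B ≤ C := by linarith
  have hpow {x r : ℝ} (hx : 0 < x) (hxx₀ : x ≤ x₀ / 2) (hpr : p ≤ r) : x ^ r ≤ x ^ p :=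
    rpow_le_rpow_of_exponent_ge hx (by linarith) hpr
  refine ⟨fun x hx hxx₀ => ?_, fun x hx hxx₀ => ?_, ?_⟩
  · have hmass := h.setLIntegral_Iio_rpow_le_of_le hB (r := 1) (by linarith) hx.le (by linarith)
    simp only [rpow_one] at hmass
    refine hmass.trans (ENNReal.ofReal_le_ofReal ?_)
    exact mul_le_mul hBC (hpow hx hxx₀ hp) (by positivity) (by linarith)
  · rcases lt_or_ge α (1 / 2) with hα2 | hα2
    · refine (mul_le_of_le_one_left' (ENNReal.ofReal_le_one.2 hε)).trans
        ((h.setLIntegral_Iio_rpow_le_of_le hB (by linarith) hx.le (by linarith)).trans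
          (ENNReal.ofReal_le_ofReal ?_))
      exact mul_le_mul hBC (hpow hx hxx₀ (by linarith [hpα hα2])) (by positivity) (by linarith)
    · refine (h.mul_setLIntegral_rpow_one_sub_le hK hα ⟨hα.trans hαs, hs.le⟩ hc (hlow hα2) hx₀0 hθ
        hθm hB0 hB hx (by linarith)).trans (ENNReal.ofReal_le_ofReal ?_)
      rw [mul_div_right_comm]
      exact mul_le_mul (by linarith) (hpow hx hxx₀ hp) (by positivity) (by linarith)
  · refine (h.lintegral_rpow_neg_le hK hα hx₀0).trans ?_
    refine (add_le_add_left (h.setLIntegral_Iio_rpow_le_of_le hB (by linarith) hx₀0.le le_rfl)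
      _).trans ?_
    rw [← ENNReal.ofReal_add (by positivity) hneg]
    refine ENNReal.ofReal_le_ofReal ?_
    have hB1 : B * x₀ ^ (-α + s) ≤ B :=
      mul_le_of_le_one_right hB0 (rpow_le_one hx₀0.le hx₀1 (by linarith))
    linarith

end Tame

lemma exists_isTameAtZero {α c : ℝ} (hα : α ∈ Ioo (0 : ℝ) 1) (hc : 0 < c) :
    ∃ θ p C x₀ : ℝ, 1 + α < p ∧ p ≤ 1 + 2 * α ∧ p < 2 * θ ∧ 0 < C ∧ x₀ ∈ Ioc (0 : ℝ) 1 ∧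
      ∃ ε₀ ∈ Ioc (0 : ℝ) 1, ∀ ε K m, SFinite m → ε < ε₀ → IsNearConstant α ε K →
        (1 / 2 ≤ α → ∀ y z, 0 < y → 0 < z → ε * c * (z / y) ^ α ≤ K y z) → IsWeakProfile K m →
        ENNReal.ofReal θ ≤ m univ ∧ IsTameAtZero α ε p C x₀ m := by
  obtain ⟨s, p, hαs, hs, hαp, hps, hpα, hpα2⟩ := exists_decay_exponents hα
  obtain ⟨hα0, hα1⟩ := hα
  obtain ⟨θ, hsθ, hθ⟩ := exists_between (by linarith : (1 + s) / 2 < 1)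
  have hθ0 : 0 < θ := by linarith
  obtain ⟨ε₀, hε₀, x₀, hx₀, hmass⟩ :=
    IsWeakProfile.exists_ofReal_le_measure_Ioi ⟨hα0.le, hα1⟩ hθ0.le hθ
  have hx₀0 := hx₀.1
  have hgap : 0 < 2 * θ - (1 + s) := by linarith
  let B := 2 * θ * x₀ ^ (-s) / (2 * θ - (1 + s))
  refine ⟨θ, p, B + x₀ ^ (-α) + 8 * B / (θ * (c * x₀ ^ α)), x₀ / 2, hαp, hpα, by linarith,
    by positivity, ⟨by linarith, by linarith [hx₀.2]⟩, min ε₀ 1,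
    ⟨lt_min hε₀ one_pos, min_le_right _ _⟩, fun ε K m hm hε hK hlow h => ?_⟩
  obtain ⟨hεε₀, hε1⟩ := lt_min_iff.1 hε
  have hθm := hmass ε K m hm hεε₀ hK h
  exact ⟨hθm.trans (measure_mono (subset_univ _)),
    h.isTameAtZero hK hα0.le hαs hs hps hpα2 hε1.le hc hlow hx₀ hθ0 hθm (by positivity)
      (h.setLIntegral_Iio_rpow_neg_le hK (by linarith) (by linarith) hx₀0 hθm)⟩

section Moments

/-- Functions on `(0, ∞)` all of whose moments of order between `a` and `b` are absolutely
convergent. -/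
def HasMoments (a b : ℝ) (f : ℝ → ℝ) : Prop :=
  ∀ r ∈ Icc a b, Integrable (fun x => x ^ r * f x) posVolume

variable {a b r : ℝ} {f g : ℝ → ℝ}

lemma HasMoments.sub (hf : HasMoments a b f) (hg : HasMoments a b g) :
    HasMoments a b fun x => f x - g x := fun r hr => by
  simpa only [mul_sub] using! (hf r hr).sub (hg r hr)

lemma HasMoments.abs (hf : HasMoments a b f) (hr : r ∈ Icc a b) :
    Integrable (fun x => x ^ r * |f x|) posVolume := by
  refine (hf r hr).abs.congr ?_
  filter_upwards [ae_posVolume_pos] with x hx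
  rw [abs_mul, abs_of_pos (rpow_pos_of_pos hx r)]

lemma rpow_le_rpow_add_rpow {x : ℝ} (hx : 0 < x) (hr : r ∈ Icc a b) : x ^ r ≤ x ^ a + x ^ b := by
  have ha : 0 < x ^ a := rpow_pos_of_pos hx a
  have hb : 0 < x ^ b := rpow_pos_of_pos hx b
  rcases le_total x 1 with h | h
  · linarith [rpow_le_rpow_of_exponent_ge hx h hr.1]
  · linarith [rpow_le_rpow_of_exponent_le h hr.2]

lemma weight_nonneg (a b : ℝ) {x : ℝ} (hx : 0 < x) : 0 ≤ weight a b x := by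
  unfold weight
  split_ifs <;> positivity

lemma weight_le_rpow_add_rpow (a b : ℝ) {x : ℝ} (hx : 0 < x) : weight a b x ≤ x ^ a + x ^ b := by
  have ha : 0 < x ^ a := rpow_pos_of_pos hx a
  have hb : 0 < x ^ b := rpow_pos_of_pos hx b
  unfold weight
  split_ifs <;> linarith

lemma rpow_le_weight {x : ℝ} (hx : 0 < x) (hr : r ∈ Icc a b) : x ^ r ≤ weight a b x := by
  unfold weight
  split_ifs with h
  · exact rpow_le_rpow_of_exponent_ge hx h hr.1
  · exact rpow_le_rpow_of_exponent_le (not_le.1 h).le hr.2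

@[fun_prop]
lemma measurable_weight (a b : ℝ) : Measurable (weight a b) :=
  Measurable.ite measurableSet_Iic (by fun_prop) (by fun_prop)

lemma Xnorm_nonneg (a b : ℝ) (g : ℝ → ℝ) : 0 ≤ Xnorm a b g :=
  setIntegral_nonneg measurableSet_Ioi fun _ hx => mul_nonneg (abs_nonneg _) (weight_nonneg a b hx)

lemma MemX.integrable (hg : MemX a b g) :
    Integrable (fun x => |g x| * weight a b x) posVolume := by
  refine (Integrable.abs hg).congr ?_
  filter_upwards [ae_posVolume_pos] with x hx
  rw [abs_mul, abs_of_nonneg (weight_nonneg a b hx)]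

lemma HasMoments.aestronglyMeasurable (hf : HasMoments a b f) (hab : a ≤ b) :
    AEStronglyMeasurable f posVolume := by
  have hmeas : AEStronglyMeasurable (fun x => x ^ (-a) * (x ^ a * f x)) posVolume :=
    (by fun_prop : Measurable fun x : ℝ => x ^ (-a)).aestronglyMeasurable.mul
      (hf a ⟨le_rfl, hab⟩).aestronglyMeasurable
  refine hmeas.congr ?_
  filter_upwards [ae_posVolume_pos] with x hx
  rw [← mul_assoc, ← rpow_add hx, neg_add_cancel, rpow_zero, one_mul]

lemma HasMoments.memX (hf : HasMoments a b f) (hr : r ∈ Icc a b) : MemX a r f := by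
  have hab : a ≤ b := hr.1.trans hr.2
  have hint := (hf.abs ⟨le_rfl, hab⟩).add (hf.abs hr)
  refine hint.mono' ((hf.aestronglyMeasurable hab).mul
    (measurable_weight a r).aestronglyMeasurable) ?_
  filter_upwards [ae_posVolume_pos] with x hx
  simp only [Pi.add_apply, norm_mul, norm_eq_abs, abs_of_nonneg (weight_nonneg a r hx)]
  rw [mul_comm, ← add_mul]
  gcongr
  exact weight_le_rpow_add_rpow a r hx

end Moments

section ProfileMoments

variable {α ε p C x₀ : ℝ} {K : ℝ → ℝ → ℝ} {φ : ℝ → ℝ}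

lemma setIntegral_mul_eq_toReal (hφ : Measurable φ) (hφ0 : ∀ x, 0 ≤ φ x) {f : ℝ → ℝ}
    (hf : Measurable f) (hf0 : ∀ x, 0 < x → 0 ≤ f x) {s : Set ℝ} (hs : MeasurableSet s) :
    ∫ x in s, f x * φ x ∂posVolume =
      (∫⁻ x in s, ENNReal.ofReal (f x) ∂sizeMeasure φ).toReal := by
  rw [sizeMeasure, restrict_withDensity hs, lintegral_withDensity_eq_lintegral_mul _
    hφ.ennreal_ofReal hf.ennreal_ofReal,
    integral_eq_lintegral_of_nonneg_ae ?_ (by fun_prop : Measurable _).aestronglyMeasurable]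
  · congr 1
    refine lintegral_congr fun x => ?_
    rw [Pi.mul_apply, mul_comm, ENNReal.ofReal_mul (hφ0 x)]
  · filter_upwards [ae_restrict_of_ae ae_posVolume_pos] with x hx
    exact mul_nonneg (hf0 x hx) (hφ0 x)

lemma integrable_mul_of_lintegral_sizeMeasure_lt_top (hφ : Measurable φ) (hφ0 : ∀ x, 0 ≤ φ x)
    {f : ℝ → ℝ} (hf : Measurable f) (hf0 : ∀ x, 0 < x → 0 ≤ f x)
    (hfin : ∫⁻ x, ENNReal.ofReal (f x) ∂sizeMeasure φ < ∞) :
    Integrable (fun x => f x * φ x) posVolume := by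
  refine ⟨(hf.mul hφ).aestronglyMeasurable, ?_⟩
  rw [hasFiniteIntegral_iff_ofReal]
  · rw [lintegral_sizeMeasure hφ] at hfin
    refine lt_of_eq_of_lt (lintegral_congr fun x => ?_) hfin
    rw [mul_comm, ENNReal.ofReal_mul (hφ0 x)]
  · filter_upwards [ae_posVolume_pos] with x hx
    exact mul_nonneg (hf0 x hx) (hφ0 x)

lemma IsRegularProfile.hasMoments (h : IsRegularProfile K φ) (hK : IsNearConstant α ε K)
    (hα : α ∈ Ico (0 : ℝ) 1)
    (ht : IsTameAtZero α ε p C x₀ (sizeMeasure φ)) : HasMoments (-α) 2 φ := fun r hr => by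
  refine integrable_mul_of_lintegral_sizeMeasure_lt_top h.measurable h.nonneg (by fun_prop)
    (fun x hx => (rpow_pos_of_pos hx r).le) ?_
  calc ∫⁻ x, ENNReal.ofReal (x ^ r) ∂sizeMeasure φ
      ≤ ∫⁻ x, (ENNReal.ofReal (x ^ (-α)) + ENNReal.ofReal (x ^ (2 : ℝ))) ∂sizeMeasure φ := by
        refine lintegral_mono_ae ((ae_sizeMeasure_pos φ).mono fun x hx => ?_)
        rw [← ENNReal.ofReal_add (by positivity) (by positivity)]
        exact ENNReal.ofReal_le_ofReal (rpow_le_rpow_add_rpow hx hr)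
    _ = ∫⁻ x, ENNReal.ofReal (x ^ (-α)) ∂sizeMeasure φ +
          ∫⁻ x, ENNReal.ofReal (x ^ (2 : ℝ)) ∂sizeMeasure φ := lintegral_add_left (by fun_prop) _
    _ < ∞ := ENNReal.add_lt_top.2 ⟨ht.neg_moment_le.trans_lt ENNReal.ofReal_lt_top,
        h.isWeakProfile.lintegral_rpow_lt_top hK hα ⟨zero_le_two, le_rfl⟩⟩

end ProfileMoments

section Bilinear

/-- The density of the mass transported when sizes distributed like `f` meet sizes distributed
like `g`; the flux of a profile is quadratic, and this is its polarisation. -/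
def coagDensity (K : ℝ → ℝ → ℝ) (f g : ℝ → ℝ) (p : ℝ × ℝ) : ℝ := p.1 * K p.1 p.2 * f p.1 * g p.2

/-- The rate at which a particle of size `y` meets particles distributed like `g`. -/
noncomputable def collisionRate (K : ℝ → ℝ → ℝ) (g : ℝ → ℝ) (y : ℝ) : ℝ :=
  ∫ z, K y z * g z ∂posVolume

variable {α ε : ℝ} {K : ℝ → ℝ → ℝ} {f g φ : ℝ → ℝ}

lemma IsNearConstant.mul_kernel_le (hK : IsNearConstant α ε K) {y z : ℝ} (hy : 0 < y)
    (hz : 0 < z) :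
    y * K y z ≤ 2 * y + ε * (y ^ (1 + α) * z ^ (-α) + y ^ (1 - α) * z ^ α) := by
  calc y * K y z ≤ y * (2 + ε * ((y / z) ^ α + (z / y) ^ α)) := by gcongr; exact hK.le y z hy hz
    _ = 2 * y + ε * (y ^ (1 + α) * z ^ (-α) + y ^ (1 - α) * z ^ α) := by
        rw [div_rpow hy.le hz.le, div_rpow hz.le hy.le, rpow_add hy, rpow_sub hy, rpow_neg hz.le,
          rpow_one]
        ring

lemma IsNearConstant.abs_coagDensity (hK : IsNearConstant α ε K) {p : ℝ × ℝ} (hp : 0 < p.1) :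
    |coagDensity K f g p| = p.1 * K p.1 p.2 * (|f p.1| * |g p.2|) := by
  have hK0 : 0 ≤ K p.1 p.2 := zero_le_two.trans (hK.two_le _ _)
  rw [coagDensity, mul_assoc, abs_mul, abs_mul (f p.1), abs_of_nonneg (by positivity)]

lemma integrable_coagDensity (hK : IsNearConstant α ε K) (hα : α ∈ Icc (0 : ℝ) 1)
    (hf : HasMoments (-α) 2 f) (hg : HasMoments (-α) 2 g) :
    Integrable (coagDensity K f g) (posVolume.prod posVolume) := by
  obtain ⟨hα0, hα1⟩ := hα
  have hα2 : -α ≤ 2 := by linarith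
  have habs {h : ℝ → ℝ} (hh : HasMoments (-α) 2 h) (r : ℝ) (hr : -α ≤ r) (hr2 : r ≤ 2) :
      Integrable (fun x => x ^ r * |h x|) posVolume := hh.abs ⟨hr, hr2⟩
  have hbound := (((habs hf 1 (by linarith) one_le_two).mul_prod
      (habs hg 0 (by linarith) zero_le_two)).const_mul 2).add
    ((((habs hf (1 + α) (by linarith) (by linarith)).mul_prod (habs hg (-α) le_rfl hα2)).add
      ((habs hf (1 - α) (by linarith) (by linarith)).mul_prod
        (habs hg α (by linarith) (by linarith)))).const_mul ε)
  have hmeas : AEStronglyMeasurable (coagDensity K f g) (posVolume.prod posVolume) :=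
    ((measurable_fst.mul hK.measurable).aestronglyMeasurable.mul
      (hf.aestronglyMeasurable hα2).comp_fst).mul (hg.aestronglyMeasurable hα2).comp_snd
  refine hbound.mono' hmeas ?_
  filter_upwards [ae_prod_pos ae_posVolume_pos] with p hp
  rw [norm_eq_abs, hK.abs_coagDensity hp.1]
  refine (mul_le_mul_of_nonneg_right (hK.mul_kernel_le hp.1 hp.2) (by positivity)).trans_eq ?_
  simp only [Pi.add_apply, rpow_one, rpow_zero]
  ring

lemma IsRegularProfile.sq_mul_ae_eq (h : IsRegularProfile K φ) (hK : IsNearConstant α ε K) :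
    ∀ᵐ x ∂posVolume,
      x ^ 2 * φ x = ∫ p in strip x, coagDensity K φ φ p ∂posVolume.prod posVolume := by
  have hKm := hK.measurable
  have hφm := h.measurable
  filter_upwards [h.flux] with x hx
  have hx0 : 0 ≤ x ^ 2 * φ x := mul_nonneg (sq_nonneg x) (h.nonneg x)
  rw [integral_eq_lintegral_of_nonneg_ae, ← ENNReal.toReal_ofReal hx0, hx,
    fluxMeasure_sizeMeasure hK h.measurable h.nonneg, withDensity_apply _ (measurableSet_strip x)]
  · rfl
  · filter_upwards [ae_restrict_of_ae (ae_prod_pos ae_posVolume_pos)] with p hp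
    exact mul_nonneg (mul_nonneg (mul_nonneg hp.1.le (zero_le_two.trans (hK.two_le _ _)))
      (h.nonneg _)) (h.nonneg _)
  · unfold coagDensity
    exact (by fun_prop : Measurable _).aestronglyMeasurable

lemma integral_coagDensity_snd (K : ℝ → ℝ → ℝ) (f g : ℝ → ℝ) (y : ℝ) :
    ∫ z, coagDensity K f g (y, z) ∂posVolume = y * collisionRate K g y * f y := by
  simp only [coagDensity, collisionRate, ← integral_const_mul, ← integral_mul_const]
  congr 1 with z
  ring

lemma setIntegral_strip_coagDensity_eq_sub (hint : Integrable (coagDensity K f g)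
    (posVolume.prod posVolume)) (x : ℝ) :
    ∫ p in strip x, coagDensity K f g p ∂posVolume.prod posVolume =
      ∫ y in Iio x, y * collisionRate K g y * f y ∂posVolume -
        ∫ p in (Iio x ×ˢ univ) \ strip x, coagDensity K f g p ∂posVolume.prod posVolume := by
  have hsub : strip x ⊆ Iio x ×ˢ univ := fun p hp => ⟨hp.1, mem_univ _⟩
  rw [setIntegral_sdiff (measurableSet_strip x) hint.integrableOn hsub,
    setIntegral_prod _ hint.integrableOn, Measure.restrict_univ]
  simp only [integral_coagDensity_snd, sub_sub_cancel]

lemma integrable_mul_collisionRate_mul (hint : Integrable (coagDensity K f g)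
    (posVolume.prod posVolume)) :
    Integrable (fun y => y * collisionRate K g y * f y) posVolume :=
  hint.integral_prod_left.congr (ae_of_all _ (integral_coagDensity_snd K f g))

lemma abs_setIntegral_prod_le {F : ℝ × ℝ → ℝ} {D : Set (ℝ × ℝ)} (hD : MeasurableSet D)
    {u v : ℝ → ℝ} (hu : Integrable u posVolume) (hv : Integrable v posVolume)
    (hu0 : ∀ x, 0 < x → 0 ≤ u x) (hv0 : ∀ x, 0 < x → 0 ≤ v x)
    (hF : ∀ p ∈ D, 0 < p.1 → 0 < p.2 → |F p| ≤ u p.1 * v p.2) :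
    |∫ p in D, F p ∂posVolume.prod posVolume| ≤ (∫ x, u x ∂posVolume) * ∫ x, v x ∂posVolume := by
  rw [← integral_prod_mul, ← integral_indicator hD, ← norm_eq_abs]
  refine norm_integral_le_of_norm_le (hu.mul_prod hv) ?_
  filter_upwards [ae_prod_pos ae_posVolume_pos] with p hp
  by_cases hpD : p ∈ D
  · simpa [hpD] using hF p hpD hp.1 hp.2
  · simpa [hpD] using mul_nonneg (hu0 _ hp.1) (hv0 _ hp.2)

end Bilinear

section Difference

variable {α β ε p C x₀ : ℝ} {K : ℝ → ℝ → ℝ} {f g φ φ₁ φ₂ : ℝ → ℝ}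

lemma IsNearConstant.mul_kernel_le_of_le (hK : IsNearConstant α ε K) (hα : 0 ≤ α) (hε : ε ≤ 1)
    {x y z : ℝ} (hy : 0 < y) (hz : 0 < z) (hyx : y ≤ x) (hzx : z ≤ x) :
    y * K y z ≤ 4 * x ^ (1 + 2 * α) * y ^ (-α) * z ^ (-α) := by
  have hx : 0 < x := hy.trans_le hyx
  have hxα : x ^ (1 + 2 * α) = x * x ^ α * x ^ α := by
    rw [two_mul, ← add_assoc, rpow_add hx, rpow_add hx, rpow_one]
  have hyα : y ^ α ≤ x ^ α := by gcongr
  have hzα : z ^ α ≤ x ^ α := by gcongr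
  calc y * K y z ≤ 2 * y + ε * (y ^ (1 + α) * z ^ (-α) + y ^ (1 - α) * z ^ α) :=
        hK.mul_kernel_le hy hz
    _ ≤ 2 * y + 1 * (y ^ (1 + α) * z ^ (-α) + y ^ (1 - α) * z ^ α) := by gcongr
    _ = (2 * (y * y ^ α * z ^ α) + (y * y ^ α * y ^ α + y * z ^ α * z ^ α)) *
          y ^ (-α) * z ^ (-α) := by
        rw [rpow_neg hy.le, rpow_neg hz.le, rpow_add hy, rpow_sub hy, rpow_one]
        field_simp
    _ ≤ (2 * (x * x ^ α * x ^ α) + (x * x ^ α * x ^ α + x * x ^ α * x ^ α)) *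
          y ^ (-α) * z ^ (-α) := by gcongr
    _ = 4 * x ^ (1 + 2 * α) * y ^ (-α) * z ^ (-α) := by rw [hxα]; ring

lemma IsNearConstant.mul_kernel_le_mul_weight (hK : IsNearConstant α ε K) (hα : 0 ≤ α)
    (hβ : α ≤ β) (hε : ε ≤ 1) {y z : ℝ} (hy : 0 < y) (hy1 : y ≤ 1) (hz : 0 < z) :
    y * K y z ≤ (3 * y + ε * y ^ (1 - α)) * weight (-α) β z := by
  have hε0 := hK.nonneg
  have := weight_nonneg (-α) β hz
  have hw (r : ℝ) (hr : -α ≤ r) (hr' : r ≤ α) : z ^ r ≤ weight (-α) β z :=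
    rpow_le_weight hz ⟨hr, hr'.trans hβ⟩
  have hone : 1 ≤ weight (-α) β z := by simpa using hw 0 (by linarith) hα
  have hy_rpow : y ^ (1 + α) ≤ y :=
    (rpow_le_rpow_of_exponent_ge hy hy1 (by linarith)).trans_eq (rpow_one y)
  calc y * K y z ≤ 2 * y + ε * (y ^ (1 + α) * z ^ (-α) + y ^ (1 - α) * z ^ α) :=
        hK.mul_kernel_le hy hz
    _ = 2 * y * 1 + (ε * (y ^ (1 + α) * z ^ (-α)) + ε * y ^ (1 - α) * z ^ α) := by ring
    _ ≤ 2 * y * weight (-α) β z + (1 * (y * weight (-α) β z) +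
          ε * y ^ (1 - α) * weight (-α) β z) := by
        gcongr
        exacts [hw _ le_rfl (by linarith), hw _ (by linarith) le_rfl]
    _ = (3 * y + ε * y ^ (1 - α)) * weight (-α) β z := by ring

lemma abs_setIntegral_diff_strip_coagDensity_le (hK : IsNearConstant α ε K) (hα : 0 ≤ α)
    (hε : ε ≤ 1) (hf : HasMoments (-α) 2 f) (hg : HasMoments (-α) 2 g) {x : ℝ} (hx : 0 ≤ x) :
    |∫ q in (Iio x ×ˢ univ) \ strip x, coagDensity K f g q ∂posVolume.prod posVolume| ≤
      4 * x ^ (1 + 2 * α) * (∫ y, y ^ (-α) * |f y| ∂posVolume) *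
        ∫ z, z ^ (-α) * |g z| ∂posVolume := by
  have hα2 : -α ∈ Icc (-α) 2 := ⟨le_rfl, by linarith⟩
  rw [← integral_const_mul (4 * x ^ (1 + 2 * α))]
  refine abs_setIntegral_prod_le ((measurableSet_Iio.prod .univ).diff (measurableSet_strip x))
    ((hf.abs hα2).const_mul (4 * x ^ (1 + 2 * α))) (hg.abs hα2) (fun y hy => by positivity)
    (fun z hz => by positivity) fun q hq hq1 hq2 => ?_
  have hqx : q.1 + q.2 ≤ x := not_lt.1 fun hlt => hq.2 ⟨hq.1.1, hlt⟩
  rw [hK.abs_coagDensity hq1]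
  calc q.1 * K q.1 q.2 * (|f q.1| * |g q.2|)
      ≤ 4 * x ^ (1 + 2 * α) * q.1 ^ (-α) * q.2 ^ (-α) * (|f q.1| * |g q.2|) :=
        mul_le_mul_of_nonneg_right
          (hK.mul_kernel_le_of_le hα hε hq1 hq2 (by linarith) (by linarith)) (by positivity)
    _ = 4 * x ^ (1 + 2 * α) * (q.1 ^ (-α) * |f q.1|) * (q.2 ^ (-α) * |g q.2|) := by ring

lemma abs_setIntegral_strip_coagDensity_le (hK : IsNearConstant α ε K) (hα : 0 ≤ α) (hβ : α ≤ β)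
    (hε : ε ≤ 1) (hf : HasMoments (-α) 2 f) (hg : MemX (-α) β g) {x : ℝ} (hx1 : x ≤ 1) :
    |∫ q in strip x, coagDensity K f g q ∂posVolume.prod posVolume| ≤
      (∫ y in Iio x, (3 * y + ε * y ^ (1 - α)) * |f y| ∂posVolume) * Xnorm (-α) β g := by
  have hε0 := hK.nonneg
  have hint : Integrable (fun y => (3 * y + ε * y ^ (1 - α)) * |f y|) posVolume := by
    have h1 := hf.abs (r := 1) ⟨by linarith, one_le_two⟩
    refine ((h1.const_mul 3).add
      ((hf.abs (r := 1 - α) ⟨by linarith, by linarith⟩).const_mul ε)).congr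
      (ae_of_all _ fun y => ?_)
    simp only [Pi.add_apply, rpow_one]
    ring
  rw [← integral_indicator measurableSet_Iio, Xnorm]
  refine abs_setIntegral_prod_le (measurableSet_strip x) (hint.indicator measurableSet_Iio)
    hg.integrable (fun y hy => indicator_apply_nonneg fun _ => by positivity)
    (fun z hz => mul_nonneg (abs_nonneg _) (weight_nonneg _ _ hz)) fun q hq hq1 hq2 => ?_
  rw [hK.abs_coagDensity hq1, indicator_of_mem (mem_Iio.2 hq.1)]
  calc q.1 * K q.1 q.2 * (|f q.1| * |g q.2|)
      ≤ (3 * q.1 + ε * q.1 ^ (1 - α)) * weight (-α) β q.2 * (|f q.1| * |g q.2|) :=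
        mul_le_mul_of_nonneg_right
          (hK.mul_kernel_le_mul_weight hα hβ hε hq1 (hq.1.le.trans hx1) hq2) (by positivity)
    _ = (3 * q.1 + ε * q.1 ^ (1 - α)) * |f q.1| * (|g q.2| * weight (-α) β q.2) := by ring

lemma setIntegral_mul_le_of_setLIntegral_le (hφ : Measurable φ) (hφ0 : ∀ x, 0 ≤ φ x)
    (hf : Measurable f) (hf0 : ∀ x, 0 < x → 0 ≤ f x) {s : Set ℝ} (hs : MeasurableSet s) {c : ℝ}
    (hc : 0 ≤ c) (h : ∫⁻ x in s, ENNReal.ofReal (f x) ∂sizeMeasure φ ≤ ENNReal.ofReal c) :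
    ∫ x in s, f x * φ x ∂posVolume ≤ c := by
  rw [setIntegral_mul_eq_toReal hφ hφ0 hf hf0 hs]
  exact ENNReal.toReal_le_of_le_ofReal hc h

lemma IsTameAtZero.setIntegral_le (ht : IsTameAtZero α ε p C x₀ (sizeMeasure φ)) (hφ : Measurable φ)
    (hφ0 : ∀ x, 0 ≤ φ x) (hε : 0 ≤ ε) (hC : 0 ≤ C) {x : ℝ} (hx : 0 < x) (hxx₀ : x ≤ x₀) :
    ∫ y in Iio x, (3 * y + ε * y ^ (1 - α)) * φ y ∂posVolume ≤ 4 * C * x ^ p := by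
  refine setIntegral_mul_le_of_setLIntegral_le hφ hφ0 (by fun_prop) (fun y hy => by positivity)
    measurableSet_Iio (by positivity) ?_
  calc ∫⁻ y in Iio x, ENNReal.ofReal (3 * y + ε * y ^ (1 - α)) ∂sizeMeasure φ
      = ∫⁻ y in Iio x, (ENNReal.ofReal 3 * ENNReal.ofReal y +
          ENNReal.ofReal ε * ENNReal.ofReal (y ^ (1 - α))) ∂sizeMeasure φ := by
        refine lintegral_congr_ae ((ae_restrict_of_ae (ae_sizeMeasure_pos φ)).mono fun y hy => ?_)
        dsimp only
        rw [ENNReal.ofReal_add (by positivity) (by positivity), ENNReal.ofReal_mul (by norm_num),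
          ENNReal.ofReal_mul hε]
    _ = ENNReal.ofReal 3 * ∫⁻ y in Iio x, ENNReal.ofReal y ∂sizeMeasure φ +
          ENNReal.ofReal ε * ∫⁻ y in Iio x, ENNReal.ofReal (y ^ (1 - α)) ∂sizeMeasure φ := by
        rw [lintegral_add_left (by fun_prop), lintegral_const_mul _ (by fun_prop),
          lintegral_const_mul _ (by fun_prop)]
    _ ≤ ENNReal.ofReal 3 * ENNReal.ofReal (C * x ^ p) + ENNReal.ofReal (C * x ^ p) := by
        gcongr
        exacts [ht.mass_le x hx hxx₀, ht.rpow_le x hx hxx₀]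
    _ = ENNReal.ofReal (4 * C * x ^ p) := by
        rw [← ENNReal.ofReal_mul (by norm_num),
          ← ENNReal.ofReal_add (by positivity) (by positivity)]
        ring_nf

lemma IsNearConstant.integrable_kernel_mul (hK : IsNearConstant α ε K) (hα : α ∈ Icc (0 : ℝ) 1)
    (hf : HasMoments (-α) 2 f) {y : ℝ} (hy : 0 < y) :
    Integrable (fun z => K y z * f z) posVolume := by
  obtain ⟨hα0, hα1⟩ := hα
  have hKm : AEStronglyMeasurable (K y) posVolume :=
    (hK.measurable.comp measurable_prodMk_left).aestronglyMeasurable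
  have hint (r : ℝ) (hr : -α ≤ r) (hr2 : r ≤ 2) (c : ℝ) :
      Integrable (fun z => c * (z ^ r * |f z|)) posVolume := (hf.abs ⟨hr, hr2⟩).const_mul c
  refine (((hint 0 (by linarith) (by linarith) 2).add (hint (-α) le_rfl (by linarith)
    (ε * y ^ α))).add (hint α (by linarith) (by linarith) (ε * y ^ (-α)))).mono'
    (hKm.mul (hf.aestronglyMeasurable (by linarith))) ?_
  filter_upwards [ae_posVolume_pos] with z hz
  rw [norm_mul, norm_eq_abs, norm_eq_abs, abs_of_nonneg (zero_le_two.trans (hK.two_le y z))]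
  calc K y z * |f z| ≤ (2 + ε * ((y / z) ^ α + (z / y) ^ α)) * |f z| := by
        gcongr
        exact hK.le y z hy hz
    _ = 2 * (z ^ (0 : ℝ) * |f z|) + ε * y ^ α * (z ^ (-α) * |f z|) +
          ε * y ^ (-α) * (z ^ α * |f z|) := by
        rw [div_rpow hy.le hz.le, div_rpow hz.le hy.le, rpow_neg hy.le, rpow_neg hz.le, rpow_zero]
        ring

lemma IsNearConstant.le_collisionRate (hK : IsNearConstant α ε K) (hα : α ∈ Icc (0 : ℝ) 1)
    (hφ0 : ∀ x, 0 ≤ φ x) (hφm : HasMoments (-α) 2 φ) {θ : ℝ}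
    (hθ : ENNReal.ofReal θ ≤ sizeMeasure φ univ) {y : ℝ} (hy : 0 < y) :
    2 * θ ≤ collisionRate K φ y := by
  have hφ : Integrable φ posVolume := by
    simpa using hφm 0 ⟨by linarith [hα.1], zero_le_two⟩
  have hmass : θ ≤ ∫ z, φ z ∂posVolume := by
    rw [← ENNReal.ofReal_le_ofReal_iff (integral_nonneg hφ0),
      ofReal_integral_eq_lintegral_ofReal hφ (ae_of_all _ hφ0)]
    rwa [sizeMeasure, withDensity_apply _ .univ, setLIntegral_univ] at hθ
  calc 2 * θ ≤ 2 * ∫ z, φ z ∂posVolume := by gcongr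
    _ = ∫ z, 2 * φ z ∂posVolume := (integral_const_mul _ _).symm
    _ ≤ collisionRate K φ y :=
        integral_mono (hφ.const_mul 2) (hK.integrable_kernel_mul hα hφm hy) fun z =>
          mul_le_mul_of_nonneg_right (hK.two_le y z) (hφ0 z)

lemma integral_rpow_mul_abs_le_Xnorm {r : ℝ} (hr : r ∈ Icc (-α) β) (hg : MemX (-α) β g) :
    ∫ x, x ^ r * |g x| ∂posVolume ≤ Xnorm (-α) β g := by
  refine integral_mono_of_nonneg ?_ hg.integrable ?_ <;>
    filter_upwards [ae_posVolume_pos] with x hx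
  · exact mul_nonneg (rpow_nonneg hx.le r) (abs_nonneg _)
  · rw [mul_comm]
    exact mul_le_mul_of_nonneg_left (rpow_le_weight hx hr) (abs_nonneg _)

lemma IsTameAtZero.integral_rpow_neg_le (ht : IsTameAtZero α ε p C x₀ (sizeMeasure φ))
    (hφ : Measurable φ) (hφ0 : ∀ x, 0 ≤ φ x) (hC : 0 ≤ C) :
    ∫ x, x ^ (-α) * φ x ∂posVolume ≤ C := by
  have h := setIntegral_mul_le_of_setLIntegral_le hφ hφ0 (f := fun x => x ^ (-α)) (by fun_prop)
    (fun x hx => rpow_nonneg hx.le _) .univ hC (by simpa using ht.neg_moment_le)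
  simpa using h

lemma IsRegularProfile.sq_mul_sub_sub_integral_ae_eq (h₁ : IsRegularProfile K φ₁)
    (h₂ : IsRegularProfile K φ₂) (hK : IsNearConstant α ε K) (hα : α ∈ Icc (0 : ℝ) 1)
    (hm₁ : HasMoments (-α) 2 φ₁) (hm₂ : HasMoments (-α) 2 φ₂) :
    ∀ᵐ x ∂posVolume,
      x ^ 2 * (φ₁ x - φ₂ x) -
          ∫ y in Iio x, y * collisionRate K φ₁ y * (φ₁ y - φ₂ y) ∂posVolume =
        ∫ q in strip x, coagDensity K φ₂ (fun x => φ₁ x - φ₂ x) q ∂posVolume.prod posVolume -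
          ∫ q in (Iio x ×ˢ univ) \ strip x,
            coagDensity K (fun x => φ₁ x - φ₂ x) φ₁ q ∂posVolume.prod posVolume := by
  set ψ : ℝ → ℝ := fun x => φ₁ x - φ₂ x
  have hmψ : HasMoments (-α) 2 ψ := hm₁.sub hm₂
  have hint {f g : ℝ → ℝ} (hf : HasMoments (-α) 2 f) (hg : HasMoments (-α) 2 g) :
      Integrable (coagDensity K f g) (posVolume.prod posVolume) :=
    integrable_coagDensity hK hα hf hg
  filter_upwards [h₁.sq_mul_ae_eq hK, h₂.sq_mul_ae_eq hK] with x hx₁ hx₂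
  have hpolar : x ^ 2 * ψ x =
      ∫ q in strip x, coagDensity K ψ φ₁ q ∂posVolume.prod posVolume +
        ∫ q in strip x, coagDensity K φ₂ ψ q ∂posVolume.prod posVolume := by
    rw [← integral_add (hint hmψ hm₁).integrableOn (hint hm₂ hmψ).integrableOn, mul_sub, hx₁, hx₂,
      ← integral_sub (hint hm₁ hm₁).integrableOn (hint hm₂ hm₂).integrableOn]
    congr 1 with q
    simp only [coagDensity, ψ]
    ring
  rw [hpolar, setIntegral_strip_coagDensity_eq_sub (hint hmψ hm₁)]
  ring

lemma IsRegularProfile.abs_sq_mul_sub_sub_integral_le (h₁ : IsRegularProfile K φ₁)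
    (h₂ : IsRegularProfile K φ₂) (hK : IsNearConstant α ε K) (hα : α ∈ Ico (0 : ℝ) 1)
    (hβ : β ∈ Icc α 2) (hε : ε ≤ 1) (hpα : p ≤ 1 + 2 * α) (hC : 0 ≤ C) (hx₀ : x₀ ≤ 1)
    (ht₁ : IsTameAtZero α ε p C x₀ (sizeMeasure φ₁))
    (ht₂ : IsTameAtZero α ε p C x₀ (sizeMeasure φ₂)) :
    ∀ᵐ x ∂posVolume, x ≤ x₀ →
      |x ^ 2 * (φ₁ x - φ₂ x) -
          ∫ y in Iio x, y * collisionRate K φ₁ y * (φ₁ y - φ₂ y) ∂posVolume| ≤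
        8 * C * Xnorm (-α) β (fun x => φ₁ x - φ₂ x) * x ^ p := by
  have hα' : α ∈ Icc (0 : ℝ) 1 := Ico_subset_Icc_self hα
  have hm₁ := h₁.hasMoments hK hα ht₁
  have hm₂ := h₂.hasMoments hK hα ht₂
  filter_upwards [h₁.sq_mul_sub_sub_integral_ae_eq h₂ hK hα' hm₁ hm₂, ae_posVolume_pos]
    with x hpolar hx hxx₀
  rw [hpolar]
  set ψ : ℝ → ℝ := fun x => φ₁ x - φ₂ x
  have hmψ : HasMoments (-α) 2 ψ := hm₁.sub hm₂
  have hψX : MemX (-α) β ψ := hmψ.memX ⟨by linarith [hα.1, hβ.1], hβ.2⟩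
  set N := Xnorm (-α) β ψ
  have hN : 0 ≤ N := Xnorm_nonneg _ _ _
  have hnear : |∫ q in strip x, coagDensity K φ₂ ψ q ∂posVolume.prod posVolume| ≤
      4 * C * x ^ p * N := by
    refine (abs_setIntegral_strip_coagDensity_le hK hα'.1 hβ.1 hε hm₂ hψX (hxx₀.trans hx₀)).trans ?_
    simp only [abs_of_nonneg (h₂.nonneg _)]
    gcongr
    exact ht₂.setIntegral_le h₂.measurable h₂.nonneg hK.nonneg hC hx hxx₀
  have hcorner : |∫ q in (Iio x ×ˢ univ) \ strip x, coagDensity K ψ φ₁ q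
      ∂posVolume.prod posVolume| ≤ 4 * x ^ p * N * C := by
    refine (abs_setIntegral_diff_strip_coagDensity_le hK hα'.1 hε hmψ hm₁ hx.le).trans ?_
    simp only [abs_of_nonneg (h₁.nonneg _)]
    have hψ : ∫ y, y ^ (-α) * |ψ y| ∂posVolume ≤ N :=
      integral_rpow_mul_abs_le_Xnorm ⟨le_rfl, by linarith [hα.1, hβ.1]⟩ hψX
    refine mul_le_mul (mul_le_mul ?_ hψ ?_ (by positivity))
      (ht₁.integral_rpow_neg_le h₁.measurable h₁.nonneg hC) ?_ (by positivity)
    · gcongr 4 * ?_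
      exact rpow_le_rpow_of_exponent_ge hx (hxx₀.trans hx₀) hpα
    · exact setIntegral_nonneg measurableSet_Ioi fun y hy =>
        mul_nonneg (rpow_nonneg (le_of_lt hy) _) (abs_nonneg _)
    · exact setIntegral_nonneg measurableSet_Ioi fun y hy =>
        mul_nonneg (rpow_nonneg (le_of_lt hy) _) (h₁.nonneg y)
  calc _ ≤ 4 * C * x ^ p * N + 4 * x ^ p * N * C := (abs_sub _ _).trans (add_le_add hnear hcorner)
    _ = 8 * C * N * x ^ p := by ring

end Difference

section Gronwall

variable {a p c δ : ℝ} {g ψ A h : ℝ → ℝ}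

lemma nonneg_of_forall_integral_neg_imp_nonpos {x₁ x₂ : ℝ} (hx : x₁ ≤ x₂)
    (hh : IntervalIntegrable h volume x₁ x₂) (hend : 0 ≤ c + ∫ t in x₁..x₂, h t)
    (hneg : ∀ᵐ t, t ∈ Ioo x₁ x₂ → c + ∫ s in x₁..t, h s < 0 → h t ≤ 0) : 0 ≤ c := by
  by_contra! hc
  have hcont : ContinuousOn (fun t => c + ∫ s in x₁..t, h s) (Icc x₁ x₂) := by
    rw [← uIcc_of_le hx]
    exact continuousOn_const.add
      (intervalIntegral.continuousOn_primitive_interval' hh left_mem_uIcc)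
  have hclosed := hcont.preimage_isClosed_of_isClosed isClosed_Icc (isClosed_Ici (a := 0))
  obtain ⟨t, ⟨ht, ht0⟩, hleast⟩ := (isCompact_Icc.of_isClosed_subset hclosed
    inter_subset_left).exists_isLeast ⟨x₂, ⟨hx, le_rfl⟩, hend⟩
  have hle : ∫ s in x₁..t, h s ≤ 0 := by
    rw [intervalIntegral.integral_of_le ht.1, ← restrict_Ioo_eq_restrict_Ioc]
    refine setIntegral_nonpos_ae measurableSet_Ioo (hneg.mono fun s hs hst => ?_)
    refine hs ⟨hst.1, hst.2.trans_le ht.2⟩ (not_le.1 fun h0 => ?_)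
    exact hst.2.not_ge (hleast ⟨⟨hst.1.le, hst.2.le.trans ht.2⟩, h0⟩)
  have ht0' : 0 ≤ c + ∫ s in x₁..t, h s := ht0
  linarith

lemma setIntegral_Iio_add_intervalIntegral (hg : Integrable g posVolume) {x₁ x₂ : ℝ}
    (hx₁ : 0 < x₁) (hx : x₁ ≤ x₂) :
    ∫ y in Iio x₁, g y ∂posVolume + ∫ y in x₁..x₂, g y = ∫ y in Iio x₂, g y ∂posVolume := by
  have hIco : posVolume.restrict (Ico x₁ x₂) = volume.restrict (Ioc x₁ x₂) := by
    rw [Measure.restrict_restrict measurableSet_Ico,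
      inter_eq_left.2 fun y hy => mem_Ioi.2 (hx₁.trans_le hy.1), restrict_Ico_eq_restrict_Ioc]
  have hdisj : Disjoint (Iio x₁) (Ico x₁ x₂) := disjoint_left.2 fun y hy hy' => hy.not_ge hy'.1
  rw [intervalIntegral.integral_of_le hx, ← hIco,
    ← setIntegral_union hdisj measurableSet_Ico hg.integrableOn hg.integrableOn,
    Iio_union_Ico_eq_Iio hx]

lemma setIntegral_Iio_le_mul_rpow (hp : 0 < p) (hpa : p < a) (hc : 0 ≤ c)
    (hg : Integrable g posVolume) {x₁ : ℝ}
    (hstep : ∀ᵐ x ∂posVolume, x < x₁ → c * x ^ p ≤ ∫ y in Iio x, g y ∂posVolume →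
      a * (∫ y in Iio x, g y ∂posVolume - c * x ^ p) ≤ x * g x)
    (hend : ∫ y in Iio x₁, g y ∂posVolume ≤ a / (a - p) * c * x₁ ^ p) {x : ℝ} (hx : 0 < x)
    (hxx₁ : x ≤ x₁) : ∫ y in Iio x, g y ∂posVolume ≤ a / (a - p) * c * x ^ p := by
  have hap : 0 < a - p := sub_pos.2 hpa
  set κ := a / (a - p)
  have hκ : a * (κ - 1) = p * κ := by simp only [κ]; field_simp; ring
  have hκ1 : 1 ≤ κ := (one_le_div hap).2 (by linarith)
  have hgi {t : ℝ} (ht : x ≤ t) : IntervalIntegrable g volume x t := by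
    rw [intervalIntegrable_iff_integrableOn_Ioc_of_le ht]
    exact IntegrableOn.mono_set hg fun y hy => hx.trans hy.1
  have hri {t : ℝ} : IntervalIntegrable (fun s => κ * c * p * s ^ (p - 1)) volume x t :=
    (intervalIntegral.intervalIntegrable_rpow' (by linarith)).const_mul _
  have hprim {t : ℝ} (ht : x ≤ t) :
      κ * c * x ^ p - ∫ y in Iio x, g y ∂posVolume +
        ∫ s in x..t, (κ * c * p * s ^ (p - 1) - g s) =
          κ * c * t ^ p - ∫ y in Iio t, g y ∂posVolume := by
    rw [intervalIntegral.integral_sub hri (hgi ht), intervalIntegral.integral_const_mul,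
      integral_rpow (Or.inl (by linarith)), ← setIntegral_Iio_add_intervalIntegral hg hx ht,
      sub_add_cancel]
    field_simp
    ring
  refine sub_nonneg.1 (nonneg_of_forall_integral_neg_imp_nonpos hxx₁ (hri.sub (hgi hxx₁)) ?_ ?_)
  · rw [hprim hxx₁]
    exact sub_nonneg.2 hend
  have hstep' := (ae_restrict_iff' measurableSet_Ioi).1 hstep
  filter_upwards [hstep'] with t ht htx hneg
  have ht0 : 0 < t := hx.trans htx.1
  rw [hprim htx.1.le, sub_neg] at hneg
  have htp : 0 ≤ c * t ^ p := by positivity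
  have hlow := ht ht0 htx.2 (by nlinarith)
  refine sub_nonpos.2 (le_of_mul_le_mul_left ?_ ht0)
  calc t * (κ * c * p * t ^ (p - 1)) = p * κ * (c * t ^ p) := by
        rw [rpow_sub_one ht0.ne']
        field_simp
    _ = a * (κ * c * t ^ p - c * t ^ p) := by rw [← hκ]; ring
    _ ≤ a * (∫ y in Iio t, g y ∂posVolume - c * t ^ p) := by
        gcongr
        linarith
    _ ≤ t * g t := hlow

lemma ae_sq_mul_abs_le_mul_rpow (hp : 0 < p) (hpa : p < a) (hc : 0 ≤ c)
    (hA : ∀ y, 0 < y → a ≤ A y) (hg : Integrable (fun y => y * A y * ψ y) posVolume) {x₁ : ℝ}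
    (hR : ∀ᵐ x ∂posVolume, x < x₁ →
      |x ^ 2 * ψ x - ∫ y in Iio x, y * A y * ψ y ∂posVolume| ≤ c * x ^ p)
    (hend : |∫ y in Iio x₁, y * A y * ψ y ∂posVolume| ≤ a / (a - p) * c * x₁ ^ p) :
    ∀ᵐ x ∂posVolume, x < x₁ → x ^ 2 * |ψ x| ≤ (a / (a - p) + 1) * c * x ^ p := by
  set G : ℝ → ℝ := fun x => ∫ y in Iio x, y * A y * ψ y ∂posVolume
  have hside {σ : ℝ} (hσ : |σ| = 1) {x : ℝ} (hx : 0 < x) (hxx₁ : x ≤ x₁) :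
      σ * G x ≤ a / (a - p) * c * x ^ p := by
    have hσG (x : ℝ) : ∫ y in Iio x, σ * (y * A y * ψ y) ∂posVolume = σ * G x :=
      integral_const_mul _ _
    have hσabs (t : ℝ) : σ * t ≤ |t| := (le_abs_self _).trans_eq (by rw [abs_mul, hσ, one_mul])
    rw [← hσG]
    refine setIntegral_Iio_le_mul_rpow hp hpa hc (hg.const_mul σ) ?_ ?_ hx hxx₁
    · filter_upwards [hR, ae_posVolume_pos] with t hRt ht htx₁ hlow
      rw [hσG] at hlow ⊢
      have hψ : σ * G t - c * t ^ p ≤ σ * (t ^ 2 * ψ t) := by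
        have h1 := hσabs (-(t ^ 2 * ψ t - G t))
        rw [abs_neg] at h1
        linarith [hRt htx₁]
      calc a * (σ * G t - c * t ^ p) ≤ A t * (σ * (t ^ 2 * ψ t)) :=
            mul_le_mul (hA t ht) hψ (sub_nonneg.2 hlow) (by linarith [hA t ht])
        _ = t * (σ * (t * A t * ψ t)) := by ring
    · rw [hσG]
      exact (hσabs _).trans hend
  filter_upwards [hR, ae_posVolume_pos] with x hRx hx hxx₁
  have hup := hside (σ := 1) (by norm_num) hx hxx₁.le
  have hlow := hside (σ := -1) (by norm_num) hx hxx₁.le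
  rw [← abs_of_nonneg (sq_nonneg x), ← abs_mul, abs_le]
  have hRx' := abs_le.1 (hRx hxx₁)
  constructor <;> linarith

end Gronwall

section ExponentialWeights

variable {a b δ : ℝ} {ψ : ℝ → ℝ}

lemma MemX.mul_of_abs_le_one (hψ : MemX a b ψ) {f : ℝ → ℝ} (hf : Measurable f)
    (hf1 : ∀ x, 0 < x → |f x| ≤ 1) : MemX a b fun x => f x * ψ x := by
  refine (hψ.bdd_mul (c := 1) hf.aestronglyMeasurable ?_).congr
    (ae_of_all _ fun x => (mul_assoc _ _ _).symm)
  filter_upwards [ae_posVolume_pos] with x hx using hf1 x hx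

lemma one_sub_exp_neg_pos (hδ : 0 < δ) : 0 < 1 - exp (-δ) :=
  sub_pos.2 (exp_lt_one_iff.2 (neg_neg_of_pos hδ))

lemma setIntegral_abs_mul_weight_le_Xnorm_div (hψ : MemX a b ψ) (hδ : 0 < δ) {s : Set ℝ}
    (hs : MeasurableSet s) (hsδ : s ⊆ Ici δ) :
    ∫ x in s, |ψ x| * weight a b x ∂posVolume ≤
      Xnorm a b (fun x => (1 - exp (-x)) * ψ x) / (1 - exp (-δ)) := by
  have hfar : MemX a b fun x => (1 - exp (-x)) * ψ x :=
    hψ.mul_of_abs_le_one (by fun_prop) fun x hx => by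
      rw [abs_of_pos (one_sub_exp_neg_pos hx)]
      linarith [exp_pos (-x)]
  rw [le_div_iff₀ (one_sub_exp_neg_pos hδ), mul_comm, ← integral_const_mul]
  calc ∫ x in s, (1 - exp (-δ)) * (|ψ x| * weight a b x) ∂posVolume
      ≤ ∫ x in s, |(1 - exp (-x)) * ψ x| * weight a b x ∂posVolume := by
        refine setIntegral_mono_on (hψ.integrable.const_mul _).integrableOn
          hfar.integrable.integrableOn hs fun x hx => ?_
        have hδx : δ ≤ x := hsδ hx
        have hw := weight_nonneg a b (hδ.trans_le hδx)
        rw [abs_mul, abs_of_pos (one_sub_exp_neg_pos (hδ.trans_le hδx)), mul_assoc]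
        gcongr
    _ ≤ ∫ x, |(1 - exp (-x)) * ψ x| * weight a b x ∂posVolume := by
        refine setIntegral_le_integral hfar.integrable ?_
        filter_upwards [ae_posVolume_pos] with x hx
          using mul_nonneg (abs_nonneg _) (weight_nonneg a b hx)

lemma Xnorm_exp_neg_mul_le (hψ : MemX a b ψ) (hδ : 0 < δ) :
    Xnorm a b (fun x => exp (-x) * ψ x) ≤
      ∫ x in Iio δ, |ψ x| * weight a b x ∂posVolume +
        Xnorm a b (fun x => (1 - exp (-x)) * ψ x) / (1 - exp (-δ)) := by
  calc Xnorm a b (fun x => exp (-x) * ψ x)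
      ≤ ∫ x, |ψ x| * weight a b x ∂posVolume := by
        refine integral_mono_of_nonneg ?_ hψ.integrable ?_ <;>
          filter_upwards [ae_posVolume_pos] with x hx
        · exact mul_nonneg (abs_nonneg _) (weight_nonneg a b hx)
        · rw [abs_mul, abs_of_pos (exp_pos _)]
          have hw := weight_nonneg a b hx
          gcongr
          exact mul_le_of_le_one_left (abs_nonneg _) (exp_le_one_iff.2 (by linarith))
    _ = ∫ x in Iio δ, |ψ x| * weight a b x ∂posVolume +
          ∫ x in (Iio δ)ᶜ, |ψ x| * weight a b x ∂posVolume :=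
        (integral_add_compl measurableSet_Iio hψ.integrable).symm
    _ ≤ _ := by
        gcongr
        exact setIntegral_abs_mul_weight_le_Xnorm_div hψ hδ measurableSet_Iio.compl
          (compl_Iio (a := δ)).subset

lemma exists_mem_Ioo_abs_le {P : ℝ → Prop} (hψ : Integrable ψ posVolume) (hδ : 0 < δ)
    (hP : ∀ᵐ x ∂posVolume, P x) :
    ∃ x ∈ Ioo δ (2 * δ), P x ∧ |ψ x| ≤ (∫ y in Ioo δ (2 * δ), |ψ y| ∂posVolume) / δ := by
  have hvol : posVolume (Ioo δ (2 * δ)) = ENNReal.ofReal δ := by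
    rw [Measure.restrict_apply measurableSet_Ioo,
      inter_eq_left.2 fun x hx => mem_Ioi.2 (hδ.trans hx.1), Real.volume_Ioo]
    ring_nf
  have hpos := measure_le_setAverage_pos (by rw [hvol]; exact (ENNReal.ofReal_pos.2 hδ).ne')
    (by rw [hvol]; exact ENNReal.ofReal_ne_top) hψ.abs.integrableOn
  have hreal : posVolume.real (Ioo δ (2 * δ)) = δ := by
    rw [Measure.real, hvol, ENNReal.toReal_ofReal hδ.le]
  obtain ⟨x, ⟨hx, hle⟩, hPx⟩ := ((frequently_ae_iff.2 hpos.ne').and_eventually hP).exists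
  rw [setAverage_eq, hreal, smul_eq_mul, inv_mul_eq_div] at hle
  exact ⟨x, hx, hPx, hle⟩

lemma exists_mem_Ioo_sq_mul_abs_le {P : ℝ → Prop} (hψ : Integrable ψ posVolume) (hδ : 0 < δ)
    {p : ℝ} (hp : 0 ≤ p) (hP : ∀ᵐ x ∂posVolume, P x) :
    ∃ x ∈ Ioo δ (2 * δ), P x ∧
      x ^ 2 * |ψ x| ≤ 4 * δ ^ (1 - p) * (∫ y in Ioo δ (2 * δ), |ψ y| ∂posVolume) * x ^ p := by
  obtain ⟨x, ⟨hδx, hxδ⟩, hPx, hψx⟩ := exists_mem_Ioo_abs_le hψ hδ hP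
  have : 0 ≤ ∫ y in Ioo δ (2 * δ), |ψ y| ∂posVolume := integral_nonneg fun _ => abs_nonneg _
  refine ⟨x, ⟨hδx, hxδ⟩, hPx, ?_⟩
  have hx : 0 < x := hδ.trans hδx
  calc x ^ 2 * |ψ x| ≤ (2 * δ) ^ 2 * ((∫ y in Ioo δ (2 * δ), |ψ y| ∂posVolume) / δ) := by gcongr
    _ = 4 * δ ^ (1 - p) * (∫ y in Ioo δ (2 * δ), |ψ y| ∂posVolume) * δ ^ p := by
      rw [rpow_sub hδ, rpow_one]
      field_simp
      ring
    _ ≤ _ := by gcongr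

lemma setIntegral_abs_le_Xnorm_div {α β : ℝ} (hα : 0 ≤ α) (hβ : 0 ≤ β)
    (hψ : Integrable ψ posVolume) (hψX : MemX (-α) β ψ) (hδ : 0 < δ) {s : Set ℝ}
    (hs : MeasurableSet s) (hsδ : s ⊆ Ici δ) :
    ∫ x in s, |ψ x| ∂posVolume ≤
      Xnorm (-α) β (fun x => (1 - exp (-x)) * ψ x) / (1 - exp (-δ)) := by
  refine le_trans ?_ (setIntegral_abs_mul_weight_le_Xnorm_div hψX hδ hs hsδ)
  refine setIntegral_mono_on hψ.abs.integrableOn hψX.integrable.integrableOn hs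
    fun x hx => le_mul_of_one_le_right (abs_nonneg _) ?_
  simpa only [rpow_zero] using
    rpow_le_weight (hδ.trans_le (hsδ hx)) (a := -α) (b := β) (r := 0) ⟨by linarith, hβ⟩

lemma setIntegral_Iio_abs_mul_weight_le {α M p : ℝ} (hδ : 0 < δ) (hδ1 : δ ≤ 1)
    (hp : 1 + α < p)
    (hle : ∀ᵐ x ∂posVolume, x < δ → x ^ 2 * |ψ x| ≤ M * x ^ p) :
    ∫ x in Iio δ, |ψ x| * weight (-α) b x ∂posVolume ≤
      M * (δ ^ (p - 1 - α) / (p - 1 - α)) := by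
  have hq : -1 < p - 2 - α := by linarith
  have hIio : posVolume.restrict (Iio δ) = volume.restrict (Ioc 0 δ) := by
    rw [Measure.restrict_restrict measurableSet_Iio, inter_comm, Ioi_inter_Iio,
      restrict_Ioo_eq_restrict_Ioc]
  have hint : IntegrableOn (fun x => x ^ (p - 2 - α)) (Iio δ) posVolume := by
    rw [IntegrableOn, hIio]
    exact (intervalIntegrable_iff_integrableOn_Ioc_of_le hδ.le).1
      (intervalIntegral.intervalIntegrable_rpow' hq)
  have hpow : ∫ x in Iio δ, x ^ (p - 2 - α) ∂posVolume = δ ^ (p - 1 - α) / (p - 1 - α) := by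
    rw [hIio, ← intervalIntegral.integral_of_le hδ.le, integral_rpow (Or.inl hq),
      show p - 2 - α + 1 = p - 1 - α by ring, zero_rpow (by linarith), sub_zero]
  rw [← hpow, ← integral_const_mul]
  refine integral_mono_of_nonneg ?_ (hint.const_mul M) ?_
  · filter_upwards [ae_restrict_of_ae ae_posVolume_pos] with x hx
      using mul_nonneg (abs_nonneg _) (weight_nonneg _ _ hx)
  · filter_upwards [ae_restrict_of_ae hle, ae_restrict_of_ae ae_posVolume_pos,
      ae_restrict_mem measurableSet_Iio] with x hlex hx hxδ
    have hψ : |ψ x| ≤ M * x ^ p / x ^ 2 := by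
      rw [le_div_iff₀ (by positivity), mul_comm]
      exact hlex hxδ
    have hw : weight (-α) b x = x ^ (-α) := if_pos (hxδ.le.trans hδ1)
    calc |ψ x| * weight (-α) b x ≤ M * x ^ p / x ^ 2 * x ^ (-α) := by rw [hw]; gcongr
      _ = M * x ^ (p - 2 - α) := by
        rw [rpow_sub hx, rpow_sub hx, rpow_neg hx.le, rpow_two]
        ring

lemma ae_sq_mul_abs_le_of_memX {α β p c a : ℝ} {A : ℝ → ℝ} (hα : 0 ≤ α) (hβ : 0 ≤ β) (hp : 0 < p)
    (hpa : p < a) (hc : 0 ≤ c) (hψ : Integrable ψ posVolume) (hψX : MemX (-α) β ψ)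
    (hA : ∀ y, 0 < y → a ≤ A y) (hg : Integrable (fun y => y * A y * ψ y) posVolume) (hδ : 0 < δ)
    (hR : ∀ᵐ x ∂posVolume, x ≤ 2 * δ →
      |x ^ 2 * ψ x - ∫ y in Iio x, y * A y * ψ y ∂posVolume| ≤ c * x ^ p) :
    ∀ᵐ x ∂posVolume, x < δ →
      x ^ 2 * |ψ x| ≤ (a / (a - p) + 1) * (c + 4 * δ ^ (1 - p) *
        (Xnorm (-α) β (fun x => (1 - exp (-x)) * ψ x) / (1 - exp (-δ)))) * x ^ p := by
  set B := Xnorm (-α) β (fun x => (1 - exp (-x)) * ψ x) / (1 - exp (-δ))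
  have hB : 0 ≤ B := div_nonneg (Xnorm_nonneg _ _ _) (one_sub_exp_neg_pos hδ).le
  obtain ⟨x₁, ⟨hδx₁, hx₁δ⟩, hRx₁, hψx₁⟩ := exists_mem_Ioo_sq_mul_abs_le hψ hδ hp.le hR
  have hx₁ : 0 < x₁ := hδ.trans hδx₁
  have hx₁ψ : x₁ ^ 2 * |ψ x₁| ≤ 4 * δ ^ (1 - p) * B * x₁ ^ p := by
    refine hψx₁.trans ?_
    gcongr
    exact setIntegral_abs_le_Xnorm_div hα hβ hψ hψX hδ measurableSet_Ioo fun x hx => hx.1.le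
  have hκ : 1 ≤ a / (a - p) := (one_le_div (sub_pos.2 hpa)).2 (by linarith)
  have hgron := ae_sq_mul_abs_le_mul_rpow (c := c + 4 * δ ^ (1 - p) * B) (x₁ := x₁) hp hpa
    (by positivity) hA hg ?_ ?_
  · exact hgron.mono fun x hx hxδ => hx (hxδ.trans hδx₁)
  · filter_upwards [hR, ae_posVolume_pos] with x hRx hx hxx₁
    refine (hRx (hxx₁.trans hx₁δ).le).trans ?_
    gcongr
    exact le_add_of_nonneg_right (by positivity)
  · calc |∫ y in Iio x₁, y * A y * ψ y ∂posVolume|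
        ≤ x₁ ^ 2 * |ψ x₁| + c * x₁ ^ p := by
          have hRx₁' := hRx₁ hx₁δ.le
          rw [abs_sub_comm] at hRx₁'
          have := abs_sub_abs_le_abs_sub (∫ y in Iio x₁, y * A y * ψ y ∂posVolume) (x₁ ^ 2 * ψ x₁)
          rw [abs_mul, abs_of_nonneg (sq_nonneg x₁)] at this
          linarith
      _ ≤ (c + 4 * δ ^ (1 - p) * B) * x₁ ^ p := by linarith
      _ ≤ a / (a - p) * (c + 4 * δ ^ (1 - p) * B) * x₁ ^ p := by
          gcongr
          exact le_mul_of_one_le_left (by positivity) hκ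

lemma exists_mem_Ioo_mul_rpow_div_le {c q r μ : ℝ} (hq : 0 < q) (hr : 0 < r) (hμ : 0 < μ) :
    ∃ δ ∈ Ioo 0 r, c * (δ ^ q / q) ≤ μ := by
  have hlim : Tendsto (fun δ : ℝ => c * (δ ^ q / q)) (𝓝[>] 0) (𝓝 (c * (0 ^ q / q))) :=
    (((continuousAt_rpow_const 0 q (Or.inr hq.le)).tendsto.mono_left
      nhdsWithin_le_nhds).div_const q).const_mul _
  rw [zero_rpow hq.ne', zero_div, mul_zero] at hlim
  obtain ⟨δ, hδμ, hδ⟩ := ((hlim.eventually_le_const hμ).and (Ioo_mem_nhdsGT hr)).exists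
  exact ⟨δ, hδ, hδμ⟩

lemma exists_Xnorm_exp_neg_mul_le {α β p a C x₀ : ℝ} (hα : 0 ≤ α) (hβ : 0 ≤ β) (hp : 1 + α < p)
    (hpa : p < a) (hC : 0 ≤ C) (hx₀ : 0 < x₀) {μ : ℝ} (hμ : 0 < μ) :
    ∃ Cμ > 0, ∀ ψ A : ℝ → ℝ, Integrable ψ posVolume → MemX (-α) β ψ → (∀ y, 0 < y → a ≤ A y) →
      Integrable (fun y => y * A y * ψ y) posVolume →
      (∀ᵐ x ∂posVolume, x ≤ x₀ → |x ^ 2 * ψ x - ∫ y in Iio x, y * A y * ψ y ∂posVolume| ≤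
        C * Xnorm (-α) β ψ * x ^ p) →
      Xnorm (-α) β (fun x => exp (-x) * ψ x) ≤
        μ * Xnorm (-α) β ψ + Cμ * Xnorm (-α) β (fun x => (1 - exp (-x)) * ψ x) := by
  set κ := a / (a - p) + 1
  set q := p - 1 - α
  have hq : 0 < q := by simp only [q]; linarith
  have hκ : 0 < κ := by
    have : 0 < a - p := sub_pos.2 hpa
    have : 0 < a := by linarith
    positivity
  obtain ⟨δ, ⟨hδ, hδmin⟩, hδμ⟩ :=
    exists_mem_Ioo_mul_rpow_div_le (c := κ * C) hq (lt_min one_pos (half_pos hx₀)) hμ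
  have hδ1 : δ ≤ 1 := hδmin.le.trans (min_le_left _ _)
  have hδx₀ : 2 * δ ≤ x₀ := by linarith [min_le_right 1 (x₀ / 2)]
  have hexp := one_sub_exp_neg_pos hδ
  refine ⟨κ * (4 * δ ^ (1 - p)) * (δ ^ q / q) / (1 - exp (-δ)) + 1 / (1 - exp (-δ)),
    by positivity, fun ψ A hψ hψX hA hg hR => ?_⟩
  set N := Xnorm (-α) β ψ
  set B := Xnorm (-α) β (fun x => (1 - exp (-x)) * ψ x)
  have hN : 0 ≤ N := Xnorm_nonneg _ _ _
  have hnear := ae_sq_mul_abs_le_of_memX hα hβ (by linarith) hpa (mul_nonneg hC hN) hψ hψX hA hg hδ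
    (hR.mono fun x hx hxδ => hx (hxδ.trans hδx₀))
  calc Xnorm (-α) β (fun x => exp (-x) * ψ x)
      ≤ ∫ x in Iio δ, |ψ x| * weight (-α) β x ∂posVolume + B / (1 - exp (-δ)) :=
        Xnorm_exp_neg_mul_le hψX hδ
    _ ≤ κ * (C * N + 4 * δ ^ (1 - p) * (B / (1 - exp (-δ)))) * (δ ^ q / q) +
          B / (1 - exp (-δ)) := by
        gcongr
        exact setIntegral_Iio_abs_mul_weight_le hδ hδ1 hp hnear
    _ = κ * C * (δ ^ q / q) * N + (κ * (4 * δ ^ (1 - p)) * (δ ^ q / q) / (1 - exp (-δ)) +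
          1 / (1 - exp (-δ))) * B := by ring
    _ ≤ _ := by gcongr

end ExponentialWeights

section Comparison

variable {α β c μ : ℝ}

lemma IsRegularProfile.exists_Xnorm_exp_neg_mul_sub_le (hα : α ∈ Ioo (0 : ℝ) 1)
    (hβ : β ∈ Icc α 2) (hc : 0 < c) (hμ : 0 < μ) :
    ∃ Cμ > 0, ∃ ε₀ > 0, ∀ ε K φ₁ φ₂, ε < ε₀ → IsNearConstant α ε K →
      (1 / 2 ≤ α → ∀ y z, 0 < y → 0 < z → ε * c * (z / y) ^ α ≤ K y z) →
      IsRegularProfile K φ₁ → IsRegularProfile K φ₂ →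
      Xnorm (-α) β (fun x => exp (-x) * (φ₁ x - φ₂ x)) ≤
        μ * Xnorm (-α) β (fun x => φ₁ x - φ₂ x) +
          Cμ * Xnorm (-α) β (fun x => (1 - exp (-x)) * (φ₁ x - φ₂ x)) := by
  have hα' : α ∈ Ico (0 : ℝ) 1 := Ioo_subset_Ico_self hα
  obtain ⟨θ, p, C, x₀, hαp, hpα, hpθ, hC, ⟨hx₀, hx₀1⟩, ε₀, ⟨hε₀, hε₀1⟩, htame⟩ :=
    exists_isTameAtZero hα hc
  obtain ⟨Cμ, hCμ, hle⟩ := exists_Xnorm_exp_neg_mul_le (β := β) (C := 8 * C) hα'.1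
    (hα'.1.trans hβ.1) hαp hpθ (by positivity) hx₀ hμ
  refine ⟨Cμ, hCμ, ε₀, hε₀, fun ε K φ₁ φ₂ hε hK hlow h₁ h₂ => ?_⟩
  obtain ⟨hθ, ht₁⟩ := htame ε K _ inferInstance hε hK hlow h₁.isWeakProfile
  have ht₂ := (htame ε K _ inferInstance hε hK hlow h₂.isWeakProfile).2
  have hm₁ := h₁.hasMoments hK hα' ht₁
  have hmψ := hm₁.sub (h₂.hasMoments hK hα' ht₂)
  have hψ : Integrable (fun x => φ₁ x - φ₂ x) posVolume := by
    simpa only [rpow_zero, one_mul] using hmψ 0 ⟨neg_nonpos.2 hα'.1, zero_le_two⟩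
  exact hle _ (collisionRate K φ₁) hψ (hmψ.memX ⟨by linarith [hα.1, hβ.1], hβ.2⟩)
    (fun y => hK.le_collisionRate (Ioo_subset_Icc_self hα) h₁.nonneg hm₁ hθ)
    (integrable_mul_collisionRate_mul
      (integrable_coagDensity hK (Ioo_subset_Icc_self hα) hmψ hm₁))
    (h₁.abs_sq_mul_sub_sub_integral_le h₂ hK hα' hβ (hε.le.trans hε₀1) hpα hC.le hx₀1 ht₁ ht₂)

lemma Xnorm_mul_sub_congr_ae {a b : ℝ} {φ₁ φ₂ f₁ f₂ : ℝ → ℝ} (h₁ : f₁ =ᵐ[posVolume] φ₁)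
    (h₂ : f₂ =ᵐ[posVolume] φ₂) (g : ℝ → ℝ) :
    Xnorm a b (fun x => g x * (f₁ x - f₂ x)) = Xnorm a b (fun x => g x * (φ₁ x - φ₂ x)) := by
  refine integral_congr_ae ?_
  filter_upwards [h₁, h₂] with x hx₁ hx₂
  rw [hx₁, hx₂]

lemma IsProfile.exists_Xnorm_exp_neg_mul_sub_le (hα : α ∈ Ioo (0 : ℝ) 1)
    (hβ : β ∈ Icc α 2) (hc : 0 < c) (hμ : 0 < μ) :
    ∃ Cμ > 0, ∃ ε₀ > 0, ∀ ε K φ₁ φ₂, ε < ε₀ → IsNearConstant α ε K →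
      (1 / 2 ≤ α → ∀ y z, 0 < y → 0 < z → ε * c * (z / y) ^ α ≤ K y z) →
      IsProfile K φ₁ → IsNormalised φ₁ → IsProfile K φ₂ → IsNormalised φ₂ →
      Xnorm (-α) β (fun x => exp (-x) * (φ₁ x - φ₂ x)) ≤
        μ * Xnorm (-α) β (fun x => φ₁ x - φ₂ x) +
          Cμ * Xnorm (-α) β (fun x => (1 - exp (-x)) * (φ₁ x - φ₂ x)) := by
  obtain ⟨Cμ, hCμ, ε₀, hε₀, hle⟩ :=
    IsRegularProfile.exists_Xnorm_exp_neg_mul_sub_le hα hβ hc hμ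
  refine ⟨Cμ, hCμ, ε₀, hε₀, fun ε K φ₁ φ₂ hε hK hlow h₁ hnorm₁ h₂ hnorm₂ => ?_⟩
  obtain ⟨f₁, hf₁, hfφ₁⟩ := exists_isRegularProfile hK (Ioo_subset_Icc_self hα) h₁ hnorm₁
  obtain ⟨f₂, hf₂, hfφ₂⟩ := exists_isRegularProfile hK (Ioo_subset_Icc_self hα) h₂ hnorm₂
  have hcongr := Xnorm_mul_sub_congr_ae (a := -α) (b := β) hfφ₁ hfφ₂
  have hone := hcongr fun _ => 1
  simp only [one_mul] at hone
  rw [← hcongr, ← hcongr, ← hone]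
  exact hle ε K f₁ f₂ hε hK hlow hf₁ hf₂

end Comparison

section ZeroExtension

variable {α ε : ℝ} {W : ℝ → ℝ → ℝ}

/-- The function of two variables that agrees with `W` on `(0, ∞)²` and vanishes elsewhere; only
the values on `(0, ∞)²` matter for profiles. -/
noncomputable def zeroExtension (W : ℝ → ℝ → ℝ) (x y : ℝ) : ℝ :=
  (Ioi 0 ×ˢ Ioi 0).indicator (fun p : ℝ × ℝ => W p.1 p.2) (x, y)

lemma zeroExtension_of_pos {x y : ℝ} (hx : 0 < x) (hy : 0 < y) : zeroExtension W x y = W x y :=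
  indicator_of_mem (mk_mem_prod hx hy) _

lemma zeroExtension_of_not_pos {x y : ℝ} (h : ¬(0 < x ∧ 0 < y)) : zeroExtension W x y = 0 :=
  indicator_of_notMem (s := Ioi 0 ×ˢ Ioi 0) h _

lemma measurable_zeroExtension_of_continuousOn
    (hW : ContinuousOn (fun p : ℝ × ℝ => W p.1 p.2) (Ioi 0 ×ˢ Ioi 0)) :
    Measurable fun p : ℝ × ℝ => zeroExtension W p.1 p.2 := by
  classical
  change Measurable ((Ioi 0 ×ˢ Ioi 0).indicator fun p : ℝ × ℝ => W p.1 p.2)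
  rw [← piecewise_eq_indicator]
  exact hW.measurable_piecewise continuousOn_const (measurableSet_Ioi.prod measurableSet_Ioi)

lemma isNearConstant_Kern_zeroExtension (hε : 0 ≤ ε)
    (hWm : Measurable fun p : ℝ × ℝ => zeroExtension W p.1 p.2)
    (hWsymm : ∀ x y, 0 < x → 0 < y → W x y = W y x)
    (hW : ∀ x y, 0 < x → 0 < y → 0 ≤ W x y ∧ W x y ≤ (x / y) ^ α + (y / x) ^ α) :
    IsNearConstant α ε (Kern ε (zeroExtension W)) where
  measurable := (hWm.const_mul ε).const_add 2
  symm x y := by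
    unfold Kern
    by_cases h : 0 < x ∧ 0 < y
    · rw [zeroExtension_of_pos h.1 h.2, zeroExtension_of_pos h.2 h.1, hWsymm x y h.1 h.2]
    · rw [zeroExtension_of_not_pos h, zeroExtension_of_not_pos (mt And.symm h)]
  two_le x y := by
    refine le_add_of_nonneg_right (mul_nonneg hε ?_)
    exact indicator_nonneg (fun p hp => (hW p.1 p.2 hp.1 hp.2).1) _
  le x y hx hy := by
    rw [Kern, zeroExtension_of_pos hx hy]
    gcongr
    exact (hW x y hx hy).2

end ZeroExtension

theorem stmt13_general (α β : ℝ) (hα : α ∈ Ioo (0 : ℝ) 1) (hβ : β ∈ Icc α 2) (W : ℝ → ℝ → ℝ)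
    (hWm : Measurable fun p : ℝ × ℝ => zeroExtension W p.1 p.2)
    (hWsymm : ∀ x y, 0 < x → 0 < y → W x y = W y x)
    (hW : ∀ x y, 0 < x → 0 < y → 0 ≤ W x y ∧ W x y ≤ (x / y) ^ α + (y / x) ^ α)
    (hlow : 1 / 2 ≤ α → ∃ cstar > (0 : ℝ), ∀ x y, 0 < x → 0 < y →
      cstar * ((x / y) ^ α + (y / x) ^ α) ≤ W x y)
    (μ : ℝ) (hμ : 0 < μ) :
    ∃ Cμ > (0 : ℝ), ∃ εstar > (0 : ℝ), ∀ ε : ℝ, 0 < ε → ε < εstar →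
      ∀ φ₁ φ₂ : ℝ → ℝ, IsProfile (Kern ε W) φ₁ → IsNormalised φ₁ →
        IsProfile (Kern ε W) φ₂ → IsNormalised φ₂ →
        Xnorm (-α) β (fun x => exp (-x) * (φ₁ x - φ₂ x)) ≤
          μ * Xnorm (-α) β (fun x => φ₁ x - φ₂ x) +
          Cμ * Xnorm (-α) β (fun x => (1 - exp (-x)) * (φ₁ x - φ₂ x)) := by
  obtain ⟨c, hc, hcW⟩ : ∃ c > 0, 1 / 2 ≤ α → ∀ y z, 0 < y → 0 < z → c * (z / y) ^ α ≤ W y z := by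
    by_cases h : 1 / 2 ≤ α
    · obtain ⟨c, hc, hcW⟩ := hlow h
      refine ⟨c, hc, fun _ y z hy hz => le_trans ?_ (hcW y z hy hz)⟩
      gcongr
      exact le_add_of_nonneg_left (by positivity)
    · exact ⟨1, one_pos, fun h' => absurd h' h⟩
  obtain ⟨Cμ, hCμ, ε₀, hε₀, hle⟩ := IsProfile.exists_Xnorm_exp_neg_mul_sub_le hα hβ hc hμ
  refine ⟨Cμ, hCμ, ε₀, hε₀, fun ε hε hεε₀ φ₁ φ₂ h₁ hnorm₁ h₂ hnorm₂ => ?_⟩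
  have hKern (x y : ℝ) (hx : 0 < x) (hy : 0 < y) :
      Kern ε W x y = Kern ε (zeroExtension W) x y := by
    rw [Kern, Kern, zeroExtension_of_pos hx hy]
  refine hle ε _ φ₁ φ₂ hεε₀ (isNearConstant_Kern_zeroExtension hε.le hWm hWsymm hW)
    (fun h y z hy hz => ?_) (h₁.congr_kernel hKern) hnorm₁ (h₂.congr_kernel hKern) hnorm₂
  have hcWyz := mul_le_mul_of_nonneg_left (hcW h y z hy hz) hε.le
  rw [← hKern y z hy hz, Kern]
  linarith

theorem stmt13 (α β : ℝ) (hα : α ∈ Ioo (0:ℝ) 1) (hβ : β ∈ Ioo (1 + α) 2)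
    (W : ℝ → ℝ → ℝ) (hW : GoodW α W)
    (hlow : 1/2 ≤ α → ∃ cstar > (0:ℝ), ∀ x y : ℝ, 0 < x → 0 < y →
      cstar * ((x / y) ^ α + (y / x) ^ α) ≤ W x y)
    (μ : ℝ) (hμ : 0 < μ) :
    ∃ Cμ > (0:ℝ), ∃ εstar > (0:ℝ), ∀ ε : ℝ, 0 < ε → ε < εstar →
      ∀ φ₁ φ₂ : ℝ → ℝ, IsProfile (Kern ε W) φ₁ → IsNormalised φ₁ →
        IsProfile (Kern ε W) φ₂ → IsNormalised φ₂ →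
        Xnorm (-α) β (fun x => exp (-x) * (φ₁ x - φ₂ x)) ≤
          μ * Xnorm (-α) β (fun x => φ₁ x - φ₂ x) +
          Cμ * Xnorm (-α) β (fun x => (1 - exp (-x)) * (φ₁ x - φ₂ x)) := by
  exact stmt13_general α β hα ⟨by linarith [hβ.1], hβ.2.le⟩ W
    (measurable_zeroExtension_of_continuousOn hW.1) hW.2.1 hW.2.2.2 hlow μ hμ
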